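/- Let n ≥ 2, let Ω₁ ⊂ ℝⁿ be a nonempty bounded open set and let Ω₂ ⊂ ℝⁿ be a nonempty bounded open convex set, with closure(Ω₁) ∩ closure(Ω₂) = ∅. Then there exist constants σ > 0 and C > 1 (depending only on Ω₁ and Ω₂) such that for every ε > 0 and every differentiable h : ℝⁿ → ℝ with gradient ∇h satisfying ∫_{Ω₂} h(x)² dx < ∞ and ∫_{Ω₂} |∇h(x)|² dx < ∞, there exist measurable f₁, …, f_n : ℝⁿ → ℝ with ∫_{Ω₁} f_j(y)² dy < ∞ for all j, such that ( ∫_{Ω₂} ( h(x) − Σ_{j=1}^{n} (R_j^{Ω₁} f_j)(x) )² dx )^{1/2} ≤ ε and ( Σ_{j=1}^{n} ∫_{Ω₁} f_j(y)² dy )^{1/2} ≤ exp( C · (1 + ‖h‖_{H¹(Ω₂)}^{σ} / ε^{σ}) ) · ‖h‖_{L²(Ω₂)}. -/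

import Mathlib

/-!
The densities produced here are bounded functions supported in a small ball `B(y₀, 2 ρ)` of `Ω₁`.
The argument builds a chain of functions on `Ω₂` that are uniformly within a small error of sums of
truncated Riesz transforms, keeping track of the sup norm of the densities, called the cost.

* Averaging over a tiny ball around `y` reproduces the kernel `(x_j - y_j) / |x - y| ^ (n + 1)`
  (`Rz_kernel`).
* The divergence of this kernel in `y` is a multiple of `|x - y| ^ (-(n + 1))`, and
  `Δ |x - y| ^ (-μ) = μ (μ + 2 - n) |x - y| ^ (-μ - 2)`. Replacing derivatives in `y` by
  interpolation formulas of high order yields all powers `|x - y| ^ (-(n + 1 + 2 j))`, `j ≤ J`, with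
  error `exp (-Γ J)` and cost `exp (C J ^ 4)` (`Rz_W`).
* In the variable `u = 1 - ρ² / |x - y|²`, which ranges over a compact part of `[0, 1)`, the
  function `(1 - κ |x - y|²) ^ N` is `(ρ / |x - y|) ^ (n + 1)` times a geometrically convergent
  power series. Truncating the series expresses it through the previous powers (`Rz_near`).
* For fixed `x` this function is a polynomial of degree `2 N` in the position of `y` on a line, so
  exact polynomial extrapolation moves the centre from the neighbourhood of `y₀` to an arbitrary
  point, with error `exp (-m)` and cost `exp (C m ^ 8)` for `N ≤ m` (`Rz_far`).
* Superposition gives the functions `x ↦ ∫ h(w) (1 - κ |x - w|²) ^ N dw` (`Rz_integral`).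
* Convexity of `Ω₂` makes these useful: with `x_l = (1 - l) x + l x₀`, the ball `B(x_l, l r)` lies
  in `Ω₂`, and convolving `h` with the Landau kernel `c (1 - |z|² / R²) ^ N`, `N ≈ l ^ (-3)`,
  evaluated at `x_l`, approximates `h` in `L²(Ω₂)` with error `O(l) ‖h‖_{H¹}` (`mollify`). The
  contraction is absorbed into the centre and the scale of the kernel (`kernel_Rz`).

Choosing `l ≈ ε / ‖h‖_{H¹}` gives `m ≈ N ≈ (‖h‖_{H¹} / ε) ^ 3` and cost
`exp (C (‖h‖_{H¹} / ε) ^ 24)`, while `f = 0` suffices when `‖h‖_{L²} ≤ ε`.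
-/

open MeasureTheory Set

/-- Unnormalized `j`-th truncated Riesz transform:
`(R_j^Ω f)(x) = ∫_Ω f(y) (x_j - y_j)/|x - y|^{n+1} dy`. -/
noncomputable def truncRiesz (n : ℕ) (Ω : Set (EuclideanSpace ℝ (Fin n))) (j : Fin n)
    (f : EuclideanSpace ℝ (Fin n) → ℝ) (x : EuclideanSpace ℝ (Fin n)) : ℝ :=
  ∫ y in Ω, f y * (x j - y j) / ‖x - y‖ ^ (n + 1)

/-! ### Polynomial interpolation and Taylor remainders -/

lemma coeff_prod_X_sub_C_le (s : Finset ℕ) (l : ℕ) :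
    |(∏ k ∈ s, (Polynomial.X - Polynomial.C (k : ℝ))).coeff l| ≤ ∏ k ∈ s, (1 + (k : ℝ)) := by
  classical
  induction s using Finset.induction_on generalizing l with
  | empty =>
    simp only [Finset.prod_empty, Polynomial.coeff_one]
    split_ifs <;> simp
  | insert a s ha ih =>
    rw [Finset.prod_insert ha, Finset.prod_insert ha, sub_mul, Polynomial.coeff_sub,
      Polynomial.coeff_C_mul]
    have h1 : |(Polynomial.X * ∏ k ∈ s, (Polynomial.X - Polynomial.C (k : ℝ))).coeff l|
        ≤ ∏ k ∈ s, (1 + (k : ℝ)) := by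
      cases l with
      | zero => simp; exact Finset.prod_nonneg fun i _ => by positivity
      | succ l => rw [Polynomial.coeff_X_mul]; exact ih l
    have h2 := ih l
    calc _ ≤ _ := abs_sub _ _
      _ ≤ (∏ k ∈ s, (1 + (k : ℝ))) + a * ∏ k ∈ s, (1 + (k : ℝ)) := by
        rw [abs_mul, Nat.abs_cast]; gcongr
      _ = _ := by ring

/-- A linear functional on polynomials of degree at most `M` is a weighted sum of the values at
`0, …, M` (Lagrange interpolation). The number `b` bounds the functional on the unnormalised
Lagrange basis products; the normalising denominators are products of nonzero integers, hence at
least `1` in absolute value. -/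
lemma exists_weights (M : ℕ) (L : Polynomial ℝ →ₗ[ℝ] ℝ) (b : ℝ)
    (hb : ∀ i ∈ Finset.range (M + 1),
      |L (∏ k ∈ (Finset.range (M + 1)).erase i, (Polynomial.X - Polynomial.C (k : ℝ)))| ≤ b) :
    ∃ w : ℕ → ℝ, ∑ i ∈ Finset.range (M + 1), |w i| ≤ (M + 1) * b ∧
      ∀ p : Polynomial ℝ, p.natDegree ≤ M →
        ∑ i ∈ Finset.range (M + 1), w i * p.eval (i : ℝ) = L p := by
  classical
  set s := Finset.range (M + 1) with hs
  set v : ℕ → ℝ := fun i => (i : ℝ) with hv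
  have hinj : Set.InjOn v s := fun a _ b _ h => Nat.cast_injective (R := ℝ) h
  refine ⟨fun i => L (Lagrange.basis s v i), ?_, ?_⟩
  · have : ∀ i ∈ s, |L (Lagrange.basis s v i)| ≤ b := by
      intro i hi
      have e : Lagrange.basis s v i = (∏ k ∈ s.erase i, ((i : ℝ) - k)⁻¹) •
          ∏ k ∈ s.erase i, (Polynomial.X - Polynomial.C (k : ℝ)) := by
        simp only [Lagrange.basis, Lagrange.basisDivisor, Finset.prod_mul_distrib, hv,
          Polynomial.smul_eq_C_mul]
        rw [map_prod]
      rw [e, map_smul, smul_eq_mul, abs_mul]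
      have h1 : |∏ k ∈ s.erase i, ((i : ℝ) - k)⁻¹| ≤ 1 := by
        rw [Finset.abs_prod]
        refine Finset.prod_le_one (fun _ _ => abs_nonneg _) fun k hk => ?_
        rw [abs_inv]
        apply inv_le_one_of_one_le₀
        have hne : (i : ℤ) - k ≠ 0 := by
          have := Finset.ne_of_mem_erase hk
          omega
        have := Int.one_le_abs hne
        have h3 : ((1 : ℤ) : ℝ) ≤ ((|(i : ℤ) - k| : ℤ) : ℝ) := by exact_mod_cast this
        simpa using h3
      calc _ ≤ 1 * b := mul_le_mul h1 (hb i hi) (abs_nonneg _) (by norm_num)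
        _ = b := one_mul b
    calc _ ≤ ∑ i ∈ s, b := Finset.sum_le_sum this
      _ = _ := by simp [hs]
  · intro p hp
    have hdeg : p.degree < s.card := by
      rw [hs, Finset.card_range]
      exact lt_of_le_of_lt Polynomial.degree_le_natDegree (by exact_mod_cast Nat.lt_succ_of_le hp)
    have := Lagrange.eq_interpolate hinj hdeg
    conv_rhs => rw [this]
    simp only [Lagrange.interpolate_apply, map_sum, hv]
    refine Finset.sum_congr rfl fun i _ => ?_
    rw [← Polynomial.smul_eq_C_mul, map_smul, smul_eq_mul, mul_comm]

/-- Numerical differentiation: the `l`-th Taylor coefficient from the samples `φ (θ i)`, `i ≤ M`. An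
error `S` in the Taylor polynomial of degree `M` is amplified by at most
`(M + 1) ^ (M + 1) / θ ^ l`. -/
lemma num_diff (M l : ℕ) (hl : l ≤ M) :
    ∃ w : ℕ → ℝ, ∑ i ∈ Finset.range (M + 1), |w i| ≤ ((M : ℝ) + 1) ^ (M + 1) ∧
      ∀ (a : ℕ → ℝ) (φ : ℝ → ℝ) (θ S : ℝ), 0 < θ →
        (∀ i ∈ Finset.range (M + 1),
          |φ (θ * i) - ∑ k ∈ Finset.range (M + 1), a k * (θ * i) ^ k| ≤ S) →
        |∑ i ∈ Finset.range (M + 1), (w i / θ ^ l) * φ (θ * i) - a l| ≤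
          ((M : ℝ) + 1) ^ (M + 1) / θ ^ l * S := by
  obtain ⟨w, hw, hp⟩ := exists_weights M (Polynomial.lcoeff ℝ l) (((M : ℝ) + 1) ^ M) (by
    intro i hi
    rw [Polynomial.lcoeff_apply]
    refine (coeff_prod_X_sub_C_le _ l).trans ?_
    calc _ ≤ ∏ k ∈ (Finset.range (M + 1)).erase i, ((M : ℝ) + 1) := by
          refine Finset.prod_le_prod (fun _ _ => by positivity) fun k hk => ?_
          have := Finset.mem_range.1 (Finset.mem_of_mem_erase hk)
          have : (k : ℝ) ≤ M := by exact_mod_cast Nat.lt_succ_iff.1 this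
          linarith
      _ = _ := by simp [Finset.card_erase_of_mem hi])
  have hw' : ∑ i ∈ Finset.range (M + 1), |w i| ≤ ((M : ℝ) + 1) ^ (M + 1) := by
    rw [pow_succ']; exact hw
  refine ⟨w, hw', fun a φ θ S hθ hS => ?_⟩
  have hS0 : 0 ≤ S := (abs_nonneg _).trans (hS 0 (by simp))
  have key := hp (∑ k ∈ Finset.range (M + 1), Polynomial.C (a k * θ ^ k) * Polynomial.X ^ k) (by
    refine Polynomial.natDegree_sum_le_of_forall_le _ _ fun k hk => ?_
    exact (Polynomial.natDegree_C_mul_X_pow_le _ _).trans (Nat.lt_succ_iff.1 (Finset.mem_range.1 hk)))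
  simp only [Polynomial.lcoeff_apply, Polynomial.finsetSum_coeff, Polynomial.coeff_C_mul_X_pow,
    Polynomial.eval_finsetSum, Polynomial.eval_mul, Polynomial.eval_C, Polynomial.eval_pow,
    Polynomial.eval_X] at key
  rw [Finset.sum_ite_eq, if_pos (Finset.mem_range.2 (Nat.lt_succ_of_le hl))] at key
  have e : ∑ i ∈ Finset.range (M + 1), (w i / θ ^ l) * φ (θ * i) - a l =
      ∑ i ∈ Finset.range (M + 1), (w i / θ ^ l) *
        (φ (θ * i) - ∑ k ∈ Finset.range (M + 1), a k * (θ * i) ^ k) := by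
    have h0 : a l = ∑ i ∈ Finset.range (M + 1), (w i / θ ^ l) *
        (∑ k ∈ Finset.range (M + 1), a k * (θ * i) ^ k) := by
      have : a l = (a l * θ ^ l) / θ ^ l := by field_simp
      rw [this, ← key, Finset.sum_div]
      refine Finset.sum_congr rfl fun i _ => ?_
      rw [mul_div_right_comm]
      congr 1
      exact Finset.sum_congr rfl fun k _ => by rw [mul_pow]; ring
    rw [h0, ← Finset.sum_sub_distrib]
    exact Finset.sum_congr rfl fun i _ => by ring
  rw [e]
  calc _ ≤ ∑ i ∈ Finset.range (M + 1), |(w i / θ ^ l) *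
        (φ (θ * i) - ∑ k ∈ Finset.range (M + 1), a k * (θ * i) ^ k)| :=
        Finset.abs_sum_le_sum_abs _ _
    _ ≤ ∑ i ∈ Finset.range (M + 1), |w i| * (S / θ ^ l) := by
        refine Finset.sum_le_sum fun i hi => ?_
        rw [abs_mul, abs_div, abs_of_pos (pow_pos hθ l), div_mul_eq_mul_div, mul_div_assoc]
        gcongr
        exact hS i hi
    _ = (∑ i ∈ Finset.range (M + 1), |w i|) * (S / θ ^ l) := by rw [Finset.sum_mul]
    _ ≤ ((M : ℝ) + 1) ^ (M + 1) * (S / θ ^ l) := by gcongr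
    _ = _ := by ring

/-- The value at `T` of a polynomial of degree at most `M` from its values at `0, …, M`. -/
lemma extrapolate (M : ℕ) (T : ℝ) :
    ∃ w : ℕ → ℝ, ∑ i ∈ Finset.range (M + 1), |w i| ≤ (M + 1) * (1 + |T| + M) ^ M ∧
      ∀ p : Polynomial ℝ, p.natDegree ≤ M →
        ∑ i ∈ Finset.range (M + 1), w i * p.eval (i : ℝ) = p.eval T := by
  have := exists_weights M (Polynomial.leval T) ((1 + |T| + M) ^ M) (by
    intro i hi
    rw [Polynomial.leval_apply, Polynomial.eval_prod, Finset.abs_prod]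
    calc _ ≤ ∏ k ∈ (Finset.range (M + 1)).erase i, (1 + |T| + M) := by
          refine Finset.prod_le_prod (fun _ _ => abs_nonneg _) fun k hk => ?_
          have := Finset.mem_range.1 (Finset.mem_of_mem_erase hk)
          have h2 : (k : ℝ) ≤ M := by exact_mod_cast Nat.lt_succ_iff.1 this
          simp only [Polynomial.eval_sub, Polynomial.eval_X, Polynomial.eval_C]
          refine (abs_sub _ _).trans ?_
          rw [Nat.abs_cast]; linarith
      _ = _ := by simp [Finset.card_erase_of_mem hi])
  simpa using this

/-- Cauchy's estimates for a bounded holomorphic function, and the resulting geometric bound for the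
Taylor remainder. -/
lemma taylor_rem (g : ℂ → ℂ) (R R' Q : ℝ) (hR : 0 < R) (hRR : R < R')
    (hg : DifferentiableOn ℂ g (Metric.ball 0 R')) (hQ : ∀ z ∈ Metric.ball (0 : ℂ) R', ‖g z‖ ≤ Q) :
    (∀ k, ‖iteratedDeriv k g 0 / (k.factorial : ℂ)‖ ≤ Q / R ^ k) ∧
    ∀ (z : ℂ) (q : ℝ) (m : ℕ), q < 1 → ‖z‖ ≤ q * R →
      ‖g z - ∑ k ∈ Finset.range m, iteratedDeriv k g 0 / (k.factorial : ℂ) * z ^ k‖ ≤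
        Q * q ^ m / (1 - q) := by
  have hc : ∀ k, ‖iteratedDeriv k g 0 / (k.factorial : ℂ)‖ ≤ Q / R ^ k := by
    intro k
    have h1 : DiffContOnCl ℂ g (Metric.ball 0 R) := by
      apply DifferentiableOn.diffContOnCl
      refine hg.mono ?_
      rw [closure_ball _ hR.ne']
      exact Metric.closedBall_subset_ball hRR
    have := Complex.norm_iteratedDeriv_le_of_forall_mem_sphere_norm_le k hR h1 (C := Q)
      (fun z hz => hQ z (Metric.sphere_subset_closedBall.trans
        (Metric.closedBall_subset_ball hRR) hz))
    rw [norm_div, Complex.norm_natCast, div_le_iff₀ (by positivity)]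
    calc _ ≤ _ := this
      _ = _ := by ring
  refine ⟨hc, fun z q m hq hz => ?_⟩
  have hq0 : 0 ≤ q := by
    have := (norm_nonneg z).trans hz
    exact nonneg_of_mul_nonneg_left this hR
  have hzb : z ∈ Metric.ball (0 : ℂ) R' := by
    rw [mem_ball_zero_iff]; nlinarith
  have hs := Complex.hasSum_taylorSeries_on_ball hg hzb
  have hs' : HasSum (fun k => iteratedDeriv k g 0 / (k.factorial : ℂ) * z ^ k) (g z) := by
    have e : (fun k => iteratedDeriv k g 0 / (k.factorial : ℂ) * z ^ k) =
        fun k => ((k.factorial : ℂ)⁻¹ • (z - 0) ^ k • iteratedDeriv k g 0) := by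
      funext k
      simp only [smul_eq_mul, sub_zero]
      ring
    rw [e]
    exact hs
  have hterm : ∀ k, ‖iteratedDeriv k g 0 / (k.factorial : ℂ) * z ^ k‖ ≤ Q * q ^ k := by
    intro k
    rw [norm_mul, norm_pow]
    have hQ0 : 0 ≤ Q := (norm_nonneg _).trans (hQ 0 (by simp; linarith))
    calc _ ≤ Q / R ^ k * (q * R) ^ k := by gcongr; exact hc k
      _ = _ := by rw [mul_pow]; field_simp
  have htail := (hasSum_nat_add_iff' m).2 hs'
  have hgeo : HasSum (fun k => Q * q ^ (k + m)) (Q * q ^ m / (1 - q)) := by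
    have := (hasSum_geometric_of_lt_one hq0 hq).mul_left (Q * q ^ m)
    have e : (fun k => Q * q ^ (k + m)) = fun k => Q * q ^ m * q ^ k := by
      funext k
      rw [pow_add]; ring
    rw [div_eq_mul_inv, e]
    exact this
  exact htail.norm_le_of_bounded hgeo fun k => hterm _

/-! ### Expansions of the kernels along a coordinate direction -/

/-- The polynomial `s² - 2 b z + z²` stays in the right half plane for small complex `z`, so that
its complex powers are holomorphic there. -/
lemma base_re_pos {ρ s b : ℝ} (hρ : 0 < ρ) (hs : ρ ≤ s) (hb : |b| ≤ s) {z : ℂ} (hz : ‖z‖ < ρ / 4) :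
    s ^ 2 / 4 ≤ ((s : ℂ) ^ 2 - 2 * b * z + z ^ 2).re := by
  have hzre := Complex.abs_re_le_norm z
  have h2 : (z ^ 2).re ≥ -‖z‖ ^ 2 := by
    have := Complex.abs_re_le_norm (z ^ 2)
    rw [norm_pow] at this
    exact (abs_le.1 this).1
  have h1 : b * z.re ≤ s * (s / 4) := by
    calc b * z.re ≤ |b * z.re| := le_abs_self _
      _ = |b| * |z.re| := abs_mul _ _
      _ ≤ s * (s / 4) := by
        have : |z.re| ≤ s / 4 := by linarith
        have : 0 ≤ s := by linarith
        gcongr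
  have e : ((s : ℂ) ^ 2 - 2 * b * z + z ^ 2).re = s ^ 2 - 2 * (b * z.re) + (z ^ 2).re := by
    have : ((s : ℂ) ^ 2 - 2 * b * z + z ^ 2) = ((s ^ 2 : ℝ) : ℂ) - ((2 * b : ℝ) : ℂ) * z + z ^ 2 := by
      push_cast; ring
    rw [this, Complex.add_re, Complex.sub_re, Complex.re_ofReal_mul, Complex.ofReal_re]; ring
  rw [e]
  have : ‖z‖ ^ 2 ≤ (s / 4) ^ 2 := by gcongr; linarith
  nlinarith [sq_nonneg s]

lemma base_hasDerivAt {ρ s b : ℝ} (hρ : 0 < ρ) (hs : ρ ≤ s) (hb : |b| ≤ s) (c : ℂ) {z : ℂ}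
    (hz : ‖z‖ < ρ / 4) :
    HasDerivAt (fun z : ℂ => ((s : ℂ) ^ 2 - 2 * b * z + z ^ 2) ^ c)
      (c * ((s : ℂ) ^ 2 - 2 * b * z + z ^ 2) ^ (c - 1) * (-(2 * b) + 2 * z)) z := by
  have h0 : HasDerivAt (fun z : ℂ => (s : ℂ) ^ 2 - 2 * b * z + z ^ 2) (-(2 * b) + 2 * z) z := by
    have h := (((hasDerivAt_id z).const_mul (2 * (b : ℂ))).const_sub ((s : ℂ) ^ 2)).add
      ((hasDerivAt_id z).pow 2)
    refine h.congr_deriv ?_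
    simp
  refine h0.cpow_const ?_
  left
  have := base_re_pos hρ hs hb hz
  have : 0 < s ^ 2 := by have : 0 < s := by linarith
                         positivity
  linarith

lemma base_norm_le {ρ s b : ℝ} (hρ : 0 < ρ) (hs : ρ ≤ s) (hb : |b| ≤ s) (μ : ℕ) {z : ℂ}
    (hz : ‖z‖ < ρ / 4) :
    ‖((s : ℂ) ^ 2 - 2 * b * z + z ^ 2) ^ ((-(μ : ℝ) / 2 : ℝ) : ℂ)‖ ≤ (2 / ρ) ^ μ := by
  have h1 := base_re_pos hρ hs hb hz
  set w := ((s : ℂ) ^ 2 - 2 * b * z + z ^ 2)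
  have h2 : (ρ / 2) ^ 2 ≤ ‖w‖ := by
    have := Complex.re_le_norm w
    nlinarith
  have h3 : 0 < ‖w‖ := lt_of_lt_of_le (by positivity) h2
  rw [Complex.norm_cpow_of_ne_zero (norm_pos_iff.1 h3), Complex.ofReal_im, Complex.ofReal_re,
    mul_zero, Real.exp_zero, div_one]
  calc ‖w‖ ^ (-(μ : ℝ) / 2) ≤ ((ρ / 2) ^ 2) ^ (-(μ : ℝ) / 2) :=
        Real.rpow_le_rpow_of_nonpos (by positivity) h2
          (by have : (0 : ℝ) ≤ μ := Nat.cast_nonneg _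
              linarith)
    _ = (2 / ρ) ^ μ := by
        rw [← Real.rpow_natCast (ρ / 2) 2, ← Real.rpow_mul (by positivity)]
        have : ((2 : ℕ) : ℝ) * (-(μ : ℝ) / 2) = -(μ : ℝ) := by push_cast; ring
        rw [this, Real.rpow_neg (by positivity), Real.rpow_natCast, ← inv_pow, inv_div]

lemma base_zero (s : ℝ) (hs : 0 < s) (b : ℝ) (ν : ℕ) (c : ℂ) (hc : c = ((-(ν : ℝ) / 2 : ℝ) : ℂ)) :
    ((s : ℂ) ^ 2 - 2 * b * 0 + 0 ^ 2) ^ c = (((s ^ ν)⁻¹ : ℝ) : ℂ) := by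
  have : ((s : ℂ) ^ 2 - 2 * b * 0 + 0 ^ 2) = ((s ^ 2 : ℝ) : ℂ) := by push_cast; ring
  rw [this, hc, ← Complex.ofReal_cpow (by positivity)]
  congr 1
  rw [← Real.rpow_natCast s 2, ← Real.rpow_mul hs.le]
  have : ((2 : ℕ) : ℝ) * (-(ν : ℝ) / 2) = -(ν : ℝ) := by push_cast; ring
  rw [this, Real.rpow_neg hs.le, Real.rpow_natCast]

lemma norm_sub_single_sq {n : ℕ} (v : EuclideanSpace ℝ (Fin n)) (i : Fin n) (t : ℝ) :
    ‖v - EuclideanSpace.single i t‖ ^ 2 = ‖v‖ ^ 2 - 2 * v i * t + t ^ 2 := by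
  rw [norm_sub_sq_real, EuclideanSpace.inner_single_right, PiLp.norm_single]
  simp
  ring

/-- At a real point `t`, with `s = ‖v‖` and `b = v i`, the complex power is `‖v - t e_i‖ ^ (-μ)`. -/
lemma base_real {n : ℕ} {ρ : ℝ} (hρ : 0 < ρ) (v : EuclideanSpace ℝ (Fin n)) (hv : ρ ≤ ‖v‖)
    (i : Fin n) (μ : ℕ) (t : ℝ) (ht : |t| < ρ / 4) :
    ((‖v‖ : ℂ) ^ 2 - 2 * (v i : ℝ) * (t : ℂ) + (t : ℂ) ^ 2) ^ ((-(μ : ℝ) / 2 : ℝ) : ℂ) =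
      (((‖v - EuclideanSpace.single i t‖ ^ μ)⁻¹ : ℝ) : ℂ) := by
  have e : ((‖v‖ : ℂ) ^ 2 - 2 * (v i : ℝ) * (t : ℂ) + (t : ℂ) ^ 2) =
      ((‖v - EuclideanSpace.single i t‖ ^ 2 : ℝ) : ℂ) := by
    rw [norm_sub_single_sq]; push_cast; ring
  have hpos : 0 < ‖v - EuclideanSpace.single i t‖ := by
    have h1 := norm_sub_norm_le v (EuclideanSpace.single i t)
    rw [PiLp.norm_single, Real.norm_eq_abs] at h1
    linarith
  rw [e, ← Complex.ofReal_cpow (by positivity)]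
  congr 1
  rw [← Real.rpow_natCast _ 2, ← Real.rpow_mul hpos.le]
  have : ((2 : ℕ) : ℝ) * (-(μ : ℝ) / 2) = -(μ : ℝ) := by push_cast; ring
  rw [this, Real.rpow_neg hpos.le, Real.rpow_natCast]

/-- `taylor_rem` for a real function that has a bounded holomorphic extension to a disc. -/
lemma real_taylor {g : ℂ → ℂ} {φ : ℝ → ℝ} {ρ Q : ℝ} (hρ : 0 < ρ)
    (hg : DifferentiableOn ℂ g (Metric.ball 0 (ρ / 4)))
    (hQ : ∀ z ∈ Metric.ball (0 : ℂ) (ρ / 4), ‖g z‖ ≤ Q)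
    (hφ : ∀ t : ℝ, |t| < ρ / 4 → g t = (φ t : ℂ)) (t q : ℝ) (m : ℕ) (hq : q ≤ 1 / 2)
    (ht : |t| ≤ q * (ρ / 8)) :
    |φ t - ∑ k ∈ Finset.range m, (iteratedDeriv k g 0 / (k.factorial : ℂ)).re * t ^ k| ≤
      2 * Q * q ^ m := by
  have h := (taylor_rem g (ρ / 8) (ρ / 4) Q (by linarith) (by linarith) hg hQ).2 t q m
    (by linarith) (by simpa using ht)
  have hq0 : 0 ≤ q := by
    have := (abs_nonneg t).trans ht
    exact nonneg_of_mul_nonneg_left this (by linarith)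
  have hQ0 : 0 ≤ Q := (norm_nonneg _).trans (hQ 0 (by simp; linarith))
  rw [hφ t (by nlinarith)] at h
  have e : φ t - ∑ k ∈ Finset.range m, (iteratedDeriv k g 0 / (k.factorial : ℂ)).re * t ^ k =
      ((φ t : ℂ) - ∑ k ∈ Finset.range m, iteratedDeriv k g 0 / (k.factorial : ℂ) * (t : ℂ) ^ k).re := by
    rw [Complex.sub_re, Complex.ofReal_re, Complex.re_sum]
    congr 1
    refine Finset.sum_congr rfl fun k _ => ?_
    rw [← Complex.ofReal_pow, Complex.re_mul_ofReal]
  rw [e]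
  refine (Complex.abs_re_le_norm _).trans (h.trans ?_)
  rw [div_le_iff₀ (by linarith)]
  have : 0 ≤ Q * q ^ m := by positivity
  nlinarith

/-- Taylor expansion of `t ↦ ‖v - t e_i‖ ^ (-μ)`, with its second coefficient. -/
lemma W_expansion {n : ℕ} {ρ : ℝ} (hρ : 0 < ρ) (v : EuclideanSpace ℝ (Fin n)) (hv : ρ ≤ ‖v‖)
    (i : Fin n) (μ : ℕ) :
    ∃ a : ℕ → ℝ, 2 * a 2 = μ * (μ + 2) * (v i) ^ 2 * (‖v‖ ^ (μ + 4))⁻¹ - μ * (‖v‖ ^ (μ + 2))⁻¹ ∧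
      ∀ (t q : ℝ) (m : ℕ), q ≤ 1 / 2 → |t| ≤ q * (ρ / 8) →
        |(‖v - EuclideanSpace.single i t‖ ^ μ)⁻¹ - ∑ k ∈ Finset.range m, a k * t ^ k| ≤
          2 * (2 / ρ) ^ μ * q ^ m := by
  have hb : |v i| ≤ ‖v‖ := by simpa using PiLp.norm_apply_le v i
  have hpos : 0 < ‖v‖ := by linarith
  set c : ℂ := ((-(μ : ℝ) / 2 : ℝ) : ℂ) with hc
  set g : ℂ → ℂ := fun z => ((‖v‖ : ℂ) ^ 2 - 2 * (v i : ℝ) * z + z ^ 2) ^ c with hg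
  refine ⟨fun k => (iteratedDeriv k g 0 / (k.factorial : ℂ)).re, ?_, ?_⟩
  · have h1 : deriv g =ᶠ[nhds 0] fun z => c * ((‖v‖ : ℂ) ^ 2 - 2 * (v i : ℝ) * z + z ^ 2) ^ (c - 1) *
        (-(2 * (v i : ℝ)) + 2 * z) := by
      filter_upwards [Metric.ball_mem_nhds (0 : ℂ) (by linarith : 0 < ρ / 4)] with z hz
      exact (base_hasDerivAt hρ hv hb c (by simpa using hz)).deriv
    have h0 : ‖(0 : ℂ)‖ < ρ / 4 := by simp; linarith
    have h2 := ((base_hasDerivAt hρ hv hb (c - 1) h0).const_mul c).mul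
      (((hasDerivAt_id (0 : ℂ)).const_mul 2).const_add (-(2 * ((v i : ℝ) : ℂ))))
    have h5 : iteratedDeriv 2 g 0 = deriv (fun z : ℂ => c * ((‖v‖ : ℂ) ^ 2 -
        2 * (v i : ℝ) * z + z ^ 2) ^ (c - 1) * (-(2 * (v i : ℝ)) + 2 * z)) 0 := by
      rw [iteratedDeriv_succ, iteratedDeriv_one, h1.deriv_eq]
    have h3 := h5.trans h2.deriv
    have e1 := base_zero ‖v‖ hpos (v i) (μ + 2) (c - 1) (by rw [hc]; push_cast; ring)
    have e2 := base_zero ‖v‖ hpos (v i) (μ + 4) (c - 1 - 1) (by rw [hc]; push_cast; ring)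
    rw [e1, e2] at h3
    have h4 : iteratedDeriv 2 g 0 = ((μ * (μ + 2) * (v i) ^ 2 * (‖v‖ ^ (μ + 4))⁻¹
        - μ * (‖v‖ ^ (μ + 2))⁻¹ : ℝ) : ℂ) := by
      rw [h3, hc, id]; push_cast; ring
    simp only [h4]
    rw [← Complex.ofReal_natCast, ← Complex.ofReal_div, Complex.ofReal_re]
    norm_num [Nat.factorial]
    ring
  · intro t q m hq ht
    refine real_taylor (g := g) (φ := fun t => (‖v - EuclideanSpace.single i t‖ ^ μ)⁻¹) hρ ?_ ?_ ?_
      t q m hq ht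
    · intro z hz
      exact (base_hasDerivAt hρ hv hb c (by simpa using hz)).differentiableAt.differentiableWithinAt
    · intro z hz
      exact base_norm_le hρ hv hb μ (by simpa using hz)
    · intro t ht
      exact base_real hρ v hv i μ t ht

/-- Taylor expansion of `t ↦ (v i - t) / ‖v - t e_i‖ ^ μ`, with its first coefficient. -/
lemma K_expansion {n : ℕ} {ρ D : ℝ} (hρ : 0 < ρ) (v : EuclideanSpace ℝ (Fin n)) (hv : ρ ≤ ‖v‖)
    (hD : ‖v‖ ≤ D) (i : Fin n) (μ : ℕ) :
    ∃ a : ℕ → ℝ, a 1 = μ * (v i) ^ 2 * (‖v‖ ^ (μ + 2))⁻¹ - (‖v‖ ^ μ)⁻¹ ∧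
      ∀ (t q : ℝ) (m : ℕ), q ≤ 1 / 2 → |t| ≤ q * (ρ / 8) →
        |(v i - t) / ‖v - EuclideanSpace.single i t‖ ^ μ - ∑ k ∈ Finset.range m, a k * t ^ k| ≤
          2 * (2 * D * (2 / ρ) ^ μ) * q ^ m := by
  have hb : |v i| ≤ ‖v‖ := by simpa using PiLp.norm_apply_le v i
  have hpos : 0 < ‖v‖ := by linarith
  set c : ℂ := ((-(μ : ℝ) / 2 : ℝ) : ℂ) with hc
  set g : ℂ → ℂ := fun z => ((v i : ℝ) - z) *
    ((‖v‖ : ℂ) ^ 2 - 2 * (v i : ℝ) * z + z ^ 2) ^ c with hg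
  have hd : ∀ z : ℂ, ‖z‖ < ρ / 4 → HasDerivAt g _ z := fun z hz =>
    ((hasDerivAt_id z).const_sub ((v i : ℝ) : ℂ)).mul (base_hasDerivAt hρ hv hb c hz)
  refine ⟨fun k => (iteratedDeriv k g 0 / (k.factorial : ℂ)).re, ?_, ?_⟩
  · have h0 : ‖(0 : ℂ)‖ < ρ / 4 := by simp; linarith
    have h5 : iteratedDeriv 1 g 0 = deriv g 0 := by rw [iteratedDeriv_one]
    have h3 := h5.trans (hd 0 h0).deriv
    have e1 := base_zero ‖v‖ hpos (v i) μ c (by rw [hc])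
    have e2 := base_zero ‖v‖ hpos (v i) (μ + 2) (c - 1) (by rw [hc]; push_cast; ring)
    rw [e1, e2] at h3
    have h4 : iteratedDeriv 1 g 0 = ((μ * (v i) ^ 2 * (‖v‖ ^ (μ + 2))⁻¹ - (‖v‖ ^ μ)⁻¹ : ℝ) : ℂ) := by
      rw [h3, hc]; push_cast; simp; ring
    simp only [h4]
    simp [-Complex.ofReal_sub, -Complex.ofReal_mul, -Complex.ofReal_inv, -Complex.ofReal_pow]
  · intro t q m hq ht
    refine real_taylor (g := g)
      (φ := fun t => (v i - t) / ‖v - EuclideanSpace.single i t‖ ^ μ) hρ ?_ ?_ ?_ t q m hq ht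
    · intro z hz
      exact (hd z (by simpa using hz)).differentiableAt.differentiableWithinAt
    · intro z hz
      have hz' : ‖z‖ < ρ / 4 := by simpa using hz
      rw [hg, norm_mul]
      refine mul_le_mul ?_ (base_norm_le hρ hv hb μ hz') (norm_nonneg _) (by linarith)
      refine (norm_sub_le _ _).trans ?_
      rw [Complex.norm_real, Real.norm_eq_abs]
      linarith
    · intro t ht
      rw [hg]
      simp only
      rw [base_real hρ v hv i μ t ht]
      push_cast
      rw [div_eq_mul_inv]

/-! ### Approximation by Riesz transforms with bounded densities -/

section

/-- On `Ω₂`, the function `g` is uniformly within `δ` of a sum `∑ j, R_j f_j` of truncated Riesz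
transforms over `Ω₁` whose measurable densities are bounded by `A` everywhere. -/
def Rz {n : ℕ} (Ω₁ Ω₂ : Set (EuclideanSpace ℝ (Fin n))) (g : EuclideanSpace ℝ (Fin n) → ℝ)
    (δ A : ℝ) : Prop :=
  ∃ f : Fin n → EuclideanSpace ℝ (Fin n) → ℝ, (∀ j, Measurable (f j)) ∧ (∀ j y, |f j y| ≤ A) ∧
    ∀ x ∈ Ω₂, |g x - ∑ j, truncRiesz n Ω₁ j (f j) x| ≤ δ

/-- Geometric data: a ball `B(y₀, 2 ρ)` contained in `Ω₁` all of whose points have distance between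
`ρ` and `D` from every point of `Ω₂`, normalised by `ρ ≤ 1 ≤ D`. -/
structure Geo {n : ℕ} (Ω₁ Ω₂ : Set (EuclideanSpace ℝ (Fin n))) (y₀ : EuclideanSpace ℝ (Fin n))
    (ρ D : ℝ) : Prop where
  hn : 2 ≤ n
  ρpos : 0 < ρ
  ρle : ρ ≤ 1
  Dge : 1 ≤ D
  o : IsOpen Ω₁
  bdd : Bornology.IsBounded Ω₁
  disj : Disjoint (closure Ω₁) (closure Ω₂)
  sub : Metric.ball y₀ (2 * ρ) ⊆ Ω₁
  lo : ∀ x ∈ Ω₂, ∀ y ∈ Metric.ball y₀ (2 * ρ), ρ ≤ ‖x - y‖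
  hi : ∀ x ∈ Ω₂, ∀ y ∈ Metric.ball y₀ (2 * ρ), ‖x - y‖ ≤ D

variable {n : ℕ} {Ω₁ Ω₂ : Set (EuclideanSpace ℝ (Fin n))} {y₀ : EuclideanSpace ℝ (Fin n)} {ρ D : ℝ}

lemma abs_kernel_le (v : EuclideanSpace ℝ (Fin n)) (j : Fin n) {r : ℝ} (hr : 0 < r) (hv : r ≤ ‖v‖) :
    |v j / ‖v‖ ^ (n + 1)| ≤ (r ^ n)⁻¹ := by
  have hpos : 0 < ‖v‖ := by linarith
  have hb : |v j| ≤ ‖v‖ := by simpa using PiLp.norm_apply_le v j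
  rw [abs_div, abs_of_pos (pow_pos hpos _), pow_succ]
  calc |v j| / (‖v‖ ^ n * ‖v‖) ≤ ‖v‖ / (‖v‖ ^ n * ‖v‖) := by gcongr
    _ = (‖v‖ ^ n)⁻¹ := by field_simp
    _ ≤ (r ^ n)⁻¹ := by gcongr

lemma Geo.integrableOn (G : Geo Ω₁ Ω₂ y₀ ρ D) {f : EuclideanSpace ℝ (Fin n) → ℝ}
    (hf : Measurable f) {A : ℝ} (hA : ∀ y, |f y| ≤ A) {x : EuclideanSpace ℝ (Fin n)} (hx : x ∈ Ω₂)
    (j : Fin n) :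
    IntegrableOn (fun y => f y * (x j - y j) / ‖x - y‖ ^ (n + 1)) Ω₁ := by
  have hx' : x ∈ (closure Ω₁)ᶜ := fun h => G.disj.le_bot ⟨h, subset_closure hx⟩
  obtain ⟨r, hr, hsub⟩ := Metric.isOpen_iff.1 isClosed_closure.isOpen_compl x hx'
  have hA0 : 0 ≤ A := (abs_nonneg _).trans (hA 0)
  refine Measure.integrableOn_of_bounded (M := A * (r ^ n)⁻¹) G.bdd.measure_lt_top.ne ?_ ?_
  · refine Measurable.aestronglyMeasurable ?_
    have : Measurable fun y : EuclideanSpace ℝ (Fin n) => y j := by fun_prop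
    fun_prop
  · refine (ae_restrict_iff' G.o.measurableSet).2 (Filter.Eventually.of_forall fun y hy => ?_)
    have h1 : r ≤ ‖x - y‖ := by
      by_contra! h
      exact hsub (by rwa [Metric.mem_ball, dist_comm, dist_eq_norm]) (subset_closure hy)
    have h2 := abs_kernel_le (x - y) j hr h1
    rw [mul_div_assoc, norm_mul, Real.norm_eq_abs, Real.norm_eq_abs]
    exact mul_le_mul (hA y) (by simpa using h2) (abs_nonneg _) hA0

/-- Approximate linear combinations: `S` bounds the sum of the absolute values of the coefficients,
and `η` is the error of the combination itself. -/
lemma Rz_comb (G : Geo Ω₁ Ω₂ y₀ ρ D) {ι : Type*} (s : Finset ι) (c : ι → ℝ)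
    (g : ι → EuclideanSpace ℝ (Fin n) → ℝ) (g' : EuclideanSpace ℝ (Fin n) → ℝ) {δ A S η : ℝ}
    (hg : ∀ i ∈ s, Rz Ω₁ Ω₂ (g i) δ A) (hS : ∑ i ∈ s, |c i| ≤ S) (hδ : 0 ≤ δ) (hA : 0 ≤ A)
    (hg' : ∀ x ∈ Ω₂, |g' x - ∑ i ∈ s, c i * g i x| ≤ η) :
    Rz Ω₁ Ω₂ g' (S * δ + η) (S * A) := by
  classical
  have hg2 : ∀ i, ∃ f : Fin n → EuclideanSpace ℝ (Fin n) → ℝ, i ∈ s → ((∀ j, Measurable (f j)) ∧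
      (∀ j y, |f j y| ≤ A) ∧ ∀ x ∈ Ω₂, |g i x - ∑ j, truncRiesz n Ω₁ j (f j) x| ≤ δ) := by
    intro i
    by_cases hi : i ∈ s
    · obtain ⟨f, hf⟩ := hg i hi
      exact ⟨f, fun _ => hf⟩
    · exact ⟨0, fun h => absurd h hi⟩
  choose f hf using hg2
  refine ⟨fun j y => ∑ i ∈ s, c i * f i j y, ?_, ?_, ?_⟩
  · intro j
    exact Finset.measurable_sum s fun i hi => ((hf i hi).1 j).const_mul (c i)
  · intro j y
    calc _ ≤ ∑ i ∈ s, |c i * f i j y| := Finset.abs_sum_le_sum_abs _ _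
      _ ≤ ∑ i ∈ s, |c i| * A := Finset.sum_le_sum fun i hi => by
          rw [abs_mul]; gcongr; exact (hf i hi).2.1 j y
      _ = (∑ i ∈ s, |c i|) * A := by rw [Finset.sum_mul]
      _ ≤ S * A := by gcongr
  · intro x hx
    have e : ∀ j, truncRiesz n Ω₁ j (fun y => ∑ i ∈ s, c i * f i j y) x =
        ∑ i ∈ s, c i * truncRiesz n Ω₁ j (f i j) x := by
      intro j
      unfold truncRiesz
      simp_rw [← integral_const_mul]
      rw [← integral_finsetSum]
      · congr 1
        funext y
        rw [Finset.sum_mul, Finset.sum_div]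
        exact Finset.sum_congr rfl fun i _ => by ring
      · intro i hi
        exact (G.integrableOn ((hf i hi).1 j) ((hf i hi).2.1 j) hx j).const_mul _
    simp_rw [e]
    rw [Finset.sum_comm]
    simp_rw [← Finset.mul_sum]
    have e2 : g' x - ∑ i ∈ s, c i * ∑ j, truncRiesz n Ω₁ j (f i j) x =
        (g' x - ∑ i ∈ s, c i * g i x) +
          ∑ i ∈ s, c i * (g i x - ∑ j, truncRiesz n Ω₁ j (f i j) x) := by
      simp_rw [mul_sub]
      rw [Finset.sum_sub_distrib]; ring
    rw [e2]
    have h1 : |∑ i ∈ s, c i * (g i x - ∑ j, truncRiesz n Ω₁ j (f i j) x)| ≤ S * δ := by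
      calc _ ≤ ∑ i ∈ s, |c i * (g i x - ∑ j, truncRiesz n Ω₁ j (f i j) x)| :=
            Finset.abs_sum_le_sum_abs _ _
        _ ≤ ∑ i ∈ s, |c i| * δ := Finset.sum_le_sum fun i hi => by
            rw [abs_mul]; gcongr; exact (hf i hi).2.2 x hx
        _ = (∑ i ∈ s, |c i|) * δ := by rw [Finset.sum_mul]
        _ ≤ S * δ := by gcongr
    have h2 := abs_add_le (g' x - ∑ i ∈ s, c i * g i x)
      (∑ i ∈ s, c i * (g i x - ∑ j, truncRiesz n Ω₁ j (f i j) x))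
    have h3 := hg' x hx
    linarith

lemma Rz.mono {g : EuclideanSpace ℝ (Fin n) → ℝ} {δ A δ' A' : ℝ} (h : Rz Ω₁ Ω₂ g δ A)
    (hδ : δ ≤ δ') (hA : A ≤ A') : Rz Ω₁ Ω₂ g δ' A' := by
  obtain ⟨f, h1, h2, h3⟩ := h
  exact ⟨f, h1, fun j y => (h2 j y).trans hA, fun x hx => (h3 x hx).trans hδ⟩

lemma kernel_lipschitz {v v' : EuclideanSpace ℝ (Fin n)} (j : Fin n) (hρ : 0 < ρ)
    (hv : ρ ≤ ‖v‖) (hv' : ρ ≤ ‖v'‖) (hD : ‖v‖ ≤ D) (hD' : ‖v'‖ ≤ D) {τ : ℝ} (hτ : ‖v - v'‖ ≤ τ) :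
    |v j / ‖v‖ ^ (n + 1) - v' j / ‖v'‖ ^ (n + 1)| ≤
      (1 / ρ ^ (n + 1) + D * ((n + 1) * D ^ n) / (ρ ^ (n + 1) * ρ ^ (n + 1))) * τ := by
  have p1 : 0 < ‖v‖ := by linarith
  have p2 : 0 < ‖v'‖ := by linarith
  have hτ0 : 0 ≤ τ := (norm_nonneg _).trans hτ
  have hb : |v' j| ≤ D := le_trans (by simpa using PiLp.norm_apply_le v' j) hD'
  have hd : |v j - v' j| ≤ τ := le_trans (by simpa using PiLp.norm_apply_le (v - v') j) hτ
  have e : v j / ‖v‖ ^ (n + 1) - v' j / ‖v'‖ ^ (n + 1) = (v j - v' j) / ‖v‖ ^ (n + 1) +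
      v' j * (‖v'‖ ^ (n + 1) - ‖v‖ ^ (n + 1)) / (‖v‖ ^ (n + 1) * ‖v'‖ ^ (n + 1)) := by
    field_simp; ring
  have h1 : |‖v'‖ ^ (n + 1) - ‖v‖ ^ (n + 1)| ≤ τ * ((n + 1) * D ^ n) := by
    refine (abs_pow_sub_pow_le _ _ _).trans ?_
    have ha : |‖v'‖ - ‖v‖| ≤ τ := by
      rw [norm_sub_rev] at hτ
      exact (abs_norm_sub_norm_le _ _).trans hτ
    have hm : max |‖v'‖| |‖v‖| ≤ D := by simp [hD, hD']
    have hm0 : 0 ≤ max |‖v'‖| |‖v‖| := le_max_of_le_left (abs_nonneg _)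
    simp only [Nat.add_sub_cancel]
    push_cast
    rw [← mul_assoc]
    gcongr
  rw [e]
  refine (abs_add_le _ _).trans ?_
  rw [abs_div, abs_div, abs_mul, abs_of_pos (pow_pos p1 _), abs_of_pos (by positivity :
    0 < ‖v‖ ^ (n + 1) * ‖v'‖ ^ (n + 1))]
  have hD0 : 0 ≤ D := by linarith
  calc _ ≤ τ / ρ ^ (n + 1) + D * (τ * ((n + 1) * D ^ n)) / (ρ ^ (n + 1) * ρ ^ (n + 1)) := by
        gcongr
    _ = _ := by ring

/-- The kernel with pole `y` is approximated by the transform of the normalised indicator function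
of `B(y, τ)`, with error `O(τ)` and density of size `O(τ ^ (-n))`. -/
lemma Rz_kernel (G : Geo Ω₁ Ω₂ y₀ ρ D) : ∃ L : ℝ, 1 ≤ L ∧ ∀ (j : Fin n) (τ : ℝ), 0 < τ → τ ≤ ρ →
    ∀ y ∈ Metric.ball y₀ ρ,
      Rz Ω₁ Ω₂ (fun x => (x j - y j) / ‖x - y‖ ^ (n + 1)) (L * τ) (L / τ ^ n) := by
  set L0 := (1 / ρ ^ (n + 1) + D * ((n + 1) * D ^ n) / (ρ ^ (n + 1) * ρ ^ (n + 1))) with hL0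
  set V1 := (volume : Measure (EuclideanSpace ℝ (Fin n))).real (Metric.ball 0 1) with hV1
  have hρ := G.ρpos
  have hn := G.hn
  have hV1p : 0 < V1 := by
    rw [hV1, measureReal_def]
    exact ENNReal.toReal_pos (Metric.measure_ball_pos _ _ one_pos).ne' measure_ball_lt_top.ne
  refine ⟨max 1 (max L0 V1⁻¹), le_max_left _ _, fun j τ hτ hτρ y hy => ?_⟩
  have hL1 : L0 ≤ max 1 (max L0 V1⁻¹) := (le_max_left _ _).trans (le_max_right _ _)
  have hL2 : V1⁻¹ ≤ max 1 (max L0 V1⁻¹) := (le_max_right _ _).trans (le_max_right _ _)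
  set B := Metric.ball y τ with hB
  set V := (volume : Measure (EuclideanSpace ℝ (Fin n))).real B with hV
  have hVe : V = τ ^ n * V1 := by
    rw [hV, hV1, measureReal_def, measureReal_def, hB, Measure.addHaar_ball_of_pos _ _ hτ,
      ENNReal.toReal_mul, ENNReal.toReal_ofReal (by positivity)]
    simp
  have hVp : 0 < V := by rw [hVe]; positivity
  have hsub : B ⊆ Metric.ball y₀ (2 * ρ) := by
    refine Metric.ball_subset_ball' ?_
    rw [Metric.mem_ball] at hy
    linarith
  refine Rz.mono (δ := L0 * τ) (A := V⁻¹) ?_ (by gcongr) (by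
    rw [hVe, mul_inv, div_eq_mul_inv, mul_comm]; gcongr)
  classical
  refine ⟨fun i => if i = j then B.indicator (fun _ => V⁻¹) else 0, ?_, ?_, ?_⟩
  · intro i
    dsimp only
    split_ifs
    · exact measurable_const.indicator Metric.isOpen_ball.measurableSet
    · exact measurable_zero
  · intro i z
    dsimp only
    split_ifs
    · rw [indicator]; split_ifs
      · rw [abs_of_pos (by positivity)]
      · simp; positivity
    · simp; positivity
  · intro x hx
    have e : ∑ i, truncRiesz n Ω₁ i (if i = j then B.indicator (fun _ => V⁻¹) else 0) x =
        ∫ z in B, V⁻¹ * ((x j - z j) / ‖x - z‖ ^ (n + 1)) := by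
      rw [Finset.sum_eq_single j]
      · rw [if_pos rfl, truncRiesz]
        have : (fun z : EuclideanSpace ℝ (Fin n) => B.indicator (fun _ => V⁻¹) z * (x j - z j) /
            ‖x - z‖ ^ (n + 1)) = B.indicator (fun z => V⁻¹ * ((x j - z j) / ‖x - z‖ ^ (n + 1))) := by
          funext z
          by_cases hz : z ∈ B
          · simp [hz, mul_div_assoc]
          · simp [hz]
        rw [this, setIntegral_indicator Metric.isOpen_ball.measurableSet,
          inter_eq_self_of_subset_right (hsub.trans G.sub)]
      · intro i _ hij
        rw [if_neg hij]; simp [truncRiesz]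
      · simp
    have h_int : IntegrableOn (fun z => V⁻¹ * ((x j - z j) / ‖x - z‖ ^ (n + 1))) B := by
      have := (G.integrableOn (f := fun _ => V⁻¹) measurable_const (A := |V⁻¹|) (fun _ => le_rfl)
        hx j).mono_set (hsub.trans G.sub)
      refine this.congr_fun (fun z _ => ?_) Metric.isOpen_ball.measurableSet
      simp only; rw [mul_div_assoc]
    have e2 : (x j - y j) / ‖x - y‖ ^ (n + 1) =
        ∫ z in B, V⁻¹ * ((x j - y j) / ‖x - y‖ ^ (n + 1)) := by
      rw [setIntegral_const, smul_eq_mul, ← hV, ← mul_assoc, mul_inv_cancel₀ hVp.ne', one_mul]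
    have h_int0 : IntegrableOn (fun _ : EuclideanSpace ℝ (Fin n) =>
        V⁻¹ * ((x j - y j) / ‖x - y‖ ^ (n + 1))) B :=
      integrableOn_const measure_ball_lt_top.ne
    rw [e]
    dsimp only
    rw [e2, ← integral_sub h_int0 h_int]
    have h3 : ∀ z ∈ B, ‖V⁻¹ * ((x j - y j) / ‖x - y‖ ^ (n + 1)) -
        V⁻¹ * ((x j - z j) / ‖x - z‖ ^ (n + 1))‖ ≤ V⁻¹ * (L0 * τ) := by
      intro z hz
      rw [← mul_sub, norm_mul, norm_inv, Real.norm_of_nonneg hVp.le]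
      have hy2 : y ∈ Metric.ball y₀ (2 * ρ) := Metric.ball_subset_ball (by linarith) hy
      have := kernel_lipschitz (v := x - y) (v' := x - z) j hρ (G.lo x hx y hy2)
        (G.lo x hx z (hsub hz)) (G.hi x hx y hy2) (G.hi x hx z (hsub hz)) (τ := τ) (by
          rw [sub_sub_sub_cancel_left, ← dist_eq_norm]; exact (Metric.mem_ball.1 hz).le)
      rw [← hL0] at this
      gcongr
      exact this
    have := norm_setIntegral_le_of_norm_le_const (μ := volume) (s := B) measure_ball_lt_top h3
    rw [← hV, Real.norm_eq_abs] at this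
    refine this.trans (le_of_eq ?_)
    field_simp

end

/-! ### Negative powers of the distance by numerical differentiation -/

section

variable {n : ℕ} {Ω₁ Ω₂ : Set (EuclideanSpace ℝ (Fin n))} {y₀ : EuclideanSpace ℝ (Fin n)} {ρ D : ℝ}

/-- Numerical differentiation applied simultaneously in the `n` coordinate directions. -/
lemma Rz_num_diff (G : Geo Ω₁ Ω₂ y₀ ρ D) (M l : ℕ) (hl : l ≤ M) {θ : ℝ} (hθ : 0 < θ)
    (Φ : Fin n → EuclideanSpace ℝ (Fin n) → ℝ → ℝ) (g' : EuclideanSpace ℝ (Fin n) → ℝ) {c : ℝ}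
    (hc : |c| ≤ 2) {δ A E : ℝ} (hδ : 0 ≤ δ) (hA : 0 ≤ A)
    (hR : ∀ i, ∀ s ∈ Finset.range (M + 1), Rz Ω₁ Ω₂ (fun x => Φ i x (θ * s)) δ A)
    (hΦ : ∀ x ∈ Ω₂, ∃ a : Fin n → ℕ → ℝ, g' x = c * ∑ i, a i l ∧ ∀ i, ∀ s ∈ Finset.range (M + 1),
      |Φ i x (θ * s) - ∑ k ∈ Finset.range (M + 1), a i k * (θ * s) ^ k| ≤ E) :
    Rz Ω₁ Ω₂ g' (2 * n * ((M + 1) ^ (M + 1) / θ ^ l) * (δ + E))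
      (2 * n * ((M + 1) ^ (M + 1) / θ ^ l) * A) := by
  obtain ⟨w, hw, hd⟩ := num_diff M l hl
  have hθl : 0 < θ ^ l := pow_pos hθ l
  rw [mul_add]
  refine Rz_comb G (Finset.univ ×ˢ Finset.range (M + 1)) (fun p => c * (w p.2 / θ ^ l))
    (fun p x => Φ p.1 x (θ * p.2)) g' ?_ ?_ hδ hA ?_
  · rintro ⟨i, s⟩ hp
    exact hR i s (Finset.mem_product.1 hp).2
  · rw [Finset.sum_product]
    simp only [abs_mul, abs_div, abs_of_pos hθl]
    rw [Finset.sum_const, Finset.card_univ, Fintype.card_fin, nsmul_eq_mul, ← Finset.mul_sum,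
      ← Finset.sum_div]
    have : 0 ≤ ∑ i ∈ Finset.range (M + 1), |w i| := Finset.sum_nonneg fun _ _ => abs_nonneg _
    calc (n : ℝ) * (|c| * ((∑ i ∈ Finset.range (M + 1), |w i|) / θ ^ l))
        ≤ n * (2 * ((M + 1) ^ (M + 1) / θ ^ l)) := by gcongr
      _ = _ := by ring
  · intro x hx
    obtain ⟨a, hg, ha⟩ := hΦ x hx
    rw [Finset.sum_product, hg]
    have : c * ∑ i, a i l - ∑ i, ∑ s ∈ Finset.range (M + 1), c * (w s / θ ^ l) * Φ i x (θ * s) =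
        c * ∑ i, (a i l - ∑ s ∈ Finset.range (M + 1), (w s / θ ^ l) * Φ i x (θ * s)) := by
      rw [Finset.sum_sub_distrib, mul_sub]
      congr 1
      rw [Finset.mul_sum]
      refine Finset.sum_congr rfl fun i _ => ?_
      rw [Finset.mul_sum]
      exact Finset.sum_congr rfl fun s _ => by ring
    rw [this, abs_mul]
    have hs : |∑ i, (a i l - ∑ s ∈ Finset.range (M + 1), (w s / θ ^ l) * Φ i x (θ * s))| ≤
        n * ((M + 1) ^ (M + 1) / θ ^ l * E) := by
      refine (Finset.abs_sum_le_sum_abs _ _).trans ?_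
      refine (Finset.sum_le_card_nsmul _ _ ((M + 1) ^ (M + 1) / θ ^ l * E) fun i _ => ?_).trans ?_
      · rw [abs_sub_comm]
        exact hd (a i) (Φ i x) θ E hθ (ha i)
      · simp
    calc _ ≤ 2 * (n * ((M + 1) ^ (M + 1) / θ ^ l * E)) :=
          mul_le_mul hc hs (abs_nonneg _) zero_le_two
      _ = _ := by ring

lemma sum_sq_eq (v : EuclideanSpace ℝ (Fin n)) : ∑ i, (v i) ^ 2 = ‖v‖ ^ 2 := by
  rw [EuclideanSpace.norm_sq_eq]; simp

/-- The divergence identity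
`∑ i, ∂_{y_i} ((y_i - x_i) / |x - y| ^ (n + 1)) = -|x - y| ^ (-(n + 1))`, with derivatives replaced
by interpolation formulas. Only the poles `y + θ s e_i` are used. -/
lemma Rz_step_K (G : Geo Ω₁ Ω₂ y₀ ρ D) {M : ℕ} (hM : 1 ≤ M) {θ q : ℝ} (hθ : 0 < θ) (hq : q ≤ 1 / 2)
    (hθM : θ * M ≤ q * (ρ / 8)) {δ A : ℝ} (hδ : 0 ≤ δ) (hA : 0 ≤ A) {y : EuclideanSpace ℝ (Fin n)}
    (hy : y ∈ Metric.ball y₀ (2 * ρ))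
    (hR : ∀ i, ∀ s ∈ Finset.range (M + 1), Rz Ω₁ Ω₂ (fun x =>
      (x i - (y + EuclideanSpace.single i (θ * s)) i) /
        ‖x - (y + EuclideanSpace.single i (θ * s))‖ ^ (n + 1)) δ A) :
    Rz Ω₁ Ω₂ (fun x => (‖x - y‖ ^ (n + 1))⁻¹)
      (2 * n * ((M + 1) ^ (M + 1) / θ ^ 1) * (δ + 2 * (2 * D * (2 / ρ) ^ (n + 1)) * q ^ (M + 1)))
      (2 * n * ((M + 1) ^ (M + 1) / θ ^ 1) * A) := by
  refine Rz_num_diff G M 1 hM hθ (fun i x t => ((x - y) i - t) /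
    ‖(x - y) - EuclideanSpace.single i t‖ ^ (n + 1)) _ (c := 1) (by norm_num) hδ hA ?_ ?_
  · intro i s hs
    have := hR i s hs
    simp only [PiLp.add_apply, PiLp.single_apply, if_true, ← sub_sub] at this
    simpa [sub_sub] using this
  · intro x hx
    have h1 := fun i => K_expansion G.ρpos (x - y) (G.lo x hx y hy) (G.hi x hx y hy) i (n + 1)
    choose a ha1 ha2 using h1
    refine ⟨a, ?_, fun i s hs => ?_⟩
    · simp only [ha1, one_mul]
      rw [Finset.sum_sub_distrib, ← Finset.sum_mul, ← Finset.mul_sum, sum_sq_eq]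
      have hp : 0 < ‖x - y‖ := G.ρpos.trans_le (G.lo x hx y hy)
      simp
      field_simp
      ring
    · refine ha2 i (θ * s) q (M + 1) hq ?_
      rw [abs_of_nonneg (by positivity)]
      refine le_trans ?_ hθM
      have : (s : ℝ) ≤ M := by exact_mod_cast Nat.lt_succ_iff.1 (Finset.mem_range.1 hs)
      gcongr

/-- The identity `Δ |x - y| ^ (-μ) = μ (μ + 2 - n) |x - y| ^ (-μ - 2)`, with derivatives replaced by
interpolation formulas. The assumption `2 ≤ n ≤ μ` makes the factor `μ (μ + 2 - n)` at least `1`. -/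
lemma Rz_step_W (G : Geo Ω₁ Ω₂ y₀ ρ D) {M : ℕ} (hM : 2 ≤ M) {θ q : ℝ} (hθ : 0 < θ) (hq : q ≤ 1 / 2)
    (hθM : θ * M ≤ q * (ρ / 8)) {δ A : ℝ} (hδ : 0 ≤ δ) (hA : 0 ≤ A) {y : EuclideanSpace ℝ (Fin n)}
    (hy : y ∈ Metric.ball y₀ (2 * ρ)) {μ : ℕ} (hμ : n ≤ μ)
    (hR : ∀ i, ∀ s ∈ Finset.range (M + 1), Rz Ω₁ Ω₂ (fun x =>
      (‖x - (y + EuclideanSpace.single i (θ * s))‖ ^ μ)⁻¹) δ A) :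
    Rz Ω₁ Ω₂ (fun x => (‖x - y‖ ^ (μ + 2))⁻¹)
      (2 * n * ((M + 1) ^ (M + 1) / θ ^ 2) * (δ + 2 * (2 / ρ) ^ μ * q ^ (M + 1)))
      (2 * n * ((M + 1) ^ (M + 1) / θ ^ 2) * A) := by
  have hn := G.hn
  have hμn : (n : ℝ) ≤ μ := by exact_mod_cast hμ
  have hμ2 : (2 : ℝ) ≤ μ := by exact_mod_cast hn.trans hμ
  have hc1 : (1 : ℝ) ≤ μ * (μ + 2 - n) := by nlinarith
  refine Rz_num_diff G M 2 hM hθ (fun i x t => (‖(x - y) - EuclideanSpace.single i t‖ ^ μ)⁻¹) _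
    (c := 2 / (μ * (μ + 2 - n))) ?_ hδ hA ?_ ?_
  · rw [abs_of_nonneg (by positivity)]
    exact div_le_self zero_le_two hc1
  · intro i s hs
    have := hR i s hs
    simpa only [← sub_sub] using this
  · intro x hx
    have h1 := fun i => W_expansion G.ρpos (x - y) (G.lo x hx y hy) i μ
    choose a ha1 ha2 using h1
    refine ⟨a, ?_, fun i s hs => ?_⟩
    · have hp : 0 < ‖x - y‖ := G.ρpos.trans_le (G.lo x hx y hy)
      have : 2 * ∑ i, a i 2 = (μ * (μ + 2 - n)) * (‖x - y‖ ^ (μ + 2))⁻¹ := by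
        rw [Finset.mul_sum]
        simp only [ha1]
        rw [Finset.sum_sub_distrib, ← Finset.sum_mul, ← Finset.mul_sum, sum_sq_eq]
        simp
        field_simp
        ring
      rw [div_mul_eq_mul_div, this, mul_div_cancel_left₀]
      positivity
    · refine ha2 i (θ * s) q (M + 1) hq ?_
      rw [abs_of_nonneg (by positivity)]
      refine le_trans ?_ hθM
      have : (s : ℝ) ≤ M := by exact_mod_cast Nat.lt_succ_iff.1 (Finset.mem_range.1 hs)
      gcongr

/-- Iteration of the two differentiation steps with the same step length `θ`. Each step shrinks the
radius of admissible poles by `M θ` and multiplies the cost by `Λ`. -/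
lemma Rz_W_induct (G : Geo Ω₁ Ω₂ y₀ ρ D) {M J : ℕ} (hM : 2 ≤ M) {θ q : ℝ} (hθ : 0 < θ)
    (hθ1 : θ ≤ 1) (hq0 : 0 ≤ q) (hq : q ≤ 1 / 2)
    (hθM : θ * M ≤ q * (ρ / 8)) {δ A E Λ : ℝ} (hA : 0 ≤ A)
    (hΛ : Λ = 2 * n * ((M + 1) ^ (M + 1) / θ ^ 2))
    (hE : E = 4 * D * (2 / ρ) ^ (n + 1 + 2 * J) * q ^ (M + 1)) (hδ0 : 0 ≤ δ) (hδE : δ ≤ E)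
    (hK : ∀ j, ∀ y ∈ Metric.ball y₀ ρ,
      Rz Ω₁ Ω₂ (fun x => (x j - y j) / ‖x - y‖ ^ (n + 1)) δ A) :
    1 ≤ Λ ∧ ∀ j ≤ J, ∀ y ∈ Metric.ball y₀ (ρ - (j + 1) * (M * θ)),
      Rz Ω₁ Ω₂ (fun x => (‖x - y‖ ^ (n + 1 + 2 * j))⁻¹) ((2 * Λ) ^ (j + 1) * E)
        (Λ ^ (j + 1) * A) := by
  have hρ := G.ρpos
  have hρ1 := G.ρle
  have hD := G.Dge
  have hn2 : (2 : ℝ) ≤ n := by exact_mod_cast G.hn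
  have h2ρ : 1 ≤ 2 / ρ := by rw [le_div_iff₀ hρ]; linarith
  have hB : (1 : ℝ) ≤ (M + 1) ^ (M + 1) := one_le_pow₀ (by linarith [Nat.cast_nonneg (α := ℝ) M])
  have hθ2 : θ ^ 2 ≤ θ ^ 1 := pow_le_pow_of_le_one hθ.le hθ1 (by norm_num)
  have hΛ1 : 1 ≤ Λ := by
    rw [hΛ]
    have : 1 ≤ ((M : ℝ) + 1) ^ (M + 1) / θ ^ 2 := by
      rw [le_div_iff₀ (by positivity)]; nlinarith
    nlinarith
  have hΛ' : 2 * n * (((M : ℝ) + 1) ^ (M + 1) / θ ^ 1) ≤ Λ := by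
    rw [hΛ]; gcongr
  have hE0 : 0 ≤ E := hδ0.trans hδE
  have hsub : ∀ (j : ℕ), ∀ y ∈ Metric.ball y₀ (ρ - (j + 1) * (M * θ)),
      y ∈ Metric.ball y₀ (2 * ρ) ∧ ∀ (i : Fin n), ∀ s ∈ Finset.range (M + 1),
        y + EuclideanSpace.single i (θ * s) ∈ Metric.ball y₀ (ρ - j * (M * θ)) := by
    intro j y hy
    refine ⟨Metric.ball_subset_ball ?_ hy, fun i s hs => ?_⟩
    · have : 0 ≤ ((j : ℝ) + 1) * (M * θ) := by positivity
      linarith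
    · have hs' : (s : ℝ) ≤ M := by exact_mod_cast Nat.lt_succ_iff.1 (Finset.mem_range.1 hs)
      have h1 : dist (y + EuclideanSpace.single i (θ * s)) y = θ * s := by
        rw [dist_eq_norm, add_sub_cancel_left, PiLp.norm_single, Real.norm_of_nonneg (by positivity)]
      have h2 := dist_triangle (y + EuclideanSpace.single i (θ * s)) y y₀
      have h3 : θ * s ≤ θ * M := by gcongr
      rw [Metric.mem_ball] at hy ⊢
      linarith
  refine ⟨hΛ1, fun j => ?_⟩
  induction j with
  | zero =>
    intro _ y hy
    obtain ⟨h1, h2⟩ := hsub 0 y hy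
    have := Rz_step_K G (by omega : 1 ≤ M) hθ hq hθM hδ0 hA h1 fun i s hs => hK i _ (by
      simpa using h2 i s hs)
    refine Rz.mono this ?_ (by simp only [zero_add, pow_one] at hΛ' ⊢; gcongr)
    simp only [zero_add, pow_one] at hΛ' ⊢
    have h4 : 2 * (2 * D * (2 / ρ) ^ (n + 1)) * q ^ (M + 1) ≤ E := by
      rw [hE]
      calc _ = 4 * D * (2 / ρ) ^ (n + 1) * q ^ (M + 1) := by ring
        _ ≤ _ := by
            gcongr _ * ?_ * _
            refine pow_le_pow_right₀ h2ρ ?_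
            omega
    calc _ ≤ Λ * (E + E) := by gcongr
      _ = _ := by ring
  | succ j ih =>
    intro hj y hy
    obtain ⟨h1, h2⟩ := hsub (j + 1) y hy
    have := Rz_step_W G hM hθ hq hθM (by positivity) (by positivity) h1
      (by omega : n ≤ n + 1 + 2 * j) fun i s hs => ih (by omega) _ (by
        have := h2 i s hs
        push_cast at this
        exact this)
    refine Rz.mono this ?_ (le_of_eq (by rw [hΛ]; ring))
    rw [← hΛ]
    have h4 : 2 * (2 / ρ) ^ (n + 1 + 2 * j) * q ^ (M + 1) ≤ E := by
      rw [hE]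
      have h5 : (2 / ρ) ^ (n + 1 + 2 * j) ≤ (2 / ρ) ^ (n + 1 + 2 * J) :=
        pow_le_pow_right₀ h2ρ (by omega)
      have h6 : 2 ≤ 4 * D := by linarith
      gcongr
    have h5 : 1 ≤ (2 * Λ) ^ (j + 1) := one_le_pow₀ (by linarith)
    calc _ ≤ Λ * ((2 * Λ) ^ (j + 1) * E + (2 * Λ) ^ (j + 1) * E) := by
          have h6 := h4.trans (le_mul_of_one_le_left hE0 h5)
          gcongr
      _ = _ := by ring

set_option maxHeartbeats 1000000 in
/-- All powers `|x - y| ^ (-(n + 1 + 2 j))` with `j ≤ J`, to accuracy `exp (-Γ J)` for an arbitrary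
rate `Γ`. The step length is `exp (-C J³)`. -/
lemma Rz_W (G : Geo Ω₁ Ω₂ y₀ ρ D) {Γ : ℝ} (hΓ : 0 ≤ Γ) : ∃ C : ℝ, 0 ≤ C ∧ ∀ J : ℕ, 1 ≤ J →
    ∀ j ≤ J, ∀ y ∈ Metric.ball y₀ (ρ / 2),
      Rz Ω₁ Ω₂ (fun x => (‖x - y‖ ^ (n + 1 + 2 * j))⁻¹) (Real.exp (-(Γ * J)))
        (Real.exp (C * J ^ 4)) := by
  have hρ := G.ρpos
  have hρ1 := G.ρle
  have hD := G.Dge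
  have hn2 : (2 : ℝ) ≤ n := by exact_mod_cast G.hn
  have h2ρ : 1 ≤ 2 / ρ := by rw [le_div_iff₀ hρ]; linarith
  obtain ⟨L, hL, hK⟩ := Rz_kernel G
  have hxe : ∀ x : ℝ, x ≤ Real.exp x := fun x => by linarith [Real.add_one_le_exp x]
  obtain ⟨b, hb1, hbn, hbD, hbρ, hbL⟩ : ∃ b : ℝ, 1 ≤ b ∧ 4 * n ≤ Real.exp b ∧ 4 * D ≤ Real.exp b ∧
      16 / ρ ≤ Real.exp b ∧ L ≤ Real.exp b := by
    have h16 : 0 ≤ 16 / ρ := by positivity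
    refine ⟨4 * n + 4 * D + 16 / ρ + L, by linarith, ?_, ?_, ?_, ?_⟩ <;>
      refine le_trans ?_ (hxe _) <;> linarith
  set Ct := 2 * (b + 49) + b * (n + 4) + 7 * (b + 6) + Γ with hCt
  have hbn0 : 0 ≤ b * (n + 4) := by positivity
  have hCt0 : 0 ≤ Ct := by positivity
  refine ⟨2 * (b + 49 + 2 * Ct) + (n + 1) * b + n * b + 7 * n * Ct, by positivity,
    fun J hJ j hj y hy => ?_⟩
  have hJ1 : (1 : ℝ) ≤ J := by exact_mod_cast hJ
  obtain ⟨x, hx⟩ : ∃ x : ℝ, (J : ℝ) = x := ⟨_, rfl⟩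
  rw [hx] at hJ1 ⊢
  have hx2 : x ≤ x ^ 2 := by nlinarith
  have hx23 : x ^ 2 ≤ x ^ 3 := by nlinarith
  have hx34 : x ^ 3 ≤ x ^ 4 := by nlinarith [pow_pos (by linarith : 0 < x) 3]
  -- With M = 2 J + 4 the interpolation error q ^ (M + 1) is of order θ ^ (2 J + 5), which beats the
  -- amplification Λ ^ (J + 1) of order θ ^ (-2 (J + 1)).
  set M := 2 * J + 4 with hM
  have hMr : (M : ℝ) = 2 * x + 4 := by rw [hM]; push_cast; rw [hx]
  set t := Ct * x ^ 3 with ht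
  have ht0 : 0 ≤ t := by positivity
  set θ := Real.exp (-t) with hθ
  have hθ0 : 0 < θ := Real.exp_pos _
  have hθ1 : θ ≤ 1 := Real.exp_le_one_iff.2 (by linarith)
  set q := 8 * θ * M / ρ with hq
  have hq0 : 0 ≤ q := by positivity
  have hMe : (M : ℝ) ≤ Real.exp (6 * x) := le_trans (by linarith) (hxe _)
  have hM1e : (M : ℝ) + 1 ≤ Real.exp (7 * x) := le_trans (by linarith) (hxe _)
  -- All poles used in the J + 1 differentiation steps stay in B(y₀, ρ).
  have hsmall : (x + 1) * (M * θ) * (16 / ρ) ≤ 1 := by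
    calc _ ≤ Real.exp (2 * x) * (Real.exp (6 * x) * Real.exp (-t)) * Real.exp b := by
          gcongr
          exact le_trans (by linarith) (hxe _)
      _ = Real.exp (2 * x + (6 * x - t) + b) := by simp only [← Real.exp_add]; ring_nf
      _ ≤ 1 := by
          rw [Real.exp_le_one_iff, ht, hCt]
          nlinarith [mul_nonneg hbn0 (by positivity : 0 ≤ x ^ 3),
            mul_nonneg hΓ (by positivity : 0 ≤ x ^ 3),
            mul_le_mul_of_nonneg_left (hx2.trans hx23) (by linarith : 0 ≤ b)]
  have hsmall2 : (x + 1) * (M * θ) ≤ ρ / 16 := by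
    rw [mul_div_assoc', div_le_one hρ] at hsmall
    linarith
  have hMθ : M * θ ≤ ρ / 16 := by
    refine le_trans ?_ hsmall2
    have : 0 ≤ M * θ := by positivity
    exact le_mul_of_one_le_left this (by linarith)
  have hq2 : q ≤ 1 / 2 := by
    rw [hq, div_le_iff₀ hρ]; linarith
  have hqe : q ≤ Real.exp (b + 6 * x - t) := by
    calc q = (8 / ρ) * M * θ := by rw [hq]; ring
      _ ≤ Real.exp b * Real.exp (6 * x) * Real.exp (-t) := by
          gcongr
          refine le_trans ?_ hbρ
          gcongr; norm_num
      _ = _ := by simp only [← Real.exp_add]; ring_nf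
  set E := 4 * D * (2 / ρ) ^ (n + 1 + 2 * J) * q ^ (M + 1) with hE
  set Λ := 2 * n * (((M : ℝ) + 1) ^ (M + 1) / θ ^ 2) with hΛ
  have hq_pos : 0 < q := by rw [hq]; positivity
  have hE_pos : 0 < E := by positivity
  have hBe : ((M : ℝ) + 1) ^ (M + 1) ≤ Real.exp (49 * x ^ 2) := by
    calc _ ≤ Real.exp (7 * x) ^ (M + 1) := by gcongr
      _ = Real.exp ((2 * x + 5) * (7 * x)) := by
          rw [← Real.exp_nat_mul]; push_cast; rw [hMr]; try rw [hx]
          try ring_nf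
      _ ≤ _ := by
          rw [Real.exp_le_exp]; nlinarith only [hJ1, hx2]
  have hθinv : (θ ^ 2)⁻¹ = Real.exp (2 * t) := by
    rw [hθ, ← Real.exp_nat_mul, ← Real.exp_neg]; push_cast; ring_nf
  have hΛe : 2 * Λ ≤ Real.exp (b + 49 * x ^ 2 + 2 * t) := by
    calc 2 * Λ = (4 * n) * ((M : ℝ) + 1) ^ (M + 1) * (θ ^ 2)⁻¹ := by rw [hΛ]; ring
      _ ≤ Real.exp b * Real.exp (49 * x ^ 2) * Real.exp (2 * t) := by
          rw [hθinv]; gcongr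
      _ = _ := by simp only [← Real.exp_add]
  have hEe : E ≤ Real.exp (b * (n + 2 + 2 * x) + (2 * x + 5) * (b + 6 * x - t)) := by
    calc E ≤ Real.exp b * Real.exp b ^ (n + 1 + 2 * J) * Real.exp (b + 6 * x - t) ^ (M + 1) := by
          rw [hE]; gcongr
          refine le_trans ?_ hbρ
          gcongr; norm_num
      _ = _ := by
          rw [← Real.exp_nat_mul, ← Real.exp_nat_mul, ← Real.exp_add, ← Real.exp_add]
          push_cast; rw [hMr]; try rw [hx]
          try ring_nf
  have hΛ0 : 0 ≤ Λ := by positivity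
  have htot : (2 * Λ) ^ (J + 1) * E ≤ Real.exp (-(Γ * x)) := by
    calc _ ≤ Real.exp (b + 49 * x ^ 2 + 2 * t) ^ (J + 1) *
          Real.exp (b * (n + 2 + 2 * x) + (2 * x + 5) * (b + 6 * x - t)) := by gcongr
      _ = Real.exp ((x + 1) * (b + 49 * x ^ 2 + 2 * t) +
          (b * (n + 2 + 2 * x) + (2 * x + 5) * (b + 6 * x - t))) := by
          rw [← Real.exp_nat_mul, ← Real.exp_add]; push_cast; rw [hx]
      _ ≤ _ := by
          rw [Real.exp_le_exp]
          have e1 : (x + 1) * (b + 49 * x ^ 2) ≤ 2 * (b + 49) * x ^ 3 := by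
            calc _ ≤ (2 * x) * ((b + 49) * x ^ 2) := by
                  gcongr
                  · linarith
                  · linarith [le_mul_of_one_le_right (by linarith : 0 ≤ b) (hJ1.trans hx2)]
              _ = _ := by ring
          have e2 : b * (n + 2 + 2 * x) ≤ b * (n + 4) * x ^ 3 := by
            have : n + 2 + 2 * x ≤ (n + 4) * x ^ 3 := by
              have : (n + 2) * 1 ≤ (n + 2) * x ^ 3 := by gcongr; linarith
              linarith
            calc _ ≤ b * ((n + 4) * x ^ 3) := by gcongr
              _ = _ := by ring
          have e3 : (2 * x + 5) * (b + 6 * x) ≤ 7 * (b + 6) * x ^ 3 := by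
            calc _ ≤ (7 * x) * ((b + 6) * x ^ 2) := by
                  gcongr
                  · linarith
                  · linarith [le_mul_of_one_le_right (by linarith : 0 ≤ b) (hJ1.trans hx2)]
              _ = _ := by ring
          have e4 : Γ * x ≤ Γ * x ^ 3 := by gcongr; linarith
          have e5 : 3 * t = 3 * Ct * x ^ 3 := by rw [ht]; ring
          have e6 : Ct * x ^ 3 = 2 * (b + 49) * x ^ 3 + b * (n + 4) * x ^ 3 + 7 * (b + 6) * x ^ 3 +
            Γ * x ^ 3 := by rw [hCt]; ring
          have e7 : (x + 1) * (b + 49 * x ^ 2 + 2 * t) +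
              (b * (n + 2 + 2 * x) + (2 * x + 5) * (b + 6 * x - t)) =
              (x + 1) * (b + 49 * x ^ 2) + b * (n + 2 + 2 * x) + (2 * x + 5) * (b + 6 * x) -
              3 * t := by ring
          rw [e7]
          linarith
  have h2Λ1 : 1 ≤ 2 * Λ := by
    have hB : (1 : ℝ) ≤ (M + 1) ^ (M + 1) := one_le_pow₀ (by linarith [Nat.cast_nonneg (α := ℝ) M])
    have : 1 ≤ ((M : ℝ) + 1) ^ (M + 1) / θ ^ 2 := by
      rw [le_div_iff₀ (by positivity)]; linarith [pow_le_one₀ hθ0.le hθ1 (n := 2)]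
    rw [hΛ]
    nlinarith only [this, hn2]
  have hE1 : E ≤ 1 := by
    have h1 : 1 ≤ (2 * Λ) ^ (J + 1) := one_le_pow₀ h2Λ1
    have h2 : Real.exp (-(Γ * x)) ≤ 1 := by
      rw [Real.exp_le_one_iff]
      have : 0 ≤ Γ * x := by positivity
      linarith
    exact (le_mul_of_one_le_left hE_pos.le h1).trans (htot.trans h2)
  have hL0 : 0 < L := by linarith
  -- The averaging radius makes the error L τ of the kernels at most E.
  set τ := ρ * E / L with hτ
  have hτ0 : 0 < τ := by positivity
  have hτρ : τ ≤ ρ := by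
    rw [hτ, div_le_iff₀ hL0]; exact mul_le_mul_of_nonneg_left (hE1.trans hL) hρ.le
  obtain ⟨hΛ1, key⟩ := Rz_W_induct G (M := M) (J := J) (by omega) hθ0 hθ1 hq0 hq2
    (by rw [hq]; field_simp; linarith) (A := L / τ ^ n) (δ := L * τ) (by positivity) hΛ hE
    (by positivity) (by rw [hτ]; field_simp; exact hρ1) fun j y hy => hK j τ hτ0 hτρ y hy
  have hjx : (j : ℝ) ≤ x := by rw [← hx]; exact_mod_cast hj
  clear_value τ Λ E q θ t Ct
  refine Rz.mono (key j hj y (Metric.ball_subset_ball ?_ hy)) (le_trans ?_ htot) ?_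
  · have : ((j : ℝ) + 1) * (M * θ) ≤ (x + 1) * (M * θ) := by gcongr
    linarith
  · gcongr
  · have hEinv : E⁻¹ ≤ Real.exp ((2 * x + 5) * t) := by
      have h1 : θ ^ (M + 1) ≤ E := by
        have h2 : θ ≤ q := by
          rw [hq, le_div_iff₀ hρ]
          have h8 : (1 : ℝ) ≤ 8 * M := by rw [hMr]; linarith
          calc θ * ρ ≤ θ * (8 * M) := by gcongr; linarith
            _ = _ := by ring
        have h3 : 1 ≤ (2 / ρ) ^ (n + 1 + 2 * J) := one_le_pow₀ h2ρ
        have h4 : 1 ≤ 4 * D * (2 / ρ) ^ (n + 1 + 2 * J) :=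
          one_le_mul_of_one_le_of_one_le (by linarith) h3
        calc _ ≤ q ^ (M + 1) := by gcongr
          _ ≤ _ := by
            rw [hE]; exact le_mul_of_one_le_left (by positivity) h4
      rw [inv_le_comm₀ hE_pos (Real.exp_pos _), ← Real.exp_neg]
      refine le_trans (le_of_eq ?_) h1
      rw [hθ, ← Real.exp_nat_mul]; push_cast; rw [hMr]; ring_nf
    have hτinv : τ⁻¹ ≤ Real.exp (2 * b + (2 * x + 5) * t) := by
      calc τ⁻¹ = L * (1 / ρ) * E⁻¹ := by rw [hτ]; field_simp
        _ ≤ Real.exp b * Real.exp b * Real.exp ((2 * x + 5) * t) := by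
            gcongr
            refine le_trans ?_ hbρ
            gcongr; norm_num
        _ = _ := by simp only [← Real.exp_add]; ring_nf
    calc Λ ^ (j + 1) * (L / τ ^ n) ≤ (2 * Λ) ^ (J + 1) * (L * (τ⁻¹) ^ n) := by
          rw [inv_pow, ← div_eq_mul_inv]
          gcongr ?_ * _
          calc Λ ^ (j + 1) ≤ Λ ^ (J + 1) := by gcongr
            _ ≤ _ := by gcongr; linarith
      _ ≤ Real.exp (b + 49 * x ^ 2 + 2 * t) ^ (J + 1) *
          (Real.exp b * Real.exp (2 * b + (2 * x + 5) * t) ^ n) := by gcongr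
      _ = Real.exp ((x + 1) * (b + 49 * x ^ 2 + 2 * t) + (b + n * (2 * b + (2 * x + 5) * t))) := by
          rw [← Real.exp_nat_mul, ← Real.exp_nat_mul, ← Real.exp_add, ← Real.exp_add]; push_cast
          rw [hx]
      _ ≤ _ := by
          rw [Real.exp_le_exp]
          have x1 : x + 1 ≤ 2 * x := by linarith
          have x3 : 1 ≤ x ^ 3 := by linarith
          have x4 : 1 ≤ x ^ 4 := by linarith
          have e1 : (x + 1) * (b + 49 * x ^ 2 + 2 * t) ≤ (2 * x) * ((b + 49 + 2 * Ct) * x ^ 3) := by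
            have e0 : b + 49 * x ^ 2 ≤ (b + 49) * x ^ 3 := by
              have := le_mul_of_one_le_right (by linarith : 0 ≤ b) x3
              linarith
            gcongr
            rw [ht]
            linarith
          have e2 : b + n * (2 * b) ≤ ((n + 1) * b + n * b) * x ^ 4 := by
            calc b + n * (2 * b) = ((n + 1) * b + n * b) * 1 := by ring
              _ ≤ _ := by gcongr
          have e3 : n * ((2 * x + 5) * t) ≤ n * ((7 * x) * (Ct * x ^ 3)) := by
            rw [ht]
            gcongr
            linarith
          linarith

end

/-! ### Powers of a quadratic centred near `y₀` -/

section

variable {n : ℕ} {Ω₁ Ω₂ : Set (EuclideanSpace ℝ (Fin n))} {y₀ : EuclideanSpace ℝ (Fin n)} {ρ D : ℝ}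

/-- Taylor series of `(1 - u) ^ c (1 - κ / (1 - u)) ^ N` at `0`: it converges geometrically on
`[0, u1]`, and its coefficients grow at most exponentially in `N`, uniformly in `κ ≤ K`. -/
lemma geo_series {c u1 K κ : ℝ} (hc : c ≤ 0) (hu0 : 0 ≤ u1) (hu1 : u1 < 1) (hκ0 : 0 ≤ κ)
    (hκ : κ ≤ K) (N : ℕ) : ∃ a : ℕ → ℝ,
      (∀ k, |a k| ≤ ((1 - u1) / 4) ^ c * (1 + K / ((1 - u1) / 4)) ^ N / ((1 + u1) / 2) ^ k) ∧
      ∀ u, 0 ≤ u → u ≤ u1 → ∀ m : ℕ,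
        |(1 - u) ^ c * (1 - κ / (1 - u)) ^ N - ∑ k ∈ Finset.range m, a k * u ^ k| ≤
          ((1 - u1) / 4) ^ c * (1 + K / ((1 - u1) / 4)) ^ N * (u1 / ((1 + u1) / 2)) ^ m /
            (1 - u1 / ((1 + u1) / 2)) := by
  set d := (1 - u1) / 4 with hd
  have hd0 : 0 < d := by rw [hd]; linarith
  set g : ℂ → ℂ := fun z => (1 - z) ^ (c : ℂ) * (1 - κ / (1 - z)) ^ N with hg
  have hre : ∀ z ∈ Metric.ball (0 : ℂ) ((3 + u1) / 4), d ≤ (1 - z).re := by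
    intro z hz
    rw [mem_ball_zero_iff] at hz
    have := (Complex.abs_re_le_norm z)
    have := (abs_le.1 this).2
    simp only [Complex.sub_re, Complex.one_re]
    rw [hd]; linarith
  have h := taylor_rem g ((1 + u1) / 2) ((3 + u1) / 4) (d ^ c * (1 + K / d) ^ N) (by linarith)
    (by linarith) (by
      intro z hz
      have h1 := hre z hz
      have h2 : 1 - z ≠ 0 := fun h => by rw [h] at h1; simp at h1; linarith
      refine DifferentiableAt.differentiableWithinAt ?_
      have h3 : DifferentiableAt ℂ (fun z : ℂ => 1 - z) z := by fun_prop
      exact (h3.cpow_const (Or.inl (by linarith))).mul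
        (((h3.inv h2).const_mul (κ : ℂ)).const_sub 1 |>.pow N)) (by
      intro z hz
      have h1 := (hre z hz).trans (Complex.re_le_norm _)
      rw [hg]
      simp only [norm_mul, norm_pow]
      rw [Complex.norm_cpow_real]
      have h2 : ‖1 - z‖ ^ c ≤ d ^ c := Real.rpow_le_rpow_of_nonpos hd0 h1 hc
      have h4 : 0 ≤ K := hκ0.trans hκ
      have h3 : ‖(1 : ℂ) - κ / (1 - z)‖ ≤ 1 + K / d := by
        refine (norm_sub_le _ _).trans ?_
        rw [norm_one, norm_div, Complex.norm_real, Real.norm_of_nonneg hκ0]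
        gcongr
      gcongr)
  refine ⟨fun k => (iteratedDeriv k g 0 / (k.factorial : ℂ)).re, fun k =>
    (Complex.abs_re_le_norm _).trans (h.1 k), fun u h0 h1 m => ?_⟩
  have h2 := h.2 u (u1 / ((1 + u1) / 2)) m (by rw [div_lt_one] <;> linarith) (by
    rw [div_mul_cancel₀ _ (by linarith), Complex.norm_real, Real.norm_of_nonneg h0]; exact h1)
  refine le_trans ?_ h2
  have e : (1 - u) ^ c * (1 - κ / (1 - u)) ^ N -
      ∑ k ∈ Finset.range m, (iteratedDeriv k g 0 / (k.factorial : ℂ)).re * u ^ k =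
      (g u - ∑ k ∈ Finset.range m, iteratedDeriv k g 0 / (k.factorial : ℂ) * (u : ℂ) ^ k).re := by
    have e1 : g u = (((1 - u) ^ c * (1 - κ / (1 - u)) ^ N : ℝ) : ℂ) := by
      rw [hg]
      push_cast
      rw [Complex.ofReal_cpow (by linarith)]
      push_cast; rfl
    rw [Complex.sub_re, e1, Complex.ofReal_re, Complex.re_sum]
    congr 1
    refine Finset.sum_congr rfl fun k _ => ?_
    rw [← Complex.ofReal_pow, Complex.re_mul_ofReal]
  rw [e]
  exact Complex.abs_re_le_norm _

/-- With `u = 1 - ρ² / r²`, the polynomial `(1 - κ r²) ^ N` is `(ρ / r) ^ (n + 1)` times the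
function expanded in `geo_series`. -/
lemma near_identity {r : ℝ} (hρ : 0 < ρ) (hr : 0 < r) (κ : ℝ) (N : ℕ) :
    (1 - κ * r ^ 2) ^ N = (ρ / r) ^ (n + 1) * ((1 - (1 - ρ ^ 2 / r ^ 2)) ^ (-((n : ℝ) + 1) / 2) *
      (1 - κ * ρ ^ 2 / (1 - (1 - ρ ^ 2 / r ^ 2))) ^ N) := by
  have h1 : (1 : ℝ) - (1 - ρ ^ 2 / r ^ 2) = (ρ / r) ^ (2 : ℝ) := by
    rw [Real.rpow_two]; ring
  have hp : 0 < ρ / r := by positivity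
  have h2 : κ * ρ ^ 2 / (ρ / r) ^ (2 : ℝ) = κ * r ^ 2 := by
    rw [Real.rpow_two]; field_simp
  rw [h1, h2, ← Real.rpow_mul hp.le, ← mul_assoc, ← Real.rpow_natCast (ρ / r) (n + 1),
    ← Real.rpow_add hp]
  have h3 : ((n + 1 : ℕ) : ℝ) + 2 * (-((n : ℝ) + 1) / 2) = 0 := by push_cast; ring
  rw [h3, Real.rpow_zero, one_mul]

/-- A power of `u = 1 - ρ² / r²`, multiplied by `(ρ / r) ^ (n + 1)`, is a combination of the powers
`r ^ (-(n + 1 + 2 j))`. -/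
lemma near_expand {r : ℝ} (hr : 0 < r) (a : ℝ) {k J : ℕ} (hk : k < J) :
    (ρ / r) ^ (n + 1) * (a * (1 - ρ ^ 2 / r ^ 2) ^ k) = ∑ j ∈ Finset.range J,
      (a * ρ ^ (n + 1) * (k.choose j) * (-ρ ^ 2) ^ j) * (r ^ (n + 1 + 2 * j))⁻¹ := by
  have h1 : (1 - ρ ^ 2 / r ^ 2) = -ρ ^ 2 / r ^ 2 + 1 := by ring
  rw [h1, add_pow, Finset.mul_sum, Finset.mul_sum]
  rw [← Finset.sum_subset (Finset.range_subset_range.2 (Nat.succ_le_of_lt hk))]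
  · refine Finset.sum_congr rfl fun j _ => ?_
    rw [div_pow, div_pow, pow_add r (n + 1) (2 * j), pow_mul r 2 j, one_pow]
    field_simp
  · intro j _ hj
    rw [Nat.choose_eq_zero_of_lt (by simpa using hj)]
    simp

set_option maxHeartbeats 1000000 in
/-- Powers of `1 - κ |x - y|²` with centre `y` close to `y₀`. -/
lemma Rz_near (G : Geo Ω₁ Ω₂ y₀ ρ D) (K : ℝ) : ∃ C : ℝ, 0 ≤ C ∧ ∀ m : ℕ, 1 ≤ m →
    ∀ N ≤ m, ∀ κ, 0 ≤ κ → κ ≤ K → ∀ y ∈ Metric.ball y₀ (ρ / 2),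
      Rz Ω₁ Ω₂ (fun x => (1 - κ * ‖x - y‖ ^ 2) ^ N) (Real.exp (-m)) (Real.exp (C * m ^ 4)) := by
  have hρ := G.ρpos
  have hρ1 := G.ρle
  have hD := G.Dge
  have hxe : ∀ x : ℝ, x ≤ Real.exp x := fun x => by linarith [Real.add_one_le_exp x]
  set u1 := 1 - ρ ^ 2 / D ^ 2 with hu1
  have hρD : ρ ^ 2 / D ^ 2 ≤ 1 := by
    rw [div_le_one (by positivity)]
    exact pow_le_pow_left₀ hρ.le (by linarith) 2
  have hu0 : 0 ≤ u1 := by linarith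
  have hu1' : u1 < 1 := by
    have : 0 < ρ ^ 2 / D ^ 2 := by positivity
    linarith
  set c : ℝ := -((n : ℝ) + 1) / 2 with hc
  have hc0 : c ≤ 0 := by
    rw [hc]
    have := Nat.cast_nonneg (α := ℝ) n
    linarith
  set q := u1 / ((1 + u1) / 2) with hq
  have hq0 : 0 ≤ q := by positivity
  have hq1 : q < 1 := by rw [hq, div_lt_one] <;> linarith
  set d := (1 - u1) / 4 with hd
  have hd0 : 0 < d := by rw [hd]; linarith
  obtain ⟨a, ha0, hab, had, haq⟩ : ∃ a : ℝ, 0 ≤ a ∧ 1 + |K| / d ≤ Real.exp a ∧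
      d ^ c ≤ Real.exp a ∧ 2 * (d ^ c / (1 - q)) ≤ Real.exp a := by
    have h1 : 0 ≤ d ^ c := by positivity
    have h2 : 0 ≤ |K| / d := by positivity
    have h3 : 0 ≤ d ^ c / (1 - q) := div_nonneg h1 (by linarith)
    refine ⟨1 + |K| / d + d ^ c + 2 * (d ^ c / (1 - q)), by linarith, ?_, ?_, ?_⟩ <;>
      refine le_trans ?_ (hxe _) <;> linarith
  -- k1 m terms of the series suffice: q ^ (k1 m) beats the bound exp (2 a m) on its coefficients.
  obtain ⟨k0, hk0⟩ := exists_pow_lt_of_lt_one (Real.exp_pos (-(2 * a + 1))) hq1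
  set k1 := k0 + 1 with hk1
  have hqk : q ^ k1 ≤ Real.exp (-(2 * a + 1)) := by
    rw [hk1, pow_succ]
    exact (mul_le_of_le_one_right (pow_nonneg hq0 _) hq1.le).trans hk0.le
  -- The rate Γ beats the total size exp ((2 a + 3) J) of the coefficients in the expansion.
  obtain ⟨C0, hC0, hW⟩ := Rz_W G (Γ := 2 * a + 6) (by linarith)
  refine ⟨(2 * a + 3) * k1 + C0 * k1 ^ 4, by positivity, fun m hm N hN κ hκ0 hκ y hy => ?_⟩
  have hm1 : (1 : ℝ) ≤ m := by exact_mod_cast hm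
  have hk1' : (1 : ℝ) ≤ k1 := by rw [hk1]; push_cast; linarith [Nat.cast_nonneg (α := ℝ) k0]
  have hκρ : κ * ρ ^ 2 ≤ |K| := by
    calc κ * ρ ^ 2 ≤ κ * 1 := by gcongr; exact pow_le_one₀ hρ.le hρ1
      _ ≤ |K| := by rw [mul_one]; exact hκ.trans (le_abs_self _)
  obtain ⟨ak, hak, happ⟩ := geo_series (u1 := u1) (K := |K|) hc0 hu0 hu1'
    (by positivity : 0 ≤ κ * ρ ^ 2) hκρ N
  rw [← hd, ← hq] at happ
  rw [← hd] at hak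
  set Q := d ^ c * (1 + |K| / d) ^ N with hQ
  have hQ0 : 0 ≤ Q := by positivity
  have hb1 : 1 ≤ 1 + |K| / d := by
    have : 0 ≤ |K| / d := by positivity
    linarith
  have hbN : (1 + |K| / d) ^ N ≤ Real.exp (a * m) := by
    calc _ ≤ (1 + |K| / d) ^ m := pow_le_pow_right₀ hb1 hN
      _ ≤ Real.exp a ^ m := by gcongr
      _ = _ := by rw [← Real.exp_nat_mul, mul_comm]
  have hQe : Q ≤ Real.exp (2 * a * m) := by
    calc Q ≤ Real.exp a * Real.exp (a * m) := by rw [hQ]; gcongr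
      _ = Real.exp (a + a * m) := by rw [Real.exp_add]
      _ ≤ _ := by rw [Real.exp_le_exp]; nlinarith only [hm1, ha0]
  set J := k1 * m with hJ
  have hJ1 : 1 ≤ J := Nat.mul_pos (by omega) hm
  have hJr : (J : ℝ) = k1 * m := by rw [hJ]; push_cast; rfl
  have hmJ : (m : ℝ) ≤ J := by rw [hJr]; exact le_mul_of_one_le_left (by linarith) hk1'
  set S := J * (Q * 4 ^ J) with hS
  have h4 : (4 : ℝ) ≤ Real.exp 2 := by
    have := Real.add_one_le_exp 1
    calc (4 : ℝ) = 2 ^ 2 := by norm_num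
      _ ≤ Real.exp 1 ^ 2 := by gcongr; linarith
      _ = _ := by rw [← Real.exp_nat_mul]; norm_num
  have hSe : S ≤ Real.exp ((2 * a + 3) * J) := by
    calc S ≤ Real.exp J * (Real.exp (2 * a * m) * Real.exp 2 ^ J) := by
          rw [hS]; gcongr; exact hxe _
      _ = Real.exp (J + (2 * a * m + J * 2)) := by
          rw [← Real.exp_nat_mul, ← Real.exp_add, ← Real.exp_add]
      _ ≤ _ := by
          rw [Real.exp_le_exp]
          have : 2 * a * m ≤ 2 * a * J := by gcongr
          linarith
  have hm2 : 2 * Real.exp (-(2 * m : ℝ)) ≤ Real.exp (-(m : ℝ)) := by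
    have h2 : (2 : ℝ) ≤ Real.exp m := by linarith [Real.add_one_le_exp (m : ℝ)]
    calc 2 * Real.exp (-(2 * m : ℝ)) ≤ Real.exp m * Real.exp (-(2 * m : ℝ)) := by gcongr
      _ = _ := by rw [← Real.exp_add]; ring_nf
  have hS0 : 0 ≤ S := by positivity
  have hcomb := Rz_comb G (Finset.range J ×ˢ Finset.range J)
    (fun p => ak p.1 * ρ ^ (n + 1) * (p.1.choose p.2) * (-ρ ^ 2) ^ p.2)
    (fun p x => (‖x - y‖ ^ (n + 1 + 2 * p.2))⁻¹)
    (fun x => (1 - κ * ‖x - y‖ ^ 2) ^ N) (δ := Real.exp (-((2 * a + 6) * J)))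
    (A := Real.exp (C0 * J ^ 4)) (S := S) (η := Q * q ^ J / (1 - q)) ?_ ?_
    (Real.exp_pos _).le (Real.exp_pos _).le ?_
  · refine hcomb.mono ?_ ?_
    · have e1 : S * Real.exp (-((2 * a + 6) * J)) ≤ Real.exp (-(2 * m : ℝ)) := by
        calc _ ≤ Real.exp ((2 * a + 3) * J) * Real.exp (-((2 * a + 6) * J)) := by gcongr
          _ = Real.exp (-(3 * J : ℝ)) := by rw [← Real.exp_add]; ring_nf
          _ ≤ _ := by rw [Real.exp_le_exp]; linarith
      have e2 : 2 * (Q * q ^ J / (1 - q)) ≤ Real.exp (-(m : ℝ)) := by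
        have h1q : 0 < 1 - q := by linarith
        calc _ = 2 * (d ^ c / (1 - q)) * (1 + |K| / d) ^ N * (q ^ k1) ^ m := by
              rw [hQ, hJ, pow_mul]; ring
          _ ≤ Real.exp a * Real.exp (a * m) * Real.exp (-(2 * a + 1)) ^ m := by gcongr
          _ = Real.exp (a + a * m + m * (-(2 * a + 1))) := by
              rw [← Real.exp_nat_mul, ← Real.exp_add, ← Real.exp_add]
          _ ≤ _ := by
              rw [Real.exp_le_exp]
              have := mul_le_mul_of_nonneg_left hm1 ha0
              linarith
      linarith
    · calc S * Real.exp (C0 * J ^ 4) ≤ Real.exp ((2 * a + 3) * J) * Real.exp (C0 * J ^ 4) := by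
            gcongr
        _ = Real.exp ((2 * a + 3) * J + C0 * J ^ 4) := by rw [Real.exp_add]
        _ ≤ _ := by
            rw [Real.exp_le_exp, hJr]
            have h5 : (m : ℝ) ≤ m ^ 4 := le_self_pow₀ hm1 (by norm_num)
            have h6 : (2 * a + 3) * (k1 * m) ≤ (2 * a + 3) * (k1 * (m : ℝ) ^ 4) := by gcongr
            linarith
  · rintro ⟨k, j⟩ hp
    have hj : j < J := by simpa using (Finset.mem_product.1 hp).2
    exact hW J hJ1 j hj.le y hy
  · rw [Finset.sum_product]
    have : ∀ k ∈ Finset.range J, ∑ j ∈ Finset.range J,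
        |ak k * ρ ^ (n + 1) * (k.choose j) * (-ρ ^ 2) ^ j| ≤ Q * 4 ^ J := by
      intro k hk
      rw [Finset.mem_range] at hk
      calc _ ≤ ∑ j ∈ Finset.range J, |ak k| * (k.choose j) := by
            refine Finset.sum_le_sum fun j _ => ?_
            have i0 : |(-ρ ^ 2) ^ j| = (ρ ^ 2) ^ j := by
              rw [abs_pow, abs_neg, abs_of_nonneg (by positivity : 0 ≤ ρ ^ 2)]
            rw [abs_mul, abs_mul, abs_mul, i0, abs_of_nonneg (by positivity : 0 ≤ ρ ^ (n + 1)),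
              Nat.abs_cast]
            have i1 : ρ ^ (n + 1) ≤ 1 := pow_le_one₀ hρ.le hρ1
            have i2 : (ρ ^ 2) ^ j ≤ 1 := pow_le_one₀ (by positivity) (pow_le_one₀ hρ.le hρ1)
            calc |ak k| * ρ ^ (n + 1) * (k.choose j) * (ρ ^ 2) ^ j ≤
                |ak k| * 1 * (k.choose j) * 1 := by gcongr
              _ = _ := by ring
        _ = |ak k| * 2 ^ k := by
            rw [← Finset.mul_sum, ← Finset.sum_subset
              (Finset.range_subset_range.2 (Nat.succ_le_of_lt hk))]
            · congr 1
              exact_mod_cast Nat.sum_range_choose k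
            · intro j _ hj
              rw [Nat.choose_eq_zero_of_lt (by simpa using hj)]
              simp
        _ ≤ Q / ((1 + u1) / 2) ^ k * 2 ^ k := by gcongr; exact hak k
        _ ≤ Q / (1 / 2) ^ k * 2 ^ k := by gcongr; linarith
        _ = Q * 4 ^ k := by
            rw [div_mul_eq_mul_div, mul_div_assoc, ← div_pow]; norm_num
        _ ≤ Q * 4 ^ J := by gcongr; norm_num
    refine (Finset.sum_le_card_nsmul _ _ _ this).trans ?_
    rw [Finset.card_range, nsmul_eq_mul]
  · intro x hx
    have hy2 : y ∈ Metric.ball y₀ (2 * ρ) := Metric.ball_subset_ball (by linarith) hy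
    have hlo := G.lo x hx y hy2
    have hhi := G.hi x hx y hy2
    set r := ‖x - y‖ with hr
    have hr0 : 0 < r := by linarith
    rw [Finset.sum_product, near_identity (n := n) hρ hr0]
    dsimp only
    rw [← Finset.sum_congr rfl fun k hk => near_expand (n := n) (ρ := ρ) hr0 (ak k)
      (Finset.mem_range.1 hk), ← Finset.mul_sum, ← mul_sub, abs_mul]
    have i1 : |(ρ / r) ^ (n + 1)| ≤ 1 := by
      rw [abs_of_nonneg (by positivity)]
      exact pow_le_one₀ (by positivity) (by rw [div_le_one hr0]; exact hlo)
    refine (mul_le_of_le_one_left (abs_nonneg _) i1).trans ?_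
    refine happ (1 - ρ ^ 2 / r ^ 2) ?_ ?_ J
    · rw [sub_nonneg, div_le_one (by positivity)]
      gcongr
    · rw [hu1]
      gcongr

end

/-! ### Extrapolation of the centre -/

section

variable {n : ℕ} {Ω₁ Ω₂ : Set (EuclideanSpace ℝ (Fin n))} {y₀ : EuclideanSpace ℝ (Fin n)} {ρ D : ℝ}

set_option maxHeartbeats 1000000 in
/-- Powers of `1 - κ |x - w|²` with an arbitrary centre `w`: for fixed `x` the function is a
polynomial of degree `2 N` in the position of the centre on the line through `y₀` and `w`, and is
extrapolated from centres near `y₀`. -/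
lemma Rz_far (G : Geo Ω₁ Ω₂ y₀ ρ D) (K : ℝ) {D' : ℝ} (hD' : 0 ≤ D') : ∃ C : ℝ, 0 ≤ C ∧
    ∀ m : ℕ, 1 ≤ m → ∀ N ≤ m, ∀ κ, 0 ≤ κ → κ ≤ K → ∀ w, ‖w - y₀‖ ≤ D' →
      Rz Ω₁ Ω₂ (fun x => (1 - κ * ‖x - w‖ ^ 2) ^ N) (Real.exp (-m)) (Real.exp (C * m ^ 8)) := by
  have hρ := G.ρpos
  obtain ⟨C0, hC0, hnear⟩ := Rz_near G K
  set E := 4 * D' / ρ + 1 with hE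
  have hE1 : 1 ≤ E := by
    have : 0 ≤ 4 * D' / ρ := by positivity
    linarith
  obtain ⟨F, hF⟩ := exists_nat_gt (3 * (3 + E) + 1)
  -- The near approximations are used at precision exp (-F m²) to absorb the extrapolation weights,
  -- which are bounded by exp ((F - 1) m²); hence the exponent (m²) ^ 4 = m ^ 8.
  refine ⟨F + C0 * F ^ 4, by positivity, fun m hm N hN κ hκ0 hκ w hw => ?_⟩
  have hm1 : (1 : ℝ) ≤ m := by exact_mod_cast hm
  have hF1 : (1 : ℝ) ≤ F := by linarith
  have hmm : (m : ℝ) ≤ (m : ℝ) ^ 2 := le_self_pow₀ hm1 (by norm_num)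
  -- The centres y₀ + (i / T) (w - y₀), i ≤ 2 m, lie in B(y₀, ρ / 2); i = T gives the centre w.
  set T := m * E with hT
  have hT0 : 0 < T := by positivity
  obtain ⟨a, haS, hap⟩ := extrapolate (2 * m) T
  have hm' : m ≤ F * m ^ 2 := by
    have h1 : 1 ≤ F := by exact_mod_cast hF1
    nlinarith [Nat.mul_le_mul h1 (Nat.pow_le_pow_left hm 2)]
  have hS : ∑ i ∈ Finset.range (2 * m + 1), |a i| ≤ Real.exp ((F - 1) * (m : ℝ) ^ 2) := by
    have h1 : (1 : ℝ) + |T| + (2 * m : ℕ) ≤ Real.exp (m * (3 + E)) := by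
      rw [abs_of_pos hT0]
      push_cast
      have := Real.add_one_le_exp (m * (3 + E))
      rw [hT]; linarith
    have h2 : (1 : ℝ) ≤ 1 + |T| + (2 * m : ℕ) := by
      have := abs_nonneg T
      have := Nat.cast_nonneg (α := ℝ) (2 * m)
      linarith
    calc _ ≤ (((2 * m : ℕ) : ℝ) + 1) * (1 + |T| + (2 * m : ℕ)) ^ (2 * m) := haS
      _ ≤ (1 + |T| + (2 * m : ℕ)) * (1 + |T| + (2 * m : ℕ)) ^ (2 * m) :=
          mul_le_mul_of_nonneg_right (by linarith [abs_nonneg T]) (by positivity)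
      _ = (1 + |T| + (2 * m : ℕ)) ^ (2 * m + 1) := by rw [pow_succ]; ring
      _ ≤ Real.exp (m * (3 + E)) ^ (2 * m + 1) := by gcongr
      _ = Real.exp (m * (3 + E) * (2 * m + 1)) := by
          rw [← Real.exp_nat_mul]; push_cast; ring_nf
      _ ≤ Real.exp ((3 * (3 + E)) * (m : ℝ) ^ 2) := by
          rw [Real.exp_le_exp]
          have := mul_le_mul_of_nonneg_left hmm (by linarith : 0 ≤ 3 + E)
          linarith
      _ ≤ _ := by
          rw [Real.exp_le_exp]
          gcongr
          linarith
  have key := Rz_comb G (Finset.range (2 * m + 1)) a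
    (fun i x => (1 - κ * ‖x - (y₀ + (i / T : ℝ) • (w - y₀))‖ ^ 2) ^ N)
    (fun x => (1 - κ * ‖x - w‖ ^ 2) ^ N) (δ := Real.exp (-(F * m ^ 2 : ℕ)))
    (A := Real.exp (C0 * (F * m ^ 2 : ℕ) ^ 4)) (S := Real.exp ((F - 1) * (m : ℝ) ^ 2)) (η := 0)
    ?_ hS (Real.exp_pos _).le (Real.exp_pos _).le ?_
  · refine key.mono ?_ ?_
    · rw [add_zero, ← Real.exp_add, Real.exp_le_exp]
      push_cast
      linarith
    · rw [← Real.exp_add, Real.exp_le_exp]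
      push_cast
      have h8 : (m : ℝ) ^ 2 ≤ (m : ℝ) ^ 8 := pow_le_pow_right₀ hm1 (by norm_num)
      have : ((F : ℝ) - 1) * (m : ℝ) ^ 2 ≤ F * (m : ℝ) ^ 8 := by
        gcongr
        linarith
      nlinarith only [this]
  · intro i hi
    refine hnear (F * m ^ 2) (by omega) N (by omega) κ hκ0 hκ _ ?_
    rw [mem_ball_iff_norm, add_sub_cancel_left, norm_smul, Real.norm_of_nonneg (by positivity)]
    have hi' : (i : ℝ) ≤ 2 * m := by
      rw [Finset.mem_range] at hi
      exact_mod_cast Nat.lt_succ_iff.1 hi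
    calc (i : ℝ) / T * ‖w - y₀‖ ≤ 2 * m / T * D' := by gcongr
      _ = 2 * D' / E := by rw [hT]; field_simp
      _ < ρ / 2 := by
          rw [div_lt_iff₀ (by linarith), hE]
          field_simp
          linarith
  · intro x hx
    set u := x - y₀ with hu
    set v := w - y₀ with hv
    set p : Polynomial ℝ := (1 - Polynomial.C κ * (Polynomial.C (‖u‖ ^ 2) -
      Polynomial.C (2 * inner ℝ u v / T) * Polynomial.X +
      Polynomial.C (‖v‖ ^ 2 / T ^ 2) * Polynomial.X ^ 2)) ^ N with hp
    have hdeg : p.natDegree ≤ 2 * m := by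
      rw [hp]
      refine Polynomial.natDegree_pow_le.trans ?_
      have : (1 - Polynomial.C κ * (Polynomial.C (‖u‖ ^ 2) -
        Polynomial.C (2 * inner ℝ u v / T) * Polynomial.X +
        Polynomial.C (‖v‖ ^ 2 / T ^ 2) * Polynomial.X ^ 2)).natDegree ≤ 2 := by
        compute_degree
      calc _ ≤ N * 2 := Nat.mul_le_mul_left _ this
        _ ≤ _ := by omega
    have hev : ∀ s : ℝ, p.eval s = (1 - κ * ‖u - (s / T) • v‖ ^ 2) ^ N := by
      intro s
      rw [hp, norm_sub_sq_real u ((s / T) • v), norm_smul, inner_smul_right, Real.norm_eq_abs,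
        mul_pow |s / T|, sq_abs]
      simp only [Polynomial.eval_pow, Polynomial.eval_sub, Polynomial.eval_one,
        Polynomial.eval_mul, Polynomial.eval_C, Polynomial.eval_add, Polynomial.eval_X]
      congr 3
      field_simp
    have h1 := hap p hdeg
    have h2 : x - w = u - (T / T) • v := by
      rw [div_self hT0.ne', one_smul, hu, hv]; abel
    rw [h2, ← hev, ← h1]
    refine (abs_eq_zero.2 ?_).le
    rw [sub_eq_zero]
    refine Finset.sum_congr rfl fun i _ => ?_
    rw [hev, hu, sub_sub]

end

/-! ### Superposition -/

section

variable {n : ℕ} {Ω₁ Ω₂ : Set (EuclideanSpace ℝ (Fin n))} {y₀ : EuclideanSpace ℝ (Fin n)} {ρ D : ℝ}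

/-- A bounded open set splits into finitely many measurable pieces of small diameter, each with a
marked point of the set near all of its points. -/
lemma exists_partition {Ω : Set (EuclideanSpace ℝ (Fin n))} (ho : IsOpen Ω)
    (hb : Bornology.IsBounded Ω) (hne : Ω.Nonempty) {γ : ℝ} (hγ : 0 < γ) :
    ∃ (N : ℕ) (P : ℕ → Set (EuclideanSpace ℝ (Fin n))) (e : ℕ → EuclideanSpace ℝ (Fin n)),
      (∀ i, MeasurableSet (P i)) ∧ Pairwise (Function.onFun Disjoint P) ∧ (∀ i, P i ⊆ Ω) ∧
      (∀ i, e i ∈ Ω) ∧ (⋃ i ∈ Finset.range (N + 1), P i) = Ω ∧ ∀ i, ∀ w ∈ P i, dist w (e i) < γ := by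
  obtain ⟨x0, hx0⟩ := hne
  have htb : TotallyBounded Ω := hb.isCompact_closure.totallyBounded.subset subset_closure
  obtain ⟨t, htΩ, htf, ht⟩ := Metric.finite_approx_of_totallyBounded htb γ hγ
  set l := htf.toFinset.toList with hl
  have hlt : ∀ y, y ∈ l ↔ y ∈ t := fun y => by
    rw [hl, Finset.mem_toList, Set.Finite.mem_toFinset]
  set e : ℕ → EuclideanSpace ℝ (Fin n) := fun i => l.getD i x0 with he
  set ind := SimpleFunc.nearestPtInd e l.length with hind
  have heΩ : ∀ i, e i ∈ Ω := by
    intro i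
    simp only [he, List.getD_eq_getElem?_getD]
    by_cases hi : i < l.length
    · rw [List.getElem?_eq_getElem hi, Option.getD_some]
      exact htΩ ((hlt _).1 (List.getElem_mem hi))
    · rw [List.getElem?_eq_none (by omega), Option.getD_none]
      exact hx0
  refine ⟨l.length, fun i => Ω ∩ ind ⁻¹' {i}, e, fun i => ho.measurableSet.inter
    (ind.measurableSet_fiber i), ?_, fun i => inter_subset_left, heΩ, ?_, ?_⟩
  · intro i j hij
    refine Set.disjoint_left.2 fun w hw hw' => hij ?_
    have h1 : ind w = i := hw.2
    have h2 : ind w = j := hw'.2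
    rw [← h1, h2]
  · ext w
    simp only [mem_iUnion, mem_inter_iff, mem_preimage, mem_singleton_iff, Finset.mem_range,
      exists_prop]
    refine ⟨fun ⟨i, _, h, _⟩ => h, fun h => ⟨ind w, ?_, h, rfl⟩⟩
    exact Nat.lt_succ_of_le (SimpleFunc.nearestPtInd_le _ _ _)
  · rintro i w ⟨hw, hwi⟩
    have hwi' : ind w = i := hwi
    obtain ⟨y, hy, hwy⟩ := mem_iUnion₂.1 (ht hw)
    obtain ⟨k, hk, hky⟩ := List.mem_iff_getElem.1 ((hlt y).2 hy)
    have h1 := SimpleFunc.edist_nearestPt_le e w (k := k) (N := l.length) hk.le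
    have h2 : SimpleFunc.nearestPt e l.length w = e i := by
      rw [SimpleFunc.nearestPt, SimpleFunc.map_apply, ← hind, hwi']
    have h3 : e k = y := by
      simp only [he, List.getD_eq_getElem?_getD]
      rw [List.getElem?_eq_getElem hk, Option.getD_some, hky]
    rw [h2, h3, edist_dist, edist_dist] at h1
    have h4 := (ENNReal.ofReal_le_ofReal_iff dist_nonneg).1 h1
    rw [dist_comm]
    rw [Metric.mem_ball, dist_comm] at hwy
    linarith

/-- Superposition: the integral is a limit of Riemann sums, uniformly in `x ∈ Ω₂`, and every Riemann
sum is a linear combination with total weight at most `∫ |h|`. -/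
lemma Rz_integral (G : Geo Ω₁ Ω₂ y₀ ρ D) (ho : IsOpen Ω₂) (hb : Bornology.IsBounded Ω₂)
    (hne : Ω₂.Nonempty) {Gc : EuclideanSpace ℝ (Fin n) → EuclideanSpace ℝ (Fin n) → ℝ}
    (hGc : Continuous (Function.uncurry Gc)) {h : EuclideanSpace ℝ (Fin n) → ℝ}
    (hh : IntegrableOn h Ω₂) {δ A : ℝ} (hδ : 0 < δ) (hA : 0 ≤ A)
    (hR : ∀ w ∈ Ω₂, Rz Ω₁ Ω₂ (fun x => Gc x w) δ A) :
    Rz Ω₁ Ω₂ (fun x => ∫ w in Ω₂, h w * Gc x w) ((∫ w in Ω₂, |h w|) * (2 * δ))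
      ((∫ w in Ω₂, |h w|) * A) := by
  have hK := hb.isCompact_closure.prod hb.isCompact_closure
  obtain ⟨γ, hγ, huc⟩ := Metric.uniformContinuousOn_iff.1
    (hK.uniformContinuousOn_of_continuous hGc.continuousOn) δ hδ
  obtain ⟨N, P, e, hPm, hPd, hPs, heΩ, hPU, hPe⟩ := exists_partition ho hb hne hγ
  have hhP : ∀ i, IntegrableOn h (P i) := fun i => hh.mono_set (hPs i)
  have hGx : ∀ x, IntegrableOn (fun w => h w * Gc x w) Ω₂ := by
    intro x
    have hc : Continuous fun w => Gc x w := hGc.comp (Continuous.prodMk_right x)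
    have := hh.mul_continuousOn_of_subset hc.continuousOn ho.measurableSet hb.isCompact_closure
      subset_closure
    exact this
  have hsplit : ∀ F : EuclideanSpace ℝ (Fin n) → ℝ, IntegrableOn F Ω₂ →
      ∫ w in Ω₂, F w = ∑ i ∈ Finset.range (N + 1), ∫ w in P i, F w := by
    intro F hF
    rw [← integral_biUnion_finset _ (fun i _ => hPm i) (fun i _ j _ hij => hPd hij)
      (fun i _ => hF.mono_set (hPs i)), hPU]
  have hS : ∑ i ∈ Finset.range (N + 1), |∫ w in P i, h w| ≤ ∫ w in Ω₂, |h w| := by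
    rw [hsplit _ hh.abs]
    exact Finset.sum_le_sum fun i _ => abs_integral_le_integral_abs
  have := Rz_comb G (Finset.range (N + 1)) (fun i => ∫ w in P i, h w) (fun i x => Gc x (e i))
    (fun x => ∫ w in Ω₂, h w * Gc x w) (δ := δ) (A := A) (η := (∫ w in Ω₂, |h w|) * δ)
    (fun i _ => hR _ (heΩ i)) hS hδ.le hA ?_
  · exact this.mono (by linarith) le_rfl
  · intro x hx
    rw [hsplit _ (hGx x), hsplit _ hh.abs, ← Finset.sum_sub_distrib, Finset.sum_mul]
    refine (Finset.abs_sum_le_sum_abs _ _).trans (Finset.sum_le_sum fun i _ => ?_)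
    rw [← integral_mul_const, ← integral_mul_const,
      ← integral_sub ((hGx x).mono_set (hPs i)) ((hhP i).mul_const _)]
    refine abs_integral_le_integral_abs.trans ?_
    refine setIntegral_mono_on ((((hGx x).mono_set (hPs i)).sub ((hhP i).mul_const _)).abs)
      ((hhP i).abs.mul_const _) (hPm i) fun w hw => ?_
    rw [← mul_sub, abs_mul]
    gcongr
    have := huc (x, w) ⟨subset_closure hx, subset_closure (hPs i hw)⟩ (x, e i)
      ⟨subset_closure hx, subset_closure (heΩ i)⟩ (by
        rw [Prod.dist_eq, dist_self, max_eq_right dist_nonneg]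
        exact hPe i w hw)
    rw [Real.dist_eq] at this
    exact this.le

end

/-! ### Contractions of a convex domain -/

section

variable {n : ℕ}

/-- Jensen's inequality for the square and a probability density `ψ`. -/
lemma sq_integral_le {α : Type*} [MeasurableSpace α] {μ : Measure α} {ψ v : α → ℝ}
    (hψ0 : ∀ᵐ a ∂μ, 0 ≤ ψ a) (hψ : Integrable ψ μ) (h1 : Integrable (fun a => ψ a * v a) μ)
    (h2 : Integrable (fun a => ψ a * v a ^ 2) μ) (hψ1 : ∫ a, ψ a ∂μ = 1) :
    (∫ a, ψ a * v a ∂μ) ^ 2 ≤ ∫ a, ψ a * v a ^ 2 ∂μ := by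
  set t := ∫ a, ψ a * v a ∂μ with ht
  have h3 : 0 ≤ ∫ a, ψ a * (v a - t) ^ 2 ∂μ := by
    refine integral_nonneg_of_ae ?_
    filter_upwards [hψ0] with a ha
    positivity
  have h4 : ∫ a, ψ a * (v a - t) ^ 2 ∂μ =
      ∫ a, ψ a * v a ^ 2 ∂μ - 2 * t * (∫ a, ψ a * v a ∂μ) + t ^ 2 * ∫ a, ψ a ∂μ := by
    have i1 := integral_sub h2 (h1.const_mul (2 * t))
    have i2 := integral_add (h2.sub (h1.const_mul (2 * t))) (hψ.const_mul (t ^ 2))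
    simp only [Pi.sub_apply] at i2
    rw [← integral_const_mul (2 * t), ← integral_const_mul (t ^ 2), ← i1, ← i2]
    congr 1
    funext a
    ring
  rw [hψ1, ← ht] at h4
  nlinarith

/-- Fundamental theorem of calculus and Cauchy–Schwarz along the segment from `x` to `z`. The
Lebesgue integral in `[0, ∞]` allows segments on which the gradient is not square integrable. -/
lemma segment_estimate {h : EuclideanSpace ℝ (Fin n) → ℝ} (hd : Differentiable ℝ h)
    {x z : EuclideanSpace ℝ (Fin n)} {R : ℝ} (hR : ‖x - z‖ ≤ R) {l : ℝ} (hl : 0 < l) :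
    ENNReal.ofReal ((h x - h ((1 - l) • x + l • z)) ^ 2) ≤ ENNReal.ofReal (l * R ^ 2) *
      ∫⁻ s in Ioc 0 l, ENNReal.ofReal (‖fderiv ℝ h ((1 - s) • x + s • z)‖ ^ 2) := by
  set p : ℝ → EuclideanSpace ℝ (Fin n) := fun s => (1 - s) • x + s • z with hp
  set g : ℝ → ℝ := fun s => ‖fderiv ℝ h (p s)‖ ^ 2 with hg
  have hpm : Measurable p := by
    have : Continuous p := by fun_prop
    exact this.measurable
  have hfm : Measurable fun s => fderiv ℝ h (p s) := (measurable_fderiv ℝ h).comp hpm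
  have hgm : Measurable g := hfm.norm.pow_const 2
  have hR0 : 0 ≤ R := (norm_nonneg _).trans hR
  -- An infinite right-hand side needs R > 0; for R = 0 both points coincide.
  by_cases hfin : ∫⁻ s in Ioc 0 l, ENNReal.ofReal (g s) = ⊤
  · change _ ≤ _ * ∫⁻ s in Ioc 0 l, ENNReal.ofReal (g s)
    rw [hfin]
    rcases hR0.eq_or_lt with h0 | h0
    · have hxz : x = z := by
        rw [← h0] at hR
        exact sub_eq_zero.1 (norm_le_zero_iff.1 hR)
      have : (1 - l) • x + l • z = x := by rw [← hxz, ← add_smul]; simp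
      rw [this]; simp
    · rw [ENNReal.mul_top (by simp; positivity)]
      exact le_top
  have hgi : IntegrableOn g (Ioc 0 l) := by
    refine ⟨hgm.aestronglyMeasurable, ?_⟩
    rw [hasFiniteIntegral_iff_ofReal (Filter.Eventually.of_forall fun s => by positivity)]
    exact lt_top_iff_ne_top.2 hfin
  set v : ℝ → ℝ := fun s => fderiv ℝ h (p s) (z - x) with hv
  have hvm : Measurable v := hfm.apply_continuousLinearMap (z - x)
  have hvg : ∀ s, v s ^ 2 ≤ R ^ 2 * g s := by
    intro s
    have h1 : |v s| ≤ ‖fderiv ℝ h (p s)‖ * R := by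
      refine ((fderiv ℝ h (p s)).le_opNorm (z - x)).trans ?_
      rw [norm_sub_rev]
      gcongr
    calc v s ^ 2 = |v s| ^ 2 := (sq_abs _).symm
      _ ≤ (‖fderiv ℝ h (p s)‖ * R) ^ 2 := by gcongr
      _ = _ := by rw [hg]; ring
  have hv2 : IntegrableOn (fun s => v s ^ 2) (Ioc 0 l) := by
    refine (hgi.const_mul (R ^ 2)).mono' (hvm.pow_const 2).aestronglyMeasurable
      (Filter.Eventually.of_forall fun s => ?_)
    rw [Real.norm_of_nonneg (by positivity)]
    exact hvg s
  have hone : IntegrableOn (fun _ : ℝ => (1 : ℝ)) (Ioc 0 l) := integrableOn_const (by simp)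
  have hv1 : IntegrableOn v (Ioc 0 l) := by
    refine (hone.add hv2).mono' hvm.aestronglyMeasurable (Filter.Eventually.of_forall fun s => ?_)
    simp only [Pi.add_apply, Real.norm_eq_abs]
    nlinarith [sq_abs (v s), sq_nonneg (|v s| - 1), abs_nonneg (v s)]
  have hftc : ∫ s in Ioc 0 l, v s = h ((1 - l) • x + l • z) - h x := by
    have h1 : ∀ s ∈ uIcc 0 l, HasDerivAt (fun s => h (p s)) (v s) s := by
      intro s _
      have h2 : HasDerivAt p (z - x) s := by
        have e1 : HasDerivAt (fun s : ℝ => (1 - s) • x) ((-1 : ℝ) • x) s :=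
          ((hasDerivAt_id s).const_sub 1).smul_const x
        have e2 : HasDerivAt (fun s : ℝ => s • z) ((1 : ℝ) • z) s :=
          (hasDerivAt_id s).smul_const z
        have e3 := e1.add e2
        have e4 : (-1 : ℝ) • x + (1 : ℝ) • z = z - x := by simp; abel
        rw [e4] at e3
        exact e3
      exact (hd (p s)).hasFDerivAt.comp_hasDerivAt s h2
    have h3 := intervalIntegral.integral_eq_sub_of_hasDerivAt h1
      ((intervalIntegrable_iff_integrableOn_Ioc_of_le hl.le).2 hv1)
    rw [intervalIntegral.integral_of_le hl.le] at h3
    rw [h3, hp]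
    simp
  have hcs := sq_integral_le (μ := volume.restrict (Ioc 0 l)) (ψ := fun _ => 1 / l) (v := v)
    (Filter.Eventually.of_forall fun _ => by positivity) (integrableOn_const (by simp))
    (hv1.const_mul _) (hv2.const_mul _) (by
      rw [setIntegral_const]
      simp [hl.le]
      field_simp)
  rw [integral_const_mul, integral_const_mul, hftc, mul_pow] at hcs
  have hle : ∫ s in Ioc 0 l, v s ^ 2 ≤ R ^ 2 * ∫ s in Ioc 0 l, g s := by
    rw [← integral_const_mul]
    exact integral_mono hv2 (hgi.const_mul _) hvg
  have hfinal : (h x - h ((1 - l) • x + l • z)) ^ 2 ≤ l * R ^ 2 * ∫ s in Ioc 0 l, g s := by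
    have e : (h x - h ((1 - l) • x + l • z)) ^ 2 = l ^ 2 * ((1 / l) ^ 2 *
        (h ((1 - l) • x + l • z) - h x) ^ 2) := by field_simp; ring
    rw [e]
    calc _ ≤ l ^ 2 * (1 / l * (R ^ 2 * ∫ s in Ioc 0 l, g s)) := by
          refine mul_le_mul_of_nonneg_left (hcs.trans ?_) (by positivity)
          exact mul_le_mul_of_nonneg_left hle (by positivity)
      _ = _ := by field_simp
  calc _ ≤ ENNReal.ofReal (l * R ^ 2 * ∫ s in Ioc 0 l, g s) := ENNReal.ofReal_le_ofReal hfinal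
    _ = _ := by
      rw [ENNReal.ofReal_mul (by positivity), ofReal_integral_eq_lintegral_ofReal hgi
        (Filter.Eventually.of_forall fun s => by positivity)]

/-- Change of variables under the contraction towards `z`, which maps the convex set `Ω` into
itself; its Jacobian contributes `(1 - s) ^ (-n) ≤ 2 ^ n`. -/
lemma lintegral_contract {Ω : Set (EuclideanSpace ℝ (Fin n))} (ho : IsOpen Ω) (hc : Convex ℝ Ω)
    {F : EuclideanSpace ℝ (Fin n) → ENNReal} (hF : Measurable F) {z : EuclideanSpace ℝ (Fin n)}
    (hz : z ∈ Ω) {s : ℝ} (hs : 0 ≤ s) (hs2 : s ≤ 1 / 2) :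
    ∫⁻ x in Ω, F ((1 - s) • x + s • z) ≤ ENNReal.ofReal (2 ^ n) * ∫⁻ x in Ω, F x := by
  have ha : (0 : ℝ) < 1 - s := by linarith
  set H := Ω.indicator F with hH
  have hHm : Measurable H := hF.indicator ho.measurableSet
  calc ∫⁻ x in Ω, F ((1 - s) • x + s • z) ≤ ∫⁻ x in Ω, H ((1 - s) • x + s • z) := by
        refine setLIntegral_mono' ho.measurableSet fun x hx => ?_
        rw [hH, indicator_of_mem]
        exact hc hx hz ha.le hs (by ring)
    _ ≤ ∫⁻ x, H ((1 - s) • x + s • z) := setLIntegral_le_lintegral _ _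
    _ = ∫⁻ y, H (y + s • z) ∂(Measure.map (fun x => (1 - s) • x) volume) := by
        have hm : Measurable fun y => H (y + s • z) := hHm.comp (measurable_add_const _)
        rw [lintegral_map hm (measurable_const_smul _)]
    _ = ENNReal.ofReal |((1 - s) ^ n)⁻¹| * ∫⁻ y, H (y + s • z) := by
        rw [Measure.map_addHaar_smul _ ha.ne', lintegral_smul_measure]
        simp
    _ = ENNReal.ofReal |((1 - s) ^ n)⁻¹| * ∫⁻ y, H y := by
        rw [lintegral_add_right_eq_self]
    _ = ENNReal.ofReal |((1 - s) ^ n)⁻¹| * ∫⁻ x in Ω, F x := by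
        rw [hH, lintegral_indicator ho.measurableSet]
    _ ≤ _ := by
        gcongr
        rw [abs_of_pos (by positivity), ← inv_pow]
        gcongr
        rw [inv_le_comm₀ ha (by norm_num)]
        linarith

/-- Moving every point of `Ω` a fraction `l` of the way towards `z` changes a function by `O(l)`
times its gradient norm in `L²`. -/
lemma shift_estimate {Ω : Set (EuclideanSpace ℝ (Fin n))} (ho : IsOpen Ω) (hc : Convex ℝ Ω) {R : ℝ}
    (hR : ∀ x ∈ Ω, ∀ w ∈ Ω, ‖x - w‖ ≤ R) {h : EuclideanSpace ℝ (Fin n) → ℝ}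
    (hd : Differentiable ℝ h) {z : EuclideanSpace ℝ (Fin n)} (hz : z ∈ Ω) {l : ℝ} (hl : 0 < l)
    (hl2 : l ≤ 1 / 2) :
    ∫⁻ x in Ω, ENNReal.ofReal ((h x - h ((1 - l) • x + l • z)) ^ 2) ≤
      ENNReal.ofReal (l ^ 2 * R ^ 2 * 2 ^ n) * ∫⁻ x in Ω, ENNReal.ofReal (‖fderiv ℝ h x‖ ^ 2) := by
  have hR0 : 0 ≤ R := (norm_nonneg _).trans (hR z hz z hz)
  have hFm : Measurable fun x => ENNReal.ofReal (‖fderiv ℝ h x‖ ^ 2) :=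
    ((measurable_fderiv ℝ h).norm.pow_const 2).ennreal_ofReal
  set F := fun x => ENNReal.ofReal (‖fderiv ℝ h x‖ ^ 2) with hF
  have hjm : Measurable (Function.uncurry fun (x : EuclideanSpace ℝ (Fin n)) (s : ℝ) =>
      F ((1 - s) • x + s • z)) := by
    have : Continuous fun q : EuclideanSpace ℝ (Fin n) × ℝ => (1 - q.2) • q.1 + q.2 • z := by
      fun_prop
    exact hFm.comp this.measurable
  calc _ ≤ ∫⁻ x in Ω, ENNReal.ofReal (l * R ^ 2) * ∫⁻ s in Ioc 0 l, F ((1 - s) • x + s • z) :=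
        setLIntegral_mono' ho.measurableSet fun x hx => segment_estimate hd (hR x hx z hz) hl
    _ = ENNReal.ofReal (l * R ^ 2) * ∫⁻ x in Ω, ∫⁻ s in Ioc 0 l, F ((1 - s) • x + s • z) := by
        have hm : Measurable fun x => ∫⁻ s in Ioc 0 l, F ((1 - s) • x + s • z) :=
          hjm.lintegral_prod_right'
        rw [lintegral_const_mul _ hm]
    _ = ENNReal.ofReal (l * R ^ 2) * ∫⁻ s in Ioc 0 l, ∫⁻ x in Ω, F ((1 - s) • x + s • z) := by
        rw [lintegral_lintegral_swap hjm.aemeasurable]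
    _ ≤ ENNReal.ofReal (l * R ^ 2) * ∫⁻ s in Ioc 0 l, ENNReal.ofReal (2 ^ n) * ∫⁻ x in Ω, F x := by
        refine mul_le_mul_right ?_ _
        refine setLIntegral_mono' measurableSet_Ioc fun s hs => ?_
        exact lintegral_contract ho hc hFm hz hs.1.le (hs.2.trans hl2)
    _ = _ := by
        rw [setLIntegral_const, Real.volume_Ioc, sub_zero, mul_right_comm _ _ (ENNReal.ofReal l),
          ← mul_assoc, ← ENNReal.ofReal_mul (by positivity), ← ENNReal.ofReal_mul (by positivity)]
        congr 2
        ring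

end

/-! ### Averages near the contracted point and the Landau kernel -/

section

variable {n : ℕ}

/-- The average of `h` over the ball of radius `l r` around the contracted point is close to `h`.
Since `(1 - l) x + l x0 + u = (1 - l) x + l (x0 + u / l)` with `x0 + u / l ∈ B(x0, r) ⊆ Ω`, this is
an average of instances of `shift_estimate`. -/
lemma inner_estimate {Ω : Set (EuclideanSpace ℝ (Fin n))} (ho : IsOpen Ω) (hc : Convex ℝ Ω) {R : ℝ}
    (hR : ∀ x ∈ Ω, ∀ w ∈ Ω, ‖x - w‖ ≤ R) {h : EuclideanSpace ℝ (Fin n) → ℝ}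
    (hd : Differentiable ℝ h) {x0 : EuclideanSpace ℝ (Fin n)} {r : ℝ}
    (hx0 : Metric.ball x0 r ⊆ Ω) {l : ℝ} (hl : 0 < l) (hl2 : l ≤ 1 / 2)
    {ψ : EuclideanSpace ℝ (Fin n) → ℝ} (hψc : Continuous ψ)
    (hψ0 : ∀ u ∈ Metric.ball 0 (l * r), 0 ≤ ψ u) (hψ1 : ∫ u in Metric.ball 0 (l * r), ψ u = 1) :
    ∫⁻ x in Ω, ENNReal.ofReal
        ((h x - ∫ u in Metric.ball 0 (l * r), ψ u * h ((1 - l) • x + l • x0 + u)) ^ 2) ≤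
      ENNReal.ofReal (l ^ 2 * R ^ 2 * 2 ^ n) * ∫⁻ x in Ω, ENNReal.ofReal (‖fderiv ℝ h x‖ ^ 2) := by
  set B : Set (EuclideanSpace ℝ (Fin n)) := Metric.ball 0 (l * r) with hB
  have hBm : MeasurableSet B := Metric.isOpen_ball.measurableSet
  have hhc : Continuous h := hd.continuous
  have hci : ∀ f : EuclideanSpace ℝ (Fin n) → ℝ, Continuous f → IntegrableOn f B := fun f hf =>
    (hf.continuousOn.integrableOn_compact (isCompact_closedBall 0 (l * r))).mono_set
      Metric.ball_subset_closedBall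
  have hψae : ∀ᵐ u ∂(volume.restrict B), 0 ≤ ψ u :=
    (ae_restrict_iff' hBm).2 (Filter.Eventually.of_forall hψ0)
  set K := ENNReal.ofReal (l ^ 2 * R ^ 2 * 2 ^ n) *
    ∫⁻ x in Ω, ENNReal.ofReal (‖fderiv ℝ h x‖ ^ 2) with hK
  set q : EuclideanSpace ℝ (Fin n) → EuclideanSpace ℝ (Fin n) → ℝ :=
    fun x u => h x - h ((1 - l) • x + l • x0 + u) with hq
  have hqc : Continuous (Function.uncurry q) := by
    change Continuous fun p : EuclideanSpace ℝ (Fin n) × EuclideanSpace ℝ (Fin n) =>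
      h p.1 - h ((1 - l) • p.1 + l • x0 + p.2)
    fun_prop
  have hqx : ∀ x, Continuous (q x) := fun x => hqc.comp (Continuous.prodMk_right x)
  have hpt : ∀ x, ENNReal.ofReal ((h x - ∫ u in B, ψ u * h ((1 - l) • x + l • x0 + u)) ^ 2) ≤
      ∫⁻ u in B, ENNReal.ofReal (ψ u) * ENNReal.ofReal (q x u ^ 2) := by
    intro x
    have e1 : h x - ∫ u in B, ψ u * h ((1 - l) • x + l • x0 + u) = ∫ u in B, ψ u * q x u := by
      have e2 : h x = ∫ u in B, ψ u * h x := by rw [integral_mul_const, hψ1, one_mul]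
      conv_lhs => rw [e2]
      rw [← integral_sub (hci _ (by fun_prop)) (hci _ (by fun_prop))]
      congr 1
      funext u
      rw [hq]; ring
    rw [e1]
    have e3 := sq_integral_le hψae (hci _ hψc) (hci _ (hψc.mul (hqx x)))
      (hci _ (hψc.mul ((hqx x).pow 2))) hψ1
    refine (ENNReal.ofReal_le_ofReal e3).trans ?_
    have hi3 : IntegrableOn (fun u => ψ u * q x u ^ 2) B := hci _ (hψc.mul ((hqx x).pow 2))
    rw [ofReal_integral_eq_lintegral_ofReal hi3 (by
      filter_upwards [hψae] with u hu
      exact mul_nonneg hu (sq_nonneg _))]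
    refine lintegral_mono_ae ?_
    filter_upwards [hψae] with u hu
    rw [ENNReal.ofReal_mul hu]
  have hm : Measurable (Function.uncurry fun x u =>
      ENNReal.ofReal (ψ u) * ENNReal.ofReal (q x u ^ 2)) := by
    have h1 : Measurable fun p : EuclideanSpace ℝ (Fin n) × EuclideanSpace ℝ (Fin n) =>
      ENNReal.ofReal (ψ p.2) := (hψc.comp continuous_snd).measurable.ennreal_ofReal
    have h2 : Measurable fun p : EuclideanSpace ℝ (Fin n) × EuclideanSpace ℝ (Fin n) =>
      ENNReal.ofReal (Function.uncurry q p ^ 2) := (hqc.pow 2).measurable.ennreal_ofReal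
    exact h1.mul h2
  calc _ ≤ ∫⁻ x in Ω, ∫⁻ u in B, ENNReal.ofReal (ψ u) * ENNReal.ofReal (q x u ^ 2) :=
        lintegral_mono fun x => hpt x
    _ = ∫⁻ u in B, ∫⁻ x in Ω, ENNReal.ofReal (ψ u) * ENNReal.ofReal (q x u ^ 2) := by
        rw [lintegral_lintegral_swap hm.aemeasurable]
    _ ≤ ∫⁻ u in B, ENNReal.ofReal (ψ u) * K := by
        refine setLIntegral_mono' hBm fun u hu => ?_
        have hm2 : Measurable fun x => ENNReal.ofReal (q x u ^ 2) := by
          have : Continuous fun x => q x u := hqc.comp (Continuous.prodMk_left u)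
          exact (this.pow 2).measurable.ennreal_ofReal
        rw [lintegral_const_mul _ hm2]
        refine mul_le_mul_right ?_ _
        have hz : x0 + l⁻¹ • u ∈ Ω := by
          refine hx0 ?_
          rw [mem_ball_iff_norm, add_sub_cancel_left, norm_smul, norm_inv,
            Real.norm_of_nonneg hl.le, inv_mul_lt_iff₀ hl]
          rwa [hB, mem_ball_zero_iff] at hu
        have := shift_estimate ho hc hR hd hz hl hl2
        refine le_trans (le_of_eq ?_) this
        congr 1
        funext x
        simp only [hq]
        rw [smul_add, smul_smul, mul_inv_cancel₀ hl.ne', one_smul, add_assoc]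
    _ = K := by
        rw [lintegral_mul_const _ hψc.measurable.ennreal_ofReal,
          ← ofReal_integral_eq_lintegral_ofReal (hci _ hψc) hψae, hψ1]
        simp

/-- The normalising constant `c` of the Landau kernel on the ball of radius `l r`. For
`N ≥ l ^ (-3)` the kernel is `O(l)` outside that ball: it is exponentially small in `1 / l` relative
to its values on the ball of half the radius, which beats the factor `l ^ (-n)` from the volume. -/
lemma kernel_const (n : ℕ) {r R : ℝ} (hr : 0 < r) (hrR : r ≤ R) : ∃ C : ℝ, 0 < C ∧
    ∀ l : ℝ, 0 < l → l ≤ 1 / 2 → ∀ N : ℕ, 1 / l ^ 3 ≤ N →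
      ∃ c, 0 < c ∧ c ≤ Real.exp (C * N) ∧ c * (1 - (l * r / R) ^ 2) ^ N ≤ C * l ∧
        ∫ u in Metric.ball (0 : EuclideanSpace ℝ (Fin n)) (l * r),
          c * (1 - ‖u‖ ^ 2 / R ^ 2) ^ N = 1 := by
  have hR : 0 < R := by linarith
  set V1 := (volume : Measure (EuclideanSpace ℝ (Fin n))).real (Metric.ball 0 1) with hV1
  have hV1p : 0 < V1 := by
    rw [hV1, measureReal_def]
    exact ENNReal.toReal_pos (Metric.measure_ball_pos _ _ one_pos).ne' measure_ball_lt_top.ne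
  set β := (r / R) ^ 2 with hβ
  have hβ0 : 0 < β := by positivity
  have hβ1 : β ≤ 1 := pow_le_one₀ (by positivity) (by rw [div_le_one hR]; exact hrR)
  set C2 := (2 / r) ^ n / V1 with hC2
  have hC20 : 0 < C2 := by positivity
  set C3 := C2 * ((n + 1).factorial * (4 / (3 * β)) ^ (n + 1)) with hC3
  have hC30 : 0 < C3 := by positivity
  refine ⟨C2 + n + 1 + C3, by positivity, fun l hl hl2 N hN => ?_⟩
  set a := (l * r / R) ^ 2 with ha
  have haβ : a = l ^ 2 * β := by rw [ha, hβ]; ring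
  have ha0 : 0 < a := by rw [haβ]; positivity
  have ha1 : a ≤ 1 := by
    rw [haβ]
    exact mul_le_one₀ (pow_le_one₀ hl.le (by linarith)) hβ0.le hβ1
  have hlN : 1 / l ≤ N := by
    refine le_trans ?_ hN
    rw [one_div_le_one_div hl (by positivity)]
    exact pow_le_of_le_one hl.le (by linarith) (by norm_num)
  have hN1 : (1 : ℝ) ≤ N := by
    refine le_trans ?_ hlN
    rw [le_div_iff₀ hl]; linarith
  set φ : EuclideanSpace ℝ (Fin n) → ℝ := fun u => (1 - ‖u‖ ^ 2 / R ^ 2) ^ N with hφ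
  have hφc : Continuous φ := by rw [hφ]; fun_prop
  set B : Set (EuclideanSpace ℝ (Fin n)) := Metric.ball 0 (l * r) with hB
  have hφi : IntegrableOn φ B :=
    (hφc.continuousOn.integrableOn_compact (isCompact_closedBall 0 (l * r))).mono_set
      Metric.ball_subset_closedBall
  have hnn : ∀ u ∈ B, 0 ≤ φ u := by
    intro u hu
    rw [hB, mem_ball_zero_iff] at hu
    have : ‖u‖ ^ 2 / R ^ 2 ≤ 1 := by
      rw [div_le_one (by positivity)]
      have : l * r ≤ R := by nlinarith
      gcongr
      linarith
    exact pow_nonneg (by linarith) N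
  set I := ∫ u in B, φ u with hI
  have hIlow : (l * r / 2) ^ n * V1 * (1 - a / 4) ^ N ≤ I := by
    set B' : Set (EuclideanSpace ℝ (Fin n)) := Metric.ball 0 (l * r / 2) with hB'
    have hBB : B' ⊆ B := Metric.ball_subset_ball (by nlinarith [mul_pos hl hr])
    have hV : (volume : Measure (EuclideanSpace ℝ (Fin n))).real B' = (l * r / 2) ^ n * V1 := by
      rw [hV1, measureReal_def, measureReal_def, hB', Measure.addHaar_ball_of_pos _ _ (by positivity),
        ENNReal.toReal_mul, ENNReal.toReal_ofReal (by positivity)]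
      simp
    calc _ = ∫ u in B', (1 - a / 4) ^ N := by rw [setIntegral_const, hV, smul_eq_mul]
      _ ≤ ∫ u in B', φ u := by
          refine setIntegral_mono_on (integrableOn_const measure_ball_lt_top.ne)
            (hφi.mono_set hBB) Metric.isOpen_ball.measurableSet fun u hu => ?_
          rw [hB', mem_ball_zero_iff] at hu
          have : ‖u‖ ^ 2 / R ^ 2 ≤ a / 4 := by
            calc ‖u‖ ^ 2 / R ^ 2 ≤ (l * r / 2) ^ 2 / R ^ 2 := by gcongr
              _ = a / 4 := by rw [ha]; ring
          exact pow_le_pow_left₀ (by linarith) (by linarith) N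
      _ ≤ I := setIntegral_mono_set hφi
          ((ae_restrict_iff' Metric.isOpen_ball.measurableSet).2 (Filter.Eventually.of_forall hnn))
          hBB.eventuallyLE
  have h4 : 0 < 1 - a / 4 := by linarith
  have hI0 : 0 < I := lt_of_lt_of_le (by positivity) hIlow
  have hln : (l⁻¹) ^ n ≤ Real.exp (n * N) := by
    rw [Real.exp_nat_mul]
    refine pow_le_pow_left₀ (by positivity) ?_ n
    rw [← one_div]
    linarith [Real.add_one_le_exp (N : ℝ)]
  have hcle : I⁻¹ ≤ C2 * (l⁻¹) ^ n * ((1 - a / 4) ^ N)⁻¹ := by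
    calc I⁻¹ ≤ ((l * r / 2) ^ n * V1 * (1 - a / 4) ^ N)⁻¹ := by gcongr
      _ = _ := by
        rw [hC2, mul_inv, mul_inv, div_pow, div_pow, mul_pow, inv_pow]
        field_simp
  refine ⟨I⁻¹, by positivity, ?_, ?_, ?_⟩
  · have h5 : ((1 - a / 4) ^ N)⁻¹ ≤ Real.exp N := by
      have h6 : (1 - a / 4)⁻¹ ≤ Real.exp 1 := by
        have h7 : (1 - a / 4)⁻¹ ≤ 2 := by
          rw [inv_le_comm₀ h4 (by norm_num)]; linarith
        linarith [Real.add_one_le_exp 1]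
      calc _ = ((1 - a / 4)⁻¹) ^ N := by rw [inv_pow]
        _ ≤ Real.exp 1 ^ N := by gcongr
        _ = _ := by rw [← Real.exp_nat_mul, mul_one]
    have h8 : C2 ≤ Real.exp (C2 * N) := by
      have := Real.add_one_le_exp (C2 * N)
      have := mul_le_mul_of_nonneg_left hN1 hC20.le
      linarith
    calc I⁻¹ ≤ Real.exp (C2 * N) * Real.exp (n * N) * Real.exp N := by
          refine hcle.trans ?_
          gcongr
      _ = Real.exp ((C2 + n + 1) * N) := by
          rw [← Real.exp_add, ← Real.exp_add]; ring_nf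
      _ ≤ _ := by
          rw [Real.exp_le_exp]
          exact mul_le_mul_of_nonneg_right (by linarith) (by linarith)
  · have h5 : (1 - a) ^ N * ((1 - a / 4) ^ N)⁻¹ ≤ Real.exp (-(3 * β / 4 / l)) := by
      have h6 : (1 - a) * (1 - a / 4)⁻¹ ≤ Real.exp (-(3 / 4 * a)) := by
        have h7 := Real.add_one_le_exp (-(3 / 4 * a))
        rw [mul_inv_le_iff₀ h4]
        nlinarith
      calc _ = ((1 - a) * (1 - a / 4)⁻¹) ^ N := by rw [mul_pow, inv_pow]
        _ ≤ Real.exp (-(3 / 4 * a)) ^ N :=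
            pow_le_pow_left₀ (mul_nonneg (by linarith) (by positivity)) h6 N
        _ = Real.exp (-(3 / 4 * (a * N))) := by rw [← Real.exp_nat_mul]; ring_nf
        _ ≤ _ := by
            rw [Real.exp_le_exp]
            have h8 : β / l ≤ a * N := by
              calc β / l = a * (1 / l ^ 3) := by rw [haβ]; field_simp
                _ ≤ a * N := by gcongr
            have h9 : 3 * β / 4 / l = 3 / 4 * (β / l) := by ring
            rw [h9]
            linarith
    have h10 : Real.exp (-(3 * β / 4 / l)) ≤
        (n + 1).factorial * (4 / (3 * β)) ^ (n + 1) * l ^ (n + 1) := by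
      have h11 := Real.pow_div_factorial_le_exp (3 * β / 4 / l) (by positivity) (n + 1)
      rw [Real.exp_neg]
      calc _ ≤ ((3 * β / 4 / l) ^ (n + 1) / (n + 1).factorial)⁻¹ := by gcongr
        _ = _ := by
          rw [inv_div, div_pow, div_pow, div_pow]
          field_simp
    calc I⁻¹ * (1 - a) ^ N ≤ C2 * (l⁻¹) ^ n * ((1 - a / 4) ^ N)⁻¹ * (1 - a) ^ N :=
          mul_le_mul_of_nonneg_right hcle (pow_nonneg (by linarith) N)
      _ = C2 * (l⁻¹) ^ n * ((1 - a) ^ N * ((1 - a / 4) ^ N)⁻¹) := by ring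
      _ ≤ C2 * (l⁻¹) ^ n * ((n + 1).factorial * (4 / (3 * β)) ^ (n + 1) * l ^ (n + 1)) := by
          exact mul_le_mul_of_nonneg_left (h5.trans h10) (by positivity)
      _ = C3 * l := by
          rw [hC3, inv_pow, pow_succ l]
          field_simp
      _ ≤ _ := by
          have : (0 : ℝ) ≤ n := Nat.cast_nonneg n
          exact mul_le_mul_of_nonneg_right (by linarith) hl.le
  · rw [integral_const_mul, inv_mul_cancel₀ hI0.ne']

end

/-! ### Mollification by a polynomial kernel -/

section

variable {n : ℕ}

lemma l1_le_l2 {Ω : Set (EuclideanSpace ℝ (Fin n))} (ho : IsOpen Ω) (hb : Bornology.IsBounded Ω)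
    (hne : Ω.Nonempty) {h : EuclideanSpace ℝ (Fin n) → ℝ} (hc : Continuous h)
    (hi : IntegrableOn (fun x => h x ^ 2) Ω) :
    IntegrableOn h Ω ∧ (∫ x in Ω, |h x|) ^ 2 ≤ (volume : Measure (EuclideanSpace ℝ (Fin n))).real Ω *
      ∫ x in Ω, h x ^ 2 := by
  have hV : volume Ω ≠ ⊤ := hb.measure_lt_top.ne
  have hVp : 0 < (volume : Measure (EuclideanSpace ℝ (Fin n))).real Ω := by
    rw [measureReal_def]
    exact ENNReal.toReal_pos (ho.measure_pos _ hne).ne' hV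
  set V := (volume : Measure (EuclideanSpace ℝ (Fin n))).real Ω with hVd
  have h1 : IntegrableOn h Ω := by
    have h2 : IntegrableOn (fun x => 1 + h x ^ 2) Ω := (integrableOn_const hV).add hi
    refine Integrable.mono' h2 hc.aestronglyMeasurable (Filter.Eventually.of_forall fun x => ?_)
    rw [Real.norm_eq_abs, ← sq_abs (h x)]
    nlinarith [sq_nonneg (|h x| - 1)]
  refine ⟨h1, ?_⟩
  have h3 := sq_integral_le (μ := volume.restrict Ω) (ψ := fun _ => V⁻¹) (v := fun x => |h x|)
    (Filter.Eventually.of_forall fun _ => by positivity) (integrableOn_const hV)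
    (h1.abs.const_mul _) (by simpa only [sq_abs] using hi.const_mul V⁻¹)
    (by rw [setIntegral_const, smul_eq_mul, ← hVd, mul_inv_cancel₀ hVp.ne'])
  simp only [sq_abs] at h3
  rw [integral_const_mul, integral_const_mul, mul_pow, inv_pow, inv_mul_le_iff₀ (by positivity)] at h3
  calc _ ≤ _ := h3
    _ = _ := by field_simp

/-- The convolution integral over all of `Ω` differs from the one over the small ball by the
contribution of the tail of the kernel. The small ball lies in `Ω` by convexity. -/
lemma outer_estimate {Ω : Set (EuclideanSpace ℝ (Fin n))} (ho : IsOpen Ω)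
    (hb : Bornology.IsBounded Ω) (hc : Convex ℝ Ω) {R : ℝ} (hR0 : 0 < R)
    (hR : ∀ x ∈ Ω, ∀ w ∈ Ω, ‖x - w‖ ≤ R) {h : EuclideanSpace ℝ (Fin n) → ℝ}
    (hh : IntegrableOn h Ω) {x0 : EuclideanSpace ℝ (Fin n)} {r : ℝ} (hr : 0 < r) (hrR : r ≤ R)
    (hx0 : Metric.ball x0 r ⊆ Ω) {l : ℝ} (hl : 0 < l) (hl2 : l ≤ 1 / 2) {c : ℝ} (hc0 : 0 < c)
    (N : ℕ) {x : EuclideanSpace ℝ (Fin n)} (hx : x ∈ Ω) :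
    |(∫ w in Ω, (c * h w) * (1 - ‖(1 - l) • x + l • x0 - w‖ ^ 2 / R ^ 2) ^ N) -
      ∫ u in Metric.ball 0 (l * r), c * (1 - ‖u‖ ^ 2 / R ^ 2) ^ N * h ((1 - l) • x + l • x0 + u)|
      ≤ c * (1 - (l * r / R) ^ 2) ^ N * ∫ w in Ω, |h w| := by
  set xl := (1 - l) • x + l • x0 with hxl
  set F : EuclideanSpace ℝ (Fin n) → ℝ := fun w => (c * h w) * (1 - ‖xl - w‖ ^ 2 / R ^ 2) ^ N with hF
  have hFi : IntegrableOn F Ω := by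
    have hcont : Continuous fun w => (1 - ‖xl - w‖ ^ 2 / R ^ 2) ^ N := by fun_prop
    have h0 : IntegrableOn (fun w => c * h w) Ω := hh.const_mul c
    exact h0.mul_continuousOn_of_subset hcont.continuousOn
      ho.measurableSet hb.isCompact_closure subset_closure
  have hxlm : xl ∈ Ω := hc hx (hx0 (Metric.mem_ball_self hr)) (by linarith) hl.le (by ring)
  have hsub : Metric.ball xl (l * r) ⊆ Ω := by
    intro w hw
    have hz : x0 + l⁻¹ • (w - xl) ∈ Ω := by
      refine hx0 ?_
      rw [mem_ball_iff_norm, add_sub_cancel_left, norm_smul, norm_inv,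
        Real.norm_of_nonneg hl.le, inv_mul_lt_iff₀ hl]
      exact mem_ball_iff_norm.1 hw
    have := hc hx hz (by linarith : 0 ≤ 1 - l) hl.le (by ring)
    rwa [smul_add, smul_smul, mul_inv_cancel₀ hl.ne', one_smul, ← add_assoc, ← hxl,
      add_sub_cancel] at this
  have hin : ∫ u in Metric.ball 0 (l * r), c * (1 - ‖u‖ ^ 2 / R ^ 2) ^ N * h (xl + u) =
      ∫ w in Metric.ball xl (l * r), F w := by
    have h1 := (measurePreserving_add_left (volume : Measure (EuclideanSpace ℝ (Fin n)))
      xl).setIntegral_preimage_emb (measurableEmbedding_addLeft xl) F (Metric.ball xl (l * r))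
    rw [← h1]
    have h2 : (fun u => xl + u) ⁻¹' Metric.ball xl (l * r) = Metric.ball 0 (l * r) := by
      ext u
      simp
    rw [h2]
    congr 1
    funext u
    simp only [hF]
    rw [show xl - (xl + u) = -u by abel, norm_neg]
    ring
  have hq0 : 0 ≤ 1 - (l * r / R) ^ 2 := by
    have h3 : l * r / R ≤ 1 := by rw [div_le_one hR0]; nlinarith
    have := pow_le_one₀ (n := 2) (by positivity) h3
    linarith
  rw [hin, ← setIntegral_sdiff Metric.isOpen_ball.measurableSet hFi hsub, ← integral_const_mul]
  refine abs_integral_le_integral_abs.trans ?_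
  have hM : IntegrableOn (fun w => c * (1 - (l * r / R) ^ 2) ^ N * |h w|) Ω := hh.abs.const_mul _
  have hFd : IntegrableOn F (Ω \ Metric.ball xl (l * r)) := hFi.mono_set sdiff_subset
  have hFa : IntegrableOn (fun w => |F w|) (Ω \ Metric.ball xl (l * r)) := Integrable.abs hFd
  refine le_trans ?_ (setIntegral_mono_set hM (Filter.Eventually.of_forall fun w => ?_)
    (sdiff_subset (s := Ω) (t := Metric.ball xl (l * r))).eventuallyLE)
  · refine setIntegral_mono_on hFa (hM.mono_set sdiff_subset)
      (ho.measurableSet.diff Metric.isOpen_ball.measurableSet) fun w hw => ?_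
    have h1 := hR _ hxlm _ hw.1
    have h2 := hw.2
    rw [mem_ball_iff_norm, norm_sub_rev, not_lt] at h2
    have h3 : ‖xl - w‖ ^ 2 / R ^ 2 ≤ 1 := by
      rw [div_le_one (by positivity)]
      gcongr
    have h4 : (l * r / R) ^ 2 ≤ ‖xl - w‖ ^ 2 / R ^ 2 := by
      rw [div_pow]
      gcongr
    have h5 : (1 - ‖xl - w‖ ^ 2 / R ^ 2) ^ N ≤ (1 - (l * r / R) ^ 2) ^ N :=
      pow_le_pow_left₀ (by linarith) (by linarith) N
    have h6 : 0 ≤ (1 - ‖xl - w‖ ^ 2 / R ^ 2) ^ N := pow_nonneg (by linarith) N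
    simp only [hF]
    rw [abs_mul, abs_mul, abs_of_pos hc0, abs_of_nonneg h6]
    calc _ = c * (1 - ‖xl - w‖ ^ 2 / R ^ 2) ^ N * |h w| := by ring
      _ ≤ _ := mul_le_mul_of_nonneg_right (mul_le_mul_of_nonneg_left h5 hc0.le) (abs_nonneg _)
  · exact mul_nonneg (mul_nonneg hc0.le (pow_nonneg hq0 N)) (abs_nonneg _)

/-- Approximation of `h` in `L²(Ω)` by convolution with a polynomial kernel, evaluated at the
contracted point: error `O(l)` in terms of the `H¹` norm, for degree at least `l ^ (-3)`. -/
lemma mollify {Ω : Set (EuclideanSpace ℝ (Fin n))} (ho : IsOpen Ω)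
    (hb : Bornology.IsBounded Ω) (hne : Ω.Nonempty) (hc : Convex ℝ Ω) {R : ℝ}
    (hR : ∀ x ∈ Ω, ∀ w ∈ Ω, ‖x - w‖ ≤ R)
    {x0 : EuclideanSpace ℝ (Fin n)} {r : ℝ} (hr : 0 < r) (hrR : r ≤ R)
    (hx0 : Metric.ball x0 r ⊆ Ω) : ∃ C : ℝ, 0 < C ∧
    ∀ l : ℝ, 0 < l → l ≤ 1 / 2 → ∀ N : ℕ, 1 / l ^ 3 ≤ N → ∃ c, 0 < c ∧ c ≤ Real.exp (C * N) ∧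
      ∀ h : EuclideanSpace ℝ (Fin n) → ℝ, Differentiable ℝ h →
        IntegrableOn (fun x => h x ^ 2) Ω → IntegrableOn (fun x => ‖fderiv ℝ h x‖ ^ 2) Ω →
        IntegrableOn (fun x => (h x -
          ∫ w in Ω, (c * h w) * (1 - ‖(1 - l) • x + l • x0 - w‖ ^ 2 / R ^ 2) ^ N) ^ 2) Ω ∧
        ∫ x in Ω, (h x -
          ∫ w in Ω, (c * h w) * (1 - ‖(1 - l) • x + l • x0 - w‖ ^ 2 / R ^ 2) ^ N) ^ 2 ≤
          C * l ^ 2 * ((∫ x in Ω, h x ^ 2) + ∫ x in Ω, ‖fderiv ℝ h x‖ ^ 2) := by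
  have hR0 : 0 < R := by linarith
  obtain ⟨C0, hC0, hk⟩ := kernel_const n hr hrR
  set V := (volume : Measure (EuclideanSpace ℝ (Fin n))).real Ω with hVd
  have hV0 : 0 ≤ V := measureReal_nonneg
  have hVtop : volume Ω ≠ ⊤ := hb.measure_lt_top.ne
  refine ⟨C0 + 2 * (R ^ 2 * 2 ^ n) + 2 * C0 ^ 2 * V ^ 2, by positivity, fun l hl hl2 N hN => ?_⟩
  obtain ⟨c, hc0, hc1, hc2, hc3⟩ := hk l hl hl2 N hN
  refine ⟨c, hc0, hc1.trans ?_, fun h hd hi hdi => ?_⟩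
  · rw [Real.exp_le_exp]
    refine mul_le_mul_of_nonneg_right ?_ (Nat.cast_nonneg N)
    have : 0 ≤ 2 * (R ^ 2 * 2 ^ n) + 2 * C0 ^ 2 * V ^ 2 := by positivity
    linarith
  obtain ⟨hh, hM⟩ := l1_le_l2 ho hb hne hd.continuous hi
  rw [← hVd] at hM
  set M := ∫ x in Ω, |h x| with hMd
  have hM0 : 0 ≤ M := integral_nonneg fun x => abs_nonneg _
  set A : EuclideanSpace ℝ (Fin n) → ℝ := fun x =>
    ∫ w in Ω, (c * h w) * (1 - ‖(1 - l) • x + l • x0 - w‖ ^ 2 / R ^ 2) ^ N with hA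
  set ψ : EuclideanSpace ℝ (Fin n) → ℝ := fun u => c * (1 - ‖u‖ ^ 2 / R ^ 2) ^ N with hψ
  have hψc : Continuous ψ := by rw [hψ]; fun_prop
  set S : EuclideanSpace ℝ (Fin n) → ℝ := fun x =>
    ∫ u in Metric.ball 0 (l * r), ψ u * h ((1 - l) • x + l • x0 + u) with hS
  have hψ0 : ∀ u ∈ Metric.ball 0 (l * r), 0 ≤ ψ u := by
    intro u hu
    rw [mem_ball_zero_iff] at hu
    have : ‖u‖ ^ 2 / R ^ 2 ≤ 1 := by
      rw [div_le_one (by positivity)]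
      have : l * r ≤ R := by nlinarith
      gcongr
      linarith
    exact mul_nonneg hc0.le (pow_nonneg (by linarith) N)
  have hAm : AEStronglyMeasurable (fun x => (h x - A x) ^ 2) (volume.restrict Ω) := by
    have hhc := hd.continuous
    have hcont : Continuous fun p : EuclideanSpace ℝ (Fin n) × EuclideanSpace ℝ (Fin n) =>
        (c * h p.2) * (1 - ‖(1 - l) • p.1 + l • x0 - p.2‖ ^ 2 / R ^ 2) ^ N := by fun_prop
    have h1 : StronglyMeasurable A := hcont.stronglyMeasurable.integral_prod_right
    exact ((hhc.stronglyMeasurable.sub h1).pow 2).aestronglyMeasurable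
  have hin := inner_estimate ho hc hR hd hx0 hl hl2 hψc hψ0 hc3
  have hlin : ∫⁻ x in Ω, ENNReal.ofReal ((h x - A x) ^ 2) ≤ ENNReal.ofReal
      ((C0 + 2 * (R ^ 2 * 2 ^ n) + 2 * C0 ^ 2 * V ^ 2) * l ^ 2 *
        ((∫ x in Ω, h x ^ 2) + ∫ x in Ω, ‖fderiv ℝ h x‖ ^ 2)) := by
    have hpt : ∀ x ∈ Ω, ENNReal.ofReal ((h x - A x) ^ 2) ≤
        ENNReal.ofReal 2 * ENNReal.ofReal ((h x - S x) ^ 2) +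
          ENNReal.ofReal (2 * (C0 * l * M) ^ 2) := by
      intro x hx
      have h1 := outer_estimate ho hb hc hR0 hR hh hr hrR hx0 hl hl2 hc0 N hx
      have h2 : |A x - S x| ≤ C0 * l * M := h1.trans (mul_le_mul_of_nonneg_right hc2 hM0)
      rw [← ENNReal.ofReal_mul (by norm_num), ← ENNReal.ofReal_add (by positivity) (by positivity)]
      refine ENNReal.ofReal_le_ofReal ?_
      have h3 : (A x - S x) ^ 2 ≤ (C0 * l * M) ^ 2 := by
        rw [← sq_abs]
        gcongr
      nlinarith [sq_nonneg ((h x - S x) + (A x - S x))]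
    have hnn : 0 ≤ ∫ x in Ω, ‖fderiv ℝ h x‖ ^ 2 := integral_nonneg fun x => by positivity
    have hnn2 : 0 ≤ ∫ x in Ω, h x ^ 2 := integral_nonneg fun x => by positivity
    calc _ ≤ ∫⁻ x in Ω, (ENNReal.ofReal 2 * ENNReal.ofReal ((h x - S x) ^ 2) +
          ENNReal.ofReal (2 * (C0 * l * M) ^ 2)) := setLIntegral_mono' ho.measurableSet hpt
      _ = ENNReal.ofReal 2 * (∫⁻ x in Ω, ENNReal.ofReal ((h x - S x) ^ 2)) +
          ENNReal.ofReal (2 * (C0 * l * M) ^ 2) * ENNReal.ofReal V := by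
        rw [lintegral_add_right _ measurable_const, lintegral_const_mul' _ _ ENNReal.ofReal_ne_top,
          setLIntegral_const, hVd, measureReal_def, ENNReal.ofReal_toReal hVtop]
      _ ≤ ENNReal.ofReal 2 * (ENNReal.ofReal (l ^ 2 * R ^ 2 * 2 ^ n) *
            ENNReal.ofReal (∫ x in Ω, ‖fderiv ℝ h x‖ ^ 2)) +
          ENNReal.ofReal (2 * (C0 * l * M) ^ 2) * ENNReal.ofReal V := by
        rw [ofReal_integral_eq_lintegral_ofReal hdi
          (Filter.Eventually.of_forall fun x => by positivity)]
        exact add_le_add_left (mul_le_mul_right hin _) _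
      _ = ENNReal.ofReal (2 * (l ^ 2 * R ^ 2 * 2 ^ n * (∫ x in Ω, ‖fderiv ℝ h x‖ ^ 2)) +
          2 * (C0 * l * M) ^ 2 * V) := by
        rw [← ENNReal.ofReal_mul (by positivity), ← ENNReal.ofReal_mul (by positivity),
          ← ENNReal.ofReal_mul (by positivity), ← ENNReal.ofReal_add (by positivity) (by positivity)]
      _ ≤ _ := by
        refine ENNReal.ofReal_le_ofReal ?_
        set X := ∫ x in Ω, h x ^ 2
        set Y := ∫ x in Ω, ‖fderiv ℝ h x‖ ^ 2
        have h4 : 2 * (C0 * l * M) ^ 2 * V ≤ 2 * C0 ^ 2 * V ^ 2 * l ^ 2 * X := by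
          calc _ = 2 * C0 ^ 2 * l ^ 2 * V * M ^ 2 := by ring
            _ ≤ 2 * C0 ^ 2 * l ^ 2 * V * (V * X) := mul_le_mul_of_nonneg_left hM (by positivity)
            _ = _ := by ring
        have h5 : 0 ≤ C0 * l ^ 2 * (X + Y) + 2 * (R ^ 2 * 2 ^ n) * l ^ 2 * X +
          2 * C0 ^ 2 * V ^ 2 * l ^ 2 * Y := by positivity
        linarith
  have hfi : IntegrableOn (fun x => (h x - A x) ^ 2) Ω := by
    refine ⟨hAm, ?_⟩
    rw [hasFiniteIntegral_iff_ofReal (Filter.Eventually.of_forall fun s => by positivity)]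
    exact lt_of_le_of_lt hlin ENNReal.ofReal_lt_top
  refine ⟨hfi, ?_⟩
  have hnn : 0 ≤ ∫ x in Ω, ‖fderiv ℝ h x‖ ^ 2 := integral_nonneg fun x => by positivity
  have hnn2 : 0 ≤ ∫ x in Ω, h x ^ 2 := integral_nonneg fun x => by positivity
  rw [← ofReal_integral_eq_lintegral_ofReal hfi
    (Filter.Eventually.of_forall fun x => by positivity)] at hlin
  exact (ENNReal.ofReal_le_ofReal_iff (by positivity)).1 hlin

end

/-! ### Geometry, and passage to L² -/

section

variable {n : ℕ} {Ω₁ Ω₂ : Set (EuclideanSpace ℝ (Fin n))} {y₀ : EuclideanSpace ℝ (Fin n)} {ρ D : ℝ}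

lemma exists_geo (hn : 2 ≤ n) (ho : IsOpen Ω₁) (hb : Bornology.IsBounded Ω₁) (hne : Ω₁.Nonempty)
    (hb2 : Bornology.IsBounded Ω₂)
    (hd : Disjoint (closure Ω₁) (closure Ω₂)) :
    ∃ (y₀ : EuclideanSpace ℝ (Fin n)) (ρ D : ℝ), Geo Ω₁ Ω₂ y₀ ρ D := by
  obtain ⟨y₀, hy⟩ := hne
  obtain ⟨s, hs, hsub⟩ := Metric.isOpen_iff.1 ho y₀ hy
  have hy2 : y₀ ∈ (closure Ω₂)ᶜ := fun h => hd.le_bot ⟨subset_closure hy, h⟩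
  obtain ⟨q, hq, hqs⟩ := Metric.isOpen_iff.1 isClosed_closure.isOpen_compl y₀ hy2
  obtain ⟨B, hB⟩ := hb2.subset_closedBall y₀
  set ρ := min 1 (min (s / 2) (q / 3)) with hρ
  have h1 : ρ ≤ 1 := min_le_left _ _
  have h2 : ρ ≤ s / 2 := (min_le_right _ _).trans (min_le_left _ _)
  have h3 : ρ ≤ q / 3 := (min_le_right _ _).trans (min_le_right _ _)
  have h0 : 0 < ρ := by positivity
  refine ⟨y₀, ρ, max 1 (B + 2), hn, h0, h1, le_max_left _ _, ho, hb, hd, ?_, ?_, ?_⟩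
  · exact (Metric.ball_subset_ball (by linarith)).trans hsub
  · intro x hx y hy
    have h4 : q ≤ dist x y₀ := by
      by_contra! h
      exact hqs (Metric.mem_ball.2 h) (subset_closure hx)
    have h5 := dist_triangle x y y₀
    rw [Metric.mem_ball] at hy
    rw [← dist_eq_norm]
    linarith
  · intro x hx y hy
    have h4 : dist x y₀ ≤ B := Metric.mem_closedBall.1 (hB hx)
    have h5 := dist_triangle x y₀ y
    rw [Metric.mem_ball, dist_comm] at hy
    rw [← dist_eq_norm]
    refine le_trans ?_ (le_max_right _ _)
    linarith

/-- The shifted kernels of `mollify` are instances of `Rz_far`, because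
`(1 - l) x + l x0 - w = (1 - l) (x - w')` with `w' = x0 + (w - x0) / (1 - l)`. -/
lemma kernel_Rz (G : Geo Ω₁ Ω₂ y₀ ρ D) {R : ℝ} (hR0 : 0 < R)
    {x0 : EuclideanSpace ℝ (Fin n)} (hR : ∀ w ∈ Ω₂, ‖w - x0‖ ≤ R) :
    ∃ C : ℝ, 0 ≤ C ∧ ∀ l : ℝ, 0 < l → l ≤ 1 / 2 → ∀ m : ℕ, 1 ≤ m → ∀ N ≤ m, ∀ w ∈ Ω₂,
      Rz Ω₁ Ω₂ (fun x => (1 - ‖(1 - l) • x + l • x0 - w‖ ^ 2 / R ^ 2) ^ N) (Real.exp (-m))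
        (Real.exp (C * m ^ 8)) := by
  obtain ⟨C, hC, hf⟩ := Rz_far G (1 / R ^ 2) (D' := ‖x0 - y₀‖ + 2 * R) (by positivity)
  refine ⟨C, hC, fun l hl hl2 m hm N hN w hw => ?_⟩
  have hl1 : 0 < 1 - l := by linarith
  have h1 := hf m hm N hN ((1 - l) ^ 2 / R ^ 2) (by positivity) (by
    have : (1 - l) ^ 2 ≤ 1 := pow_le_one₀ hl1.le (by linarith)
    gcongr) (x0 + (1 - l)⁻¹ • (w - x0)) (by
    have e : x0 + (1 - l)⁻¹ • (w - x0) - y₀ = (x0 - y₀) + (1 - l)⁻¹ • (w - x0) := by abel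
    rw [e]
    refine (norm_add_le _ _).trans ?_
    rw [norm_smul, norm_inv, Real.norm_of_nonneg hl1.le]
    have h2 : (1 - l)⁻¹ ≤ 2 := by
      rw [inv_le_comm₀ hl1 (by norm_num)]; linarith
    have := hR w hw
    gcongr)
  have e : (fun x => (1 - ‖(1 - l) • x + l • x0 - w‖ ^ 2 / R ^ 2) ^ N) =
      fun x => (1 - (1 - l) ^ 2 / R ^ 2 * ‖x - (x0 + (1 - l)⁻¹ • (w - x0))‖ ^ 2) ^ N := by
    funext x
    have e2 : (1 - l) • x + l • x0 - w = (1 - l) • (x - (x0 + (1 - l)⁻¹ • (w - x0))) := by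
      rw [smul_sub, smul_add, smul_smul, mul_inv_cancel₀ hl1.ne', one_smul, sub_smul, sub_smul,
        one_smul, one_smul]
      abel
    rw [e2, norm_smul, Real.norm_of_nonneg hl1.le]
    ring
  rw [e]
  exact h1

/-- Uniform error and density bounds imply `L²` bounds on the bounded sets `Ω₂` and `Ω₁`. -/
lemma Rz.exists_l2 (ho : IsOpen Ω₁) (hb : Bornology.IsBounded Ω₁) (ho2 : IsOpen Ω₂)
    (hb2 : Bornology.IsBounded Ω₂) {g h : EuclideanSpace ℝ (Fin n) → ℝ} {δ A : ℝ}
    (hg : Rz Ω₁ Ω₂ g δ A) (hi : IntegrableOn (fun x => (h x - g x) ^ 2) Ω₂) :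
    ∃ f : Fin n → EuclideanSpace ℝ (Fin n) → ℝ, (∀ j, Measurable (f j)) ∧
      (∀ j, IntegrableOn (fun y => f j y ^ 2) Ω₁) ∧
      ∫ x in Ω₂, (h x - ∑ j, truncRiesz n Ω₁ j (f j) x) ^ 2 ≤ 2 * (∫ x in Ω₂, (h x - g x) ^ 2) +
        2 * δ ^ 2 * (volume : Measure (EuclideanSpace ℝ (Fin n))).real Ω₂ ∧
      ∑ j, ∫ y in Ω₁, f j y ^ 2 ≤
        n * (volume : Measure (EuclideanSpace ℝ (Fin n))).real Ω₁ * A ^ 2 := by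
  obtain ⟨f, hfm, hfA, hfx⟩ := hg
  have hfi : ∀ j, IntegrableOn (fun y => f j y ^ 2) Ω₁ := by
    intro j
    refine Measure.integrableOn_of_bounded (M := A ^ 2) hb.measure_lt_top.ne
      ((hfm j).pow_const 2).aestronglyMeasurable (Filter.Eventually.of_forall fun y => ?_)
    rw [norm_pow, Real.norm_eq_abs]
    exact pow_le_pow_left₀ (abs_nonneg _) (hfA j y) 2
  refine ⟨f, hfm, hfi, ?_, ?_⟩
  · have hc : IntegrableOn (fun _ : EuclideanSpace ℝ (Fin n) => 2 * δ ^ 2) Ω₂ :=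
      integrableOn_const hb2.measure_lt_top.ne
    have h1 : IntegrableOn (fun x => 2 * (h x - g x) ^ 2 + 2 * δ ^ 2) Ω₂ := (hi.const_mul 2).add hc
    calc _ ≤ ∫ x in Ω₂, (2 * (h x - g x) ^ 2 + 2 * δ ^ 2) := by
          refine integral_mono_of_nonneg (Filter.Eventually.of_forall fun x => by positivity) h1 ?_
          refine (ae_restrict_iff' ho2.measurableSet).2 (Filter.Eventually.of_forall fun x hx => ?_)
          have h2 := hfx x hx
          set T := ∑ j, truncRiesz n Ω₁ j (f j) x
          have h3 : (g x - T) ^ 2 ≤ δ ^ 2 := by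
            rw [← sq_abs]
            gcongr
          change (h x - T) ^ 2 ≤ 2 * (h x - g x) ^ 2 + 2 * δ ^ 2
          nlinarith [sq_nonneg ((h x - g x) - (g x - T))]
      _ = _ := by
          rw [integral_add (hi.const_mul 2) hc, integral_const_mul, setIntegral_const, smul_eq_mul]
          ring
  · calc _ ≤ ∑ j : Fin n, A ^ 2 * (volume : Measure (EuclideanSpace ℝ (Fin n))).real Ω₁ := by
          refine Finset.sum_le_sum fun j _ => ?_
          calc _ ≤ ∫ y in Ω₁, A ^ 2 := by
                refine setIntegral_mono_on (hfi j) (integrableOn_const hb.measure_lt_top.ne)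
                  ho.measurableSet fun y _ => ?_
                rw [← sq_abs]
                exact pow_le_pow_left₀ (abs_nonneg _) (hfA j y) 2
            _ = _ := by rw [setIntegral_const, smul_eq_mul, mul_comm]
      _ = _ := by
        rw [Finset.sum_const, Finset.card_univ, Fintype.card_fin, nsmul_eq_mul]
        ring

end

/-! ### Choice of parameters -/

section

variable {n : ℕ} {Ω₁ Ω₂ : Set (EuclideanSpace ℝ (Fin n))}

/-- Exponent bookkeeping for the cost: with `N = O(t³)` and kernels of cost `exp (C2 (C4 N) ^ 8)`,
the total cost is `exp (C (1 + t ^ 24))`. -/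
lemma cost_arith {W V X M C1 C2 C3 c t : ℝ} {C4 N : ℕ} (hW : 0 ≤ W) (hM0 : 0 ≤ M)
    (hC1 : 0 ≤ C1) (hC2 : 0 ≤ C2) (hC4 : (1 : ℝ) ≤ C4)
    (hN1 : (1 : ℝ) ≤ N) (hNu : (N : ℝ) ≤ C3 * t ^ 3) (hcp : 0 < c) (hcN : c ≤ Real.exp (C1 * N))
    (h1 : M ≤ √V * √X) :
    √(W * (c * M * Real.exp (C2 * ((C4 * N : ℕ) : ℝ) ^ 8)) ^ 2) ≤
      Real.exp ((2 + √(W * V) + (C1 + C2 * C4 ^ 8) * C3 ^ 8) * (1 + t ^ 24)) * √X := by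
  have hN8 : (N : ℝ) ≤ N ^ 8 := le_self_pow₀ hN1 (by norm_num)
  have h2 : (N : ℝ) ^ 8 ≤ C3 ^ 8 * t ^ 24 := by
    calc (N : ℝ) ^ 8 ≤ (C3 * t ^ 3) ^ 8 := by gcongr
      _ = _ := by ring
  have h3 : C1 * N + C2 * ((C4 * N : ℕ) : ℝ) ^ 8 ≤ (C1 + C2 * C4 ^ 8) * C3 ^ 8 * t ^ 24 := by
    calc _ ≤ C1 * N ^ 8 + C2 * ((C4 * N : ℕ) : ℝ) ^ 8 := by
          linarith [mul_le_mul_of_nonneg_left hN8 hC1]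
      _ = (C1 + C2 * C4 ^ 8) * N ^ 8 := by push_cast; ring
      _ ≤ (C1 + C2 * C4 ^ 8) * (C3 ^ 8 * t ^ 24) := mul_le_mul_of_nonneg_left h2 (by positivity)
      _ = _ := by ring
  generalize ((C4 * N : ℕ) : ℝ) ^ 8 = m8 at *
  generalize hK : (C1 + C2 * (C4 : ℝ) ^ 8) * C3 ^ 8 = K at *
  have hK0 : 0 ≤ K := by rw [← hK]; positivity
  have h4 : √(W * V) ≤ Real.exp √(W * V) := by
    linarith [Real.add_one_le_exp √(W * V)]
  calc _ = √W * (c * M * Real.exp (C2 * m8)) := by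
        rw [Real.sqrt_mul hW, Real.sqrt_sq (by positivity)]
    _ ≤ √W * (Real.exp (C1 * N) * (√V * √X) * Real.exp (C2 * m8)) :=
        mul_le_mul_of_nonneg_left (mul_le_mul_of_nonneg_right
          (mul_le_mul hcN h1 hM0 (Real.exp_pos _).le) (Real.exp_pos _).le) (Real.sqrt_nonneg _)
    _ = √(W * V) * Real.exp (C1 * N + C2 * m8) * √X := by
        rw [Real.sqrt_mul hW V, Real.exp_add]; ring
    _ ≤ Real.exp √(W * V) * Real.exp (K * t ^ 24) * √X :=
        mul_le_mul_of_nonneg_right (mul_le_mul h4 (Real.exp_le_exp.2 h3) (Real.exp_pos _).le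
          (Real.exp_pos _).le) (Real.sqrt_nonneg _)
    _ = Real.exp (√(W * V) + K * t ^ 24) * √X := by rw [Real.exp_add]
    _ ≤ _ := by
        refine mul_le_mul_of_nonneg_right (Real.exp_le_exp.2 ?_) (Real.sqrt_nonneg _)
        have e : 0 ≤ 2 * (1 + t ^ 24) + √(W * V) * t ^ 24 + K := by positivity
        linarith

/-- The theorem with exponent `24`, phrased with `fderiv` in place of `gradient` and with the
quotient `‖h‖_{H¹} / ε` raised to the power. -/
lemma core (hn : 2 ≤ n) (ho : IsOpen Ω₁) (hb : Bornology.IsBounded Ω₁) (hne : Ω₁.Nonempty)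
    (ho2 : IsOpen Ω₂) (hb2 : Bornology.IsBounded Ω₂) (hne2 : Ω₂.Nonempty) (hc2 : Convex ℝ Ω₂)
    (hd : Disjoint (closure Ω₁) (closure Ω₂)) :
    ∃ C : ℝ, 1 < C ∧ ∀ ε : ℝ, 0 < ε → ∀ h : EuclideanSpace ℝ (Fin n) → ℝ, Differentiable ℝ h →
      IntegrableOn (fun x => h x ^ 2) Ω₂ → IntegrableOn (fun x => ‖fderiv ℝ h x‖ ^ 2) Ω₂ →
      ∃ f : Fin n → EuclideanSpace ℝ (Fin n) → ℝ, (∀ j, Measurable (f j)) ∧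
        (∀ j, IntegrableOn (fun y => f j y ^ 2) Ω₁) ∧
        √(∫ x in Ω₂, (h x - ∑ j, truncRiesz n Ω₁ j (f j) x) ^ 2) ≤ ε ∧
        √(∑ j, ∫ y in Ω₁, f j y ^ 2) ≤ Real.exp (C * (1 +
          (√((∫ x in Ω₂, h x ^ 2) + ∫ x in Ω₂, ‖fderiv ℝ h x‖ ^ 2) / ε) ^ 24)) *
            √(∫ x in Ω₂, h x ^ 2) := by
  obtain ⟨y₀, ρ, D, G⟩ := exists_geo hn ho hb hne hb2 hd
  have hx0 : ∃ x0, x0 ∈ Ω₂ := hne2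
  obtain ⟨x0, hx0⟩ := hx0
  obtain ⟨r, hr, hrs⟩ := Metric.isOpen_iff.1 ho2 x0 hx0
  set R := max r (Metric.diam Ω₂) with hRd
  have hrR : r ≤ R := le_max_left _ _
  have hR0 : 0 < R := by linarith
  have hR : ∀ x ∈ Ω₂, ∀ w ∈ Ω₂, ‖x - w‖ ≤ R := fun x hx w hw => by
    rw [← dist_eq_norm]
    exact (Metric.dist_le_diam_of_mem hb2 hx hw).trans (le_max_right _ _)
  obtain ⟨C1, hC1, hmol⟩ := mollify ho2 hb2 hne2 hc2 hR hr hrR hrs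
  obtain ⟨C2, hC2, hker⟩ := kernel_Rz G hR0 fun w hw => hR w hw x0 hx0
  set V := (volume : Measure (EuclideanSpace ℝ (Fin n))).real Ω₂ with hV
  set V1 := (volume : Measure (EuclideanSpace ℝ (Fin n))).real Ω₁ with hV1
  have hV0 : 0 ≤ V := measureReal_nonneg
  have hV10 : 0 ≤ V1 := measureReal_nonneg
  set c0 := 1 / (2 * (1 + C1)) with hc0
  have hc0p : 0 < c0 := by positivity
  have hc0h : c0 ≤ 1 / 2 := by
    rw [hc0, one_div_le_one_div (by positivity) (by norm_num)]; linarith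
  have hc0C : C1 * c0 ^ 2 ≤ 1 / 4 := by
    rw [hc0, div_pow, mul_div_assoc', div_le_div_iff₀ (by positivity) (by norm_num)]
    nlinarith
  set C3 := 2 / c0 ^ 3 with hC3
  have hC30 : 0 < C3 := by positivity
  set C4 := ⌈C1 + 1 + 4 * V⌉₊ with hC4
  have hC4l : C1 + 1 + 4 * V ≤ C4 := Nat.le_ceil _
  have hC41 : (1 : ℝ) ≤ C4 := by linarith
  refine ⟨2 + √(n * V1 * V) + (C1 + C2 * C4 ^ 8) * C3 ^ 8, ?_, fun ε hε h hdf hi hdi => ?_⟩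
  · have : 0 ≤ √(n * V1 * V) + (C1 + C2 * C4 ^ 8) * C3 ^ 8 := by positivity
    linarith
  set X := ∫ x in Ω₂, h x ^ 2 with hX
  set Y := ∫ x in Ω₂, ‖fderiv ℝ h x‖ ^ 2 with hY
  have hX0 : 0 ≤ X := integral_nonneg fun x => by positivity
  have hY0 : 0 ≤ Y := integral_nonneg fun x => by positivity
  -- For ‖h‖_{L²} ≤ ε zero densities suffice; otherwise t = ‖h‖_{H¹} / ε is at least 1.
  by_cases hle : √X ≤ ε
  · refine ⟨0, fun j => measurable_const, fun j => by simp, ?_, ?_⟩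
    · simpa [truncRiesz] using hle
    · simp only [Pi.zero_apply]
      simp
      positivity
  rw [not_le] at hle
  set t := √(X + Y) / ε with ht
  have hH : ε < √(X + Y) := hle.trans_le (Real.sqrt_le_sqrt (by linarith))
  have ht1 : 1 ≤ t := by rw [ht, le_div_iff₀ hε]; linarith
  have ht0 : 0 < t := by linarith
  have hXY : X + Y = (t * ε) ^ 2 := by
    rw [ht, div_mul_cancel₀ _ hε.ne', Real.sq_sqrt (by positivity)]
  -- The mollification error C1 l² ‖h‖²_{H¹} equals C1 c0² ε², at most ε² / 4.
  set l := c0 / t with hl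
  have hl0 : 0 < l := by positivity
  have hl2 : l ≤ 1 / 2 := (div_le_self hc0p.le ht1).trans hc0h
  have hl3 : 1 / l ^ 3 = t ^ 3 / c0 ^ 3 := by rw [hl, div_pow, one_div_div]
  set N := ⌈1 / l ^ 3⌉₊ with hN
  have hNl : 1 / l ^ 3 ≤ N := Nat.le_ceil _
  have ht3 : t ≤ 1 / l ^ 3 := by
    rw [hl3, le_div_iff₀ (by positivity)]
    have h1 : c0 ^ 3 ≤ 1 := pow_le_one₀ hc0p.le (by linarith)
    have h2 : t ≤ t ^ 3 := le_self_pow₀ ht1 (by norm_num)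
    nlinarith
  have htN : t ≤ N := ht3.trans hNl
  have hNu : (N : ℝ) ≤ C3 * t ^ 3 := by
    have h1 : (N : ℝ) < 1 / l ^ 3 + 1 := Nat.ceil_lt_add_one (by positivity)
    have h2 : C3 * t ^ 3 = 1 / l ^ 3 + 1 / l ^ 3 := by rw [hl3, hC3]; ring
    linarith
  have hN1 : (1 : ℝ) ≤ N := ht1.trans htN
  obtain ⟨c, hcp, hcN, hmol2⟩ := hmol l hl0 hl2 N hNl
  obtain ⟨hmi, hmb⟩ := hmol2 h hdf hi hdi
  obtain ⟨hh, hM⟩ := l1_le_l2 ho2 hb2 hne2 hdf.continuous hi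
  rw [← hV, ← hX] at hM
  set m := C4 * N with hm
  have hmR : (m : ℝ) = C4 * N := by rw [hm]; push_cast; ring
  have hm1 : 1 ≤ m := by
    have : (1 : ℝ) ≤ m := by rw [hmR]; exact one_le_mul_of_one_le_of_one_le hC41 hN1
    exact_mod_cast this
  have hNm : N ≤ m := by
    have : (N : ℝ) ≤ m := by rw [hmR]; exact le_mul_of_one_le_left (by linarith) hC41
    exact_mod_cast this
  have hch : IntegrableOn (fun w => c * h w) Ω₂ := hh.const_mul c
  have hGc : Continuous (Function.uncurry fun x w : EuclideanSpace ℝ (Fin n) =>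
      (1 - ‖(1 - l) • x + l • x0 - w‖ ^ 2 / R ^ 2) ^ N) := by
    change Continuous fun p : EuclideanSpace ℝ (Fin n) × EuclideanSpace ℝ (Fin n) =>
      (1 - ‖(1 - l) • p.1 + l • x0 - p.2‖ ^ 2 / R ^ 2) ^ N
    fun_prop
  have hRz := Rz_integral G ho2 hb2 hne2 hGc hch (Real.exp_pos (-m)) (Real.exp_pos (C2 * m ^ 8)).le
    (hker l hl0 hl2 m hm1 N hNm)
  set M := ∫ x in Ω₂, |h x| with hMd
  have hM0 : 0 ≤ M := integral_nonneg fun x => abs_nonneg _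
  have hcM : ∫ x in Ω₂, |c * h x| = c * M := by
    simp_rw [abs_mul, abs_of_pos hcp]
    rw [integral_const_mul]
  rw [hcM] at hRz
  obtain ⟨f, hfm, hfi, hferr, hfcost⟩ := hRz.exists_l2 ho hb ho2 hb2 hmi
  rw [← hV] at hferr
  rw [← hV1] at hfcost
  refine ⟨f, hfm, hfi, ?_, ?_⟩
  · rw [Real.sqrt_le_left hε.le]
    refine hferr.trans ?_
    have h1 : C1 * l ^ 2 * (X + Y) ≤ ε ^ 2 / 4 := by
      calc _ = C1 * c0 ^ 2 * ε ^ 2 := by rw [hXY, hl]; field_simp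
        _ ≤ 1 / 4 * ε ^ 2 := mul_le_mul_of_nonneg_right hc0C (by positivity)
        _ = _ := by ring
    have h2 : 2 * c * V * t * Real.exp (-m) ≤ 1 / 2 := by
      have h3 : t ≤ Real.exp N := by linarith [Real.add_one_le_exp (N : ℝ)]
      have h4 : 4 * V ≤ Real.exp (4 * V * N) := by
        have := Real.add_one_le_exp (4 * V * N)
        have := le_mul_of_one_le_right (by positivity : 0 ≤ 4 * V) hN1
        linarith
      calc _ = 1 / 2 * (c * t * (4 * V) * Real.exp (-m)) := by ring
        _ ≤ 1 / 2 * (Real.exp (C1 * N) * Real.exp N * Real.exp (4 * V * N) * Real.exp (-m)) := by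
          gcongr
        _ = 1 / 2 * Real.exp ((C1 + 1 + 4 * V - C4) * N) := by
          rw [← Real.exp_add, ← Real.exp_add, ← Real.exp_add, hmR]; ring_nf
        _ ≤ 1 / 2 * 1 := by
          refine mul_le_mul_of_nonneg_left (Real.exp_le_one_iff.2 ?_) (by norm_num)
          exact mul_nonpos_of_nonpos_of_nonneg (by linarith) (by linarith)
        _ = _ := by norm_num
    have h5 : 2 * (c * M * (2 * Real.exp (-m))) ^ 2 * V ≤ ε ^ 2 / 2 := by
      calc _ = 2 * (2 * c * Real.exp (-m)) ^ 2 * V * M ^ 2 := by ring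
        _ ≤ 2 * (2 * c * Real.exp (-m)) ^ 2 * V * (V * (t * ε) ^ 2) := by
          refine mul_le_mul_of_nonneg_left (hM.trans ?_) (by positivity)
          exact mul_le_mul_of_nonneg_left (by linarith) hV0
        _ = 2 * ε ^ 2 * (2 * c * V * t * Real.exp (-m)) ^ 2 := by ring
        _ ≤ 2 * ε ^ 2 * (1 / 2) ^ 2 := by gcongr
        _ = _ := by ring
    linarith
  · have h1 : M ≤ √V * √X := by
      rw [← Real.sqrt_mul hV0]
      exact Real.le_sqrt_of_sq_le hM
    have hnV : 0 ≤ n * V1 := by positivity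
    exact (Real.sqrt_le_sqrt hfcost).trans (cost_arith hnV hM0 hC1.le hC2 hC41 hN1 hNu hcp hcN h1)

end

theorem stmt_18 (n : ℕ) (hn : 2 ≤ n) (Ω₁ Ω₂ : Set (EuclideanSpace ℝ (Fin n)))
    (hΩ₁o : IsOpen Ω₁) (hΩ₁b : Bornology.IsBounded Ω₁) (hΩ₁ne : Ω₁.Nonempty)
    (hΩ₂o : IsOpen Ω₂) (hΩ₂b : Bornology.IsBounded Ω₂) (hΩ₂ne : Ω₂.Nonempty)
    (hΩ₂conv : Convex ℝ Ω₂)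
    (hdisj : Disjoint (closure Ω₁) (closure Ω₂)) :
    ∃ σ C : ℝ, 0 < σ ∧ 1 < C ∧
      ∀ ε : ℝ, 0 < ε →
      ∀ h : EuclideanSpace ℝ (Fin n) → ℝ, Differentiable ℝ h →
        IntegrableOn (fun x => (h x) ^ 2) Ω₂ volume →
        IntegrableOn (fun x => ‖gradient h x‖ ^ 2) Ω₂ volume →
        ∃ f : Fin n → EuclideanSpace ℝ (Fin n) → ℝ,
          (∀ j, Measurable (f j)) ∧
          (∀ j, IntegrableOn (fun y => (f j y) ^ 2) Ω₁ volume) ∧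
          Real.sqrt (∫ x in Ω₂, (h x - ∑ j : Fin n, truncRiesz n Ω₁ j (f j) x) ^ 2) ≤ ε ∧
          Real.sqrt (∑ j : Fin n, ∫ y in Ω₁, (f j y) ^ 2) ≤
            Real.exp (C * (1 +
                (Real.sqrt (∫ x in Ω₂, ((h x) ^ 2 + ‖gradient h x‖ ^ 2))) ^ σ / ε ^ σ)) *
              Real.sqrt (∫ x in Ω₂, (h x) ^ 2) := by
  obtain ⟨C, hC, H⟩ := core hn hΩ₁o hΩ₁b hΩ₁ne hΩ₂o hΩ₂b hΩ₂ne hΩ₂conv hdisj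
  -- 24 = 3 · 8: the degree is N ≈ t³ and the kernels of degree N cost exp (C N ^ 8).
  refine ⟨(24 : ℕ), C, by norm_num, hC, fun ε hε h hd hi hg => ?_⟩
  have e : ∀ x, ‖gradient h x‖ = ‖fderiv ℝ h x‖ := fun x => by
    rw [gradient, LinearIsometryEquiv.norm_map]
  simp_rw [e] at hg ⊢
  obtain ⟨f, hf1, hf2, hf3, hf4⟩ := H ε hε h hd hi hg
  refine ⟨f, hf1, hf2, hf3, ?_⟩
  rw [integral_add hi hg, Real.rpow_natCast, Real.rpow_natCast, ← div_pow]
  exact hf4
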